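/- For every N ≥ 1 and every n ∈ ℕ, the following are equivalent: (1) there exists an ℝ-linear map f : ℝⁿ → M(N,ℍ) such that every f(v) is quaternionic Hermitian (f(v)ᴴ = f(v)) and f(v)² = ‖v‖² I_N for all v ∈ ℝⁿ; (2) there exists an ℝ-linear map f : ℝⁿ → M(N,ℍ) with every f(v) quaternionic Hermitian and f(v) invertible for every nonzero v; (3) n ≤ ρ(N/4) + 5. (Entry 𝔤 = 𝔤𝔩(N,ℍ) of the Hurwitz–Radon value theorem; it recovers the Adams–Lax–Phillips number ℍ_h(N).) -/

import Mathlib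

open Matrix

/-- Extended Hurwitz–Radon number: writing the 2-adic valuation of `t` as `4a + b`
with `a ∈ ℤ` and `b ∈ {0,1,2,3}`, `ρ(t) := 8a + 2^b`. -/
noncomputable def hrRho (t : ℚ) : ℤ :=
  8 * (padicValRat 2 t / 4) + 2 ^ (padicValRat 2 t % 4).toNat

namespace HR
open Module LinearMap

section IndexAlg
variable {V W X V' W' : Type*} [AddCommGroup V] [Module ℝ V] [AddCommGroup W] [Module ℝ W]
  [AddCommGroup X] [Module ℝ X] [AddCommGroup V'] [Module ℝ V'] [AddCommGroup W'] [Module ℝ W']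

/-- algebraic Fredholm maps -/
structure Fr (T : V →ₗ[ℝ] W) : Prop where
  k : FiniteDimensional ℝ (ker T)
  c : FiniteDimensional ℝ (W ⧸ range T)

noncomputable def ind (T : V →ₗ[ℝ] W) : ℤ :=
  (finrank ℝ (ker T) : ℤ) - finrank ℝ (W ⧸ range T)

/-- kernel of a composition -/
lemma finrank_ker_comp (T : V →ₗ[ℝ] W) (S : W →ₗ[ℝ] X) (hT : FiniteDimensional ℝ (ker T))
    (hS : FiniteDimensional ℝ (ker S)) :
    FiniteDimensional ℝ (ker (S ∘ₗ T)) ∧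
    finrank ℝ (ker (S ∘ₗ T)) = finrank ℝ (ker T) + finrank ℝ (range T ⊓ ker S : Submodule ℝ W) := by
  let g : ker (S ∘ₗ T) →ₗ[ℝ] W := T ∘ₗ (ker (S ∘ₗ T)).subtype
  have hr : range g = range T ⊓ ker S := by
    ext w
    constructor
    · rintro ⟨v, rfl⟩
      exact ⟨⟨v, rfl⟩, v.2⟩
    · rintro ⟨⟨v, rfl⟩, hv⟩
      exact ⟨⟨v, hv⟩, rfl⟩
  have hk : Nonempty (ker g ≃ₗ[ℝ] ker T) := by
    refine ⟨LinearEquiv.ofLinearMap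
      ((((ker (S ∘ₗ T)).subtype ∘ₗ (ker g).subtype)).codRestrict (ker T) (fun v => v.2))
      (((ker T).subtype.codRestrict (ker (S ∘ₗ T)) (fun v => by simp)).codRestrict (ker g)
        (fun v => by
          have : T v = 0 := v.2
          exact this)) ?_ ?_⟩
    · ext v; rfl
    · ext v; rfl
  obtain ⟨e⟩ := hk
  have hkf : FiniteDimensional ℝ (ker g) := e.symm.finiteDimensional
  have hrf : FiniteDimensional ℝ (range g) := by
    rw [hr]; exact Submodule.finiteDimensional_of_le inf_le_right
  have hfd : FiniteDimensional ℝ (ker (S ∘ₗ T)) := by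
    have hQ : Module.Finite ℝ (ker (S ∘ₗ T) ⧸ ker g) := g.quotKerEquivRange.symm.finiteDimensional
    exact Module.Finite.of_submodule_quotient (ker g)
  refine ⟨hfd, ?_⟩
  have := g.finrank_range_add_finrank_ker
  rw [hr, e.finrank_eq] at this
  omega

lemma finrank_coker_comp (T : V →ₗ[ℝ] W) (S : W →ₗ[ℝ] X) (hT : FiniteDimensional ℝ (W ⧸ range T))
    (hS : FiniteDimensional ℝ (X ⧸ range S)) :
    FiniteDimensional ℝ (X ⧸ range (S ∘ₗ T)) ∧
    finrank ℝ (X ⧸ range (S ∘ₗ T)) = finrank ℝ (X ⧸ range S) +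
      finrank ℝ (W ⧸ (range T ⊔ ker S : Submodule ℝ W)) := by
  have hle : range (S ∘ₗ T) ≤ range S := range_comp_le_range T S
  let q : (X ⧸ range (S ∘ₗ T)) →ₗ[ℝ] X ⧸ range S := Submodule.factor hle
  have hqs : Function.Surjective q := Submodule.factor_surjective hle
  let h : W →ₗ[ℝ] (X ⧸ range (S ∘ₗ T)) := (range (S ∘ₗ T)).mkQ ∘ₗ S
  have hkh : ker h = range T ⊔ ker S := by
    ext w
    simp only [h, LinearMap.mem_ker, LinearMap.comp_apply, Submodule.mkQ_apply,
      Submodule.Quotient.mk_eq_zero]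
    constructor
    · rintro ⟨v, hv⟩
      have : w = T v + (w - T v) := by abel
      rw [this]
      refine Submodule.add_mem_sup ⟨v, rfl⟩ ?_
      rw [LinearMap.mem_ker, map_sub, ← hv]; simp
    · intro hw
      obtain ⟨a, ⟨v, rfl⟩, b, hb, rfl⟩ := Submodule.mem_sup.1 hw
      refine ⟨v, ?_⟩
      rw [LinearMap.mem_ker] at hb
      simp [hb]
  have hrh : range h = ker q := by
    ext y
    constructor
    · rintro ⟨w, rfl⟩
      simp [h, q, Submodule.factor]
    · intro hy
      obtain ⟨x, rfl⟩ := Submodule.Quotient.mk_surjective _ y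
      have : x ∈ range S := by
        simpa [q, Submodule.factor] using hy
      obtain ⟨w, rfl⟩ := this
      exact ⟨w, rfl⟩
  have e := h.quotKerEquivRange
  have hQ : FiniteDimensional ℝ (W ⧸ ker h) := by
    rw [hkh]
    exact Module.Finite.of_surjective (Submodule.factor (le_sup_left : range T ≤ range T ⊔ ker S))
      (Submodule.factor_surjective _)
  have hkq : FiniteDimensional ℝ (ker q) := by
    rw [← hrh]; exact e.finiteDimensional
  have hfd : FiniteDimensional ℝ (X ⧸ range (S ∘ₗ T)) := by
    have hQ2 : Module.Finite ℝ ((X ⧸ range (S ∘ₗ T)) ⧸ ker q) :=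
      (q.quotKerEquivOfSurjective hqs).symm.finiteDimensional
    exact Module.Finite.of_submodule_quotient (ker q) 
  refine ⟨hfd, ?_⟩
  have h1 := q.finrank_range_add_finrank_ker
  rw [LinearMap.range_eq_top.2 hqs, finrank_top, ← hrh, ← e.finrank_eq, hkh] at h1
  omega

lemma Fr.comp {T : V →ₗ[ℝ] W} {S : W →ₗ[ℝ] X} (hS : Fr S) (hT : Fr T) : Fr (S ∘ₗ T) :=
  ⟨(finrank_ker_comp T S hT.k hS.k).1, (finrank_coker_comp T S hT.c hS.c).1⟩

lemma ind_comp {T : V →ₗ[ℝ] W} {S : W →ₗ[ℝ] X} (hS : Fr S) (hT : Fr T) :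
    ind (S ∘ₗ T) = ind S + ind T := by
  have h1 := (finrank_ker_comp T S hT.k hS.k).2
  have h2 := (finrank_coker_comp T S hT.c hS.c).2
  have := hT.c
  have := hS.k
  -- apply to the map ker S → W / range T
  let r : ker S →ₗ[ℝ] W ⧸ range T := (range T).mkQ ∘ₗ (ker S).subtype
  have h3 := r.finrank_range_add_finrank_ker
  have hk : finrank ℝ (ker r) = finrank ℝ (range T ⊓ ker S : Submodule ℝ W) := by
    have : ker r = (range T).comap (ker S).subtype := by
      simp [r, LinearMap.ker_comp]
    rw [this]
    have : (range T).comap (ker S).subtype = (range T ⊓ ker S).comap (ker S).subtype := by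
      ext x; simp
    rw [this]
    exact (Submodule.comapSubtypeEquivOfLe inf_le_right).finrank_eq
  have hr : finrank ℝ (range r) + finrank ℝ (W ⧸ (range T ⊔ ker S : Submodule ℝ W)) =
      finrank ℝ (W ⧸ range T) := by
    have hle : range T ≤ range T ⊔ ker S := le_sup_left
    let q : (W ⧸ range T) →ₗ[ℝ] W ⧸ (range T ⊔ ker S : Submodule ℝ W) := Submodule.factor hle
    have hqs : Function.Surjective q := Submodule.factor_surjective hle
    have hq := q.finrank_range_add_finrank_ker
    have : ker q = range r := by
      ext y
      constructor
      · intro hy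
        obtain ⟨x, rfl⟩ := Submodule.Quotient.mk_surjective _ y
        have : x ∈ range T ⊔ ker S := by
          simpa [q, Submodule.factor] using hy
        obtain ⟨a, ha, b, hb, rfl⟩ := Submodule.mem_sup.1 this
        refine ⟨⟨b, hb⟩, ?_⟩
        simp only [r, LinearMap.comp_apply, Submodule.subtype_apply, Submodule.mkQ_apply]
        rw [Submodule.Quotient.mk_add, (Submodule.Quotient.mk_eq_zero _).2 ha, zero_add]
      · rintro ⟨b, rfl⟩
        have : (b : W) ∈ range T ⊔ ker S := Submodule.mem_sup_right b.2
        simpa [q, r, Submodule.factor] using this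
    rw [LinearMap.range_eq_top.2 hqs, finrank_top, this] at hq
    omega
  unfold ind
  rw [h1, h2]
  push_cast
  omega

lemma Fr.of_bij {T : V →ₗ[ℝ] W} (h : Function.Bijective T) : Fr T := by
  constructor
  · rw [LinearMap.ker_eq_bot.2 h.1]; infer_instance
  · rw [LinearMap.range_eq_top.2 h.2]; infer_instance

lemma ind_of_bij {T : V →ₗ[ℝ] W} (h : Function.Bijective T) : ind T = 0 := by
  unfold ind
  rw [LinearMap.ker_eq_bot.2 h.1, LinearMap.range_eq_top.2 h.2]
  have : Subsingleton (W ⧸ (⊤ : Submodule ℝ W)) := inferInstance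
  simp [finrank_zero_of_subsingleton]

lemma ind_equiv (e : V ≃ₗ[ℝ] V') (e' : W ≃ₗ[ℝ] W') {T : V →ₗ[ℝ] W} {T' : V' →ₗ[ℝ] W'}
    (hT : Fr T) (h : ∀ v, e' (T v) = T' (e v)) : Fr T' ∧ ind T' = ind T := by
  have hT' : T' = (e' : W →ₗ[ℝ] W') ∘ₗ (T ∘ₗ (e.symm : V' →ₗ[ℝ] V)) := by
    ext v; simp [h]
  have b1 := e'.bijective
  have b2 := e.symm.bijective
  have f1 : Fr (e' : W →ₗ[ℝ] W') := Fr.of_bij b1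
  have f2 : Fr (e.symm : V' →ₗ[ℝ] V) := Fr.of_bij b2
  rw [hT']
  refine ⟨f1.comp (hT.comp f2), ?_⟩
  rw [ind_comp f1 (hT.comp f2), ind_comp hT f2, ind_of_bij (T := (e' : W →ₗ[ℝ] W')) b1,
    ind_of_bij (T := (e.symm : V' →ₗ[ℝ] V)) b2]
  simp

/-- finite rank perturbation of the identity -/
lemma ind_one_add (R : V →ₗ[ℝ] V) (hR : FiniteDimensional ℝ (range R)) :
    Fr (LinearMap.id + R) ∧ ind (LinearMap.id + R) = 0 := by
  set T : V →ₗ[ℝ] V := LinearMap.id + R with hT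
  have hTv : ∀ v, T v = v + R v := fun v => rfl
  let T1 : range R →ₗ[ℝ] range R := T.restrict (fun v hv => by
    rw [hTv]; exact Submodule.add_mem _ hv ⟨v, rfl⟩)
  have hT1v : ∀ v, (T1 v : V) = v + R v := fun v => rfl
  have hk : Nonempty (ker T ≃ₗ[ℝ] ker T1) := by
    refine ⟨LinearEquiv.ofLinearMap
      (((ker T).subtype.codRestrict (range R) (fun v => by
        have h := v.2
        rw [LinearMap.mem_ker, hTv] at h
        exact ⟨-v, by simpa [neg_eq_iff_add_eq_zero, add_comm] using h⟩)).codRestrict (ker T1) (fun v => by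
          rw [LinearMap.mem_ker]; apply Subtype.ext; rw [hT1v]; exact v.2))
      (((range R).subtype ∘ₗ (ker T1).subtype).codRestrict (ker T) (fun v => by
        have h : T1 v = 0 := v.2
        have := congrArg Subtype.val h
        rw [hT1v] at this
        rw [LinearMap.mem_ker, hTv]; exact this)) ?_ ?_⟩
    · ext v; rfl
    · ext v; rfl
  obtain ⟨ek⟩ := hk
  let m : range R →ₗ[ℝ] V ⧸ range T := (range T).mkQ ∘ₗ (range R).subtype
  have hms : Function.Surjective m := by
    intro y
    obtain ⟨x, rfl⟩ := Submodule.Quotient.mk_surjective _ y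
    refine ⟨⟨-R x, ⟨-x, by simp⟩⟩, ?_⟩
    simp only [m, LinearMap.comp_apply, Submodule.subtype_apply, Submodule.mkQ_apply]
    rw [Submodule.Quotient.eq]
    exact ⟨-x, by rw [hTv]; simp; abel⟩
  have hmk : ker m = range T1 := by
    ext y
    simp only [m, LinearMap.mem_ker, LinearMap.comp_apply, Submodule.subtype_apply,
      Submodule.mkQ_apply, Submodule.Quotient.mk_eq_zero]
    constructor
    · rintro ⟨x, hx⟩
      have : x ∈ range R := by
        rw [hTv] at hx
        have : x = y - R x := by rw [← hx]; abel
        rw [this]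
        exact Submodule.sub_mem _ y.2 ⟨x, rfl⟩
      exact ⟨⟨x, this⟩, Subtype.ext hx⟩
    · rintro ⟨x, rfl⟩
      exact ⟨x, rfl⟩
  have ec := (Submodule.quotEquivOfEq _ _ hmk).symm.trans (m.quotKerEquivOfSurjective hms)
  refine ⟨⟨ek.symm.finiteDimensional, ec.finiteDimensional⟩, ?_⟩
  unfold ind
  rw [ek.finrank_eq, ← ec.finrank_eq]
  have h1 := T1.finrank_range_add_finrank_ker
  have h2 := (range T1).finrank_quotient_add_finrank
  omega

lemma Fr.of_comp {T : V →ₗ[ℝ] W} {S : W →ₗ[ℝ] X} {S' : V' →ₗ[ℝ] V} (h1 : Fr (S ∘ₗ T))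
    (h2 : Fr (T ∘ₗ S')) : Fr T := by
  constructor
  · have := h1.k
    exact Submodule.finiteDimensional_of_le (LinearMap.ker_le_ker_comp T S)
  · have := h2.c
    exact Module.Finite.of_surjective (Submodule.factor (range_comp_le_range S' T))
      (Submodule.factor_surjective _)

/-- finitely many copies -/
lemma ind_pi (κ : Type*) [Fintype κ] [DecidableEq κ] {T : V →ₗ[ℝ] W} (hT : Fr T) :
    ind (LinearMap.pi (fun i : κ => T ∘ₗ LinearMap.proj i) : (κ → V) →ₗ[ℝ] (κ → W)) =
      Fintype.card κ * ind T := by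
  set P : (κ → V) →ₗ[ℝ] (κ → W) := LinearMap.pi (fun i : κ => T ∘ₗ LinearMap.proj i) with hP
  have hPv : ∀ v i, P v i = T (v i) := fun v i => rfl
  have ek : Nonempty (ker P ≃ₗ[ℝ] (κ → ker T)) := by
    refine ⟨LinearEquiv.ofLinearMap
      (LinearMap.pi (fun i => ((LinearMap.proj i ∘ₗ (ker P).subtype).codRestrict (ker T)
        (fun v => by
          have h : P v = 0 := v.2
          have := congrFun h i
          exact this))))
      ((LinearMap.pi (fun i => (ker T).subtype ∘ₗ LinearMap.proj i)).codRestrict (ker P)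
        (fun v => by
          rw [LinearMap.mem_ker]; ext i; rw [hPv]; exact (v i).2)) ?_ ?_⟩
    · ext i v; rfl
    · ext i v; rfl
  obtain ⟨ek⟩ := ek
  have hr : range P = Submodule.pi Set.univ (fun _ : κ => range T) := by
    ext w
    simp only [Submodule.mem_pi, Set.mem_univ, true_imp_iff]
    constructor
    · rintro ⟨v, rfl⟩ i; exact ⟨v i, rfl⟩
    · intro h
      choose v hv using h
      exact ⟨v, funext hv⟩
  have ec : (((κ → W) ⧸ range P)) ≃ₗ[ℝ] (κ → (W ⧸ range T)) :=
    (Submodule.quotEquivOfEq _ _ hr).trans (Submodule.quotientPi (fun _ : κ => range T))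
  have := hT.k
  have := hT.c
  unfold ind
  rw [ek.finrank_eq, ec.finrank_eq, finrank_pi_fintype, finrank_pi_fintype]
  simp
  ring

/-- quaternionic structure gives divisibility by four -/
lemma four_dvd_finrank (I J : V →ₗ[ℝ] V) (hI : I ∘ₗ I = -LinearMap.id)
    (hJ : J ∘ₗ J = -LinearMap.id) (hIJ : I ∘ₗ J = -(J ∘ₗ I)) : 4 ∣ finrank ℝ V := by
  let b : QuaternionAlgebra.Basis (Module.End ℝ V) (-1 : ℝ) 0 (-1) :=
    { i := I, j := J, k := I * J
      i_mul_i := by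
        show I ∘ₗ I = _
        rw [hI]; simp; rfl
      j_mul_j := by
        show J ∘ₗ J = _
        rw [hJ]; simp; rfl
      i_mul_j := rfl
      j_mul_i := by
        show J ∘ₗ I = _
        have : (I * J : Module.End ℝ V) = I ∘ₗ J := rfl
        rw [this, hIJ]; simp }
  let φ : Quaternion ℝ →ₐ[ℝ] Module.End ℝ V := QuaternionAlgebra.lift b
  let _ : Module (Quaternion ℝ) V := Module.compHom V φ.toRingHom
  have : IsScalarTower ℝ (Quaternion ℝ) V := ⟨fun r q v => by
    show φ (r • q) v = r • (φ q v)
    simp⟩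
  have h := Module.finrank_mul_finrank ℝ (Quaternion ℝ) V
  rw [Quaternion.finrank_eq_four] at h
  exact ⟨_, h.symm⟩

lemma four_dvd_ind (T : V →ₗ[ℝ] W) (I J : V →ₗ[ℝ] V) (hI : I ∘ₗ I = -LinearMap.id)
    (hJ : J ∘ₗ J = -LinearMap.id) (hIJ : I ∘ₗ J = -(J ∘ₗ I))
    (I' J' : W →ₗ[ℝ] W) (hI' : I' ∘ₗ I' = -LinearMap.id)
    (hJ' : J' ∘ₗ J' = -LinearMap.id) (hIJ' : I' ∘ₗ J' = -(J' ∘ₗ I'))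
    (h1 : T ∘ₗ I = I' ∘ₗ T) (h2 : T ∘ₗ J = J' ∘ₗ T) : 4 ∣ ind T := by
  have a : 4 ∣ finrank ℝ (ker T) := by
    have m : ∀ (K : V →ₗ[ℝ] V) (K' : W →ₗ[ℝ] W), T ∘ₗ K = K' ∘ₗ T → ∀ v ∈ ker T, K v ∈ ker T := by
      intro K K' h v hv
      rw [LinearMap.mem_ker] at *
      have := LinearMap.congr_fun h v
      simp only [LinearMap.comp_apply] at this
      rw [this, hv, map_zero]
    apply four_dvd_finrank (I.restrict (m I I' h1)) (J.restrict (m J J' h2))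
    · ext v; exact LinearMap.congr_fun hI v
    · ext v; exact LinearMap.congr_fun hJ v
    · ext v; exact LinearMap.congr_fun hIJ v
  have b : 4 ∣ finrank ℝ (W ⧸ range T) := by
    have m : ∀ (K : V →ₗ[ℝ] V) (K' : W →ₗ[ℝ] W), T ∘ₗ K = K' ∘ₗ T →
        range T ≤ (range T).comap K' := by
      rintro K K' h _ ⟨v, rfl⟩
      exact ⟨K v, LinearMap.congr_fun h v⟩
    apply four_dvd_finrank ((range T).mapQ (range T) I' (m I I' h1))
      ((range T).mapQ (range T) J' (m J J' h2))
    · ext v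
      have := LinearMap.congr_fun hI' v
      simp only [LinearMap.comp_apply] at this
      simp [this]
    · ext v
      have := LinearMap.congr_fun hJ' v
      simp only [LinearMap.comp_apply] at this
      simp [this]
    · ext v
      have := LinearMap.congr_fun hIJ' v
      simp only [LinearMap.comp_apply] at this
      simp [this]
  unfold ind
  omega

end IndexAlg
end HR

set_option linter.unusedSectionVars false
namespace HR
open Module LinearMap

section Calkin
variable {V : Type*} [NormedAddCommGroup V] [InnerProductSpace ℝ V] [CompleteSpace V]

def FinRk (R : V →L[ℝ] V) : Prop := FiniteDimensional ℝ (range (R : V →ₗ[ℝ] V))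

lemma FinRk.add {R S : V →L[ℝ] V} (hR : FinRk R) (hS : FinRk S) : FinRk (R + S) := by
  unfold FinRk at *
  refine Submodule.finiteDimensional_of_le (S₂ := range (R : V →ₗ[ℝ] V) ⊔ range (S : V →ₗ[ℝ] V)) ?_
  rintro _ ⟨v, rfl⟩
  exact Submodule.add_mem_sup ⟨v, rfl⟩ ⟨v, rfl⟩

lemma FinRk.mul_left {R : V →L[ℝ] V} (T : V →L[ℝ] V) (hR : FinRk R) : FinRk (T * R) := by
  unfold FinRk at *
  refine Submodule.finiteDimensional_of_le
    (S₂ := (range (R : V →ₗ[ℝ] V)).map (T : V →ₗ[ℝ] V)) ?_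
  rintro _ ⟨v, rfl⟩
  exact ⟨R v, ⟨v, rfl⟩, rfl⟩

lemma FinRk.mul_right {R : V →L[ℝ] V} (T : V →L[ℝ] V) (hR : FinRk R) : FinRk (R * T) := by
  unfold FinRk at *
  refine Submodule.finiteDimensional_of_le (S₂ := (range (R : V →ₗ[ℝ] V))) ?_
  rintro _ ⟨v, rfl⟩
  exact ⟨T v, rfl⟩

lemma FinRk.adj {R : V →L[ℝ] V} (hR : FinRk R) : FinRk (ContinuousLinearMap.adjoint R) := by
  unfold FinRk at *
  set U := range (R : V →ₗ[ℝ] V)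
  have h : ContinuousLinearMap.adjoint R =
      ContinuousLinearMap.adjoint R * U.starProjection := by
    have : R = U.starProjection * R := by
      ext v
      have : R v ∈ U := ⟨v, rfl⟩
      exact (Submodule.starProjection_eq_self_iff.2 this).symm
    conv_lhs => rw [this]
    have h2 := ContinuousLinearMap.adjoint_comp U.starProjection R
    have h3 : ContinuousLinearMap.adjoint U.starProjection = U.starProjection := by
      have := isSelfAdjoint_starProjection U
      exact this
    rw [h3] at h2
    exact h2
  have h2 : FinRk (U.starProjection : V →L[ℝ] V) := by
    unfold FinRk
    refine Submodule.finiteDimensional_of_le (S₂ := U) ?_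
    rintro _ ⟨v, rfl⟩
    exact Submodule.starProjection_apply_mem U v
  have h3 := h2.mul_left (ContinuousLinearMap.adjoint R)
  rw [← h] at h3
  exact h3

variable (V) in
def Kid : Ideal (V →L[ℝ] V) where
  carrier := {K | ∀ ε > 0, ∃ R, FinRk R ∧ ‖K - R‖ < ε}
  zero_mem' := fun ε hε => ⟨0, by
    unfold FinRk
    rw [show ((0 : V →L[ℝ] V) : V →ₗ[ℝ] V) = 0 from rfl, LinearMap.range_zero]
    infer_instance, by simpa using hε⟩
  add_mem' := by
    intro a b ha hb ε hε
    obtain ⟨R, hR, h1⟩ := ha (ε / 2) (by linarith)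
    obtain ⟨S, hS, h2⟩ := hb (ε / 2) (by linarith)
    refine ⟨R + S, hR.add hS, ?_⟩
    have : a + b - (R + S) = (a - R) + (b - S) := by abel
    rw [this]
    have := norm_add_le (a - R) (b - S)
    linarith
  smul_mem' := by
    intro T K hK ε hε
    obtain ⟨R, hR, h1⟩ := hK (ε / (‖T‖ + 1)) (by positivity)
    refine ⟨T * R, hR.mul_left T, ?_⟩
    have : T • K - T * R = T * (K - R) := by rw [smul_eq_mul, mul_sub]
    rw [this]
    have h3 := norm_mul_le T (K - R)
    rw [lt_div_iff₀ (by positivity)] at h1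
    nlinarith [norm_nonneg (K - R), norm_nonneg T]

instance : (Kid V).IsTwoSided := ⟨by
    intro K T hK ε hε
    obtain ⟨R, hR, h1⟩ := hK (ε / (‖T‖ + 1)) (by positivity)
    refine ⟨R * T, hR.mul_right T, ?_⟩
    have : K * T - R * T = (K - R) * T := by rw [sub_mul]
    rw [this]
    have h3 := norm_mul_le (K - R) T
    rw [lt_div_iff₀ (by positivity)] at h1
    nlinarith [norm_nonneg (K - R), norm_nonneg T]⟩

lemma Kid.adj {K : V →L[ℝ] V} (hK : K ∈ Kid V) : ContinuousLinearMap.adjoint K ∈ Kid V := by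
  intro ε hε
  obtain ⟨R, hR, h1⟩ := hK ε hε
  refine ⟨ContinuousLinearMap.adjoint R, hR.adj, ?_⟩
  rw [← map_sub, LinearIsometryEquiv.norm_map]
  exact h1

/-- compressions of `1 + K` have index zero -/
lemma compress_one_add {X : Type*} [AddCommGroup X] [Module ℝ X] (i : X →ₗ[ℝ] V) (p : V →ₗ[ℝ] X)
    (hpi : ∀ x, p (i x) = x) (e : V →L[ℝ] V) (he : ∀ v, e v = i (p v)) (hn : ‖e‖ ≤ 1)
    (Z : V →L[ℝ] V) (hZ : Z - 1 ∈ Kid V) :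
    Fr (p ∘ₗ (Z : V →ₗ[ℝ] V) ∘ₗ i) ∧ ind (p ∘ₗ (Z : V →ₗ[ℝ] V) ∘ₗ i) = 0 := by
  obtain ⟨R, hR, hN⟩ := hZ 1 one_pos
  set N := Z - 1 - R with hNd
  have hg : IsUnit (1 + e * N * e) := by
    have h1 : ‖-(e * N * e)‖ < 1 := by
      rw [norm_neg]
      have a := norm_mul_le (e * N) e
      have b := norm_mul_le e N
      have := norm_nonneg e
      have := norm_nonneg N
      nlinarith [norm_nonneg (e * N)]
    have := isUnit_one_sub_of_norm_lt_one h1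
    simpa using this
  obtain ⟨g, hg⟩ := hg
  have hgv : ∀ v, (g : V →L[ℝ] V) v = v + e (N (e v)) := by intro v; rw [hg]; rfl
  let h : X →ₗ[ℝ] X := LinearMap.id + p ∘ₗ (N : V →ₗ[ℝ] V) ∘ₗ i
  have hhv : ∀ x, h x = x + p (N (i x)) := fun x => rfl
  have h1 : ∀ x, i (h x) = g.1 (i x) := by
    intro x
    rw [hgv, he, he, hpi, hhv, map_add]
  have h2 : ∀ v, p (g.1 v) = h (p v) := by
    intro v
    rw [hgv, hhv, he, he, map_add, hpi]
  have hginv : ∀ v, g.1 (g⁻¹.1 v) = v := fun v => by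
    have : (g.1 * g⁻¹.1) v = v := by rw [Units.mul_inv]; rfl
    exact this
  have hginv' : ∀ v, g⁻¹.1 (g.1 v) = v := fun v => by
    have : (g⁻¹.1 * g.1) v = v := by rw [Units.inv_mul]; rfl
    exact this
  have hb : Function.Bijective h := by
    constructor
    · rw [injective_iff_map_eq_zero]
      intro x hx
      have := h1 x
      rw [hx, map_zero] at this
      have h3 := hginv' (i x)
      rw [← this, map_zero] at h3
      rw [← hpi x, ← h3, map_zero]
    · intro y
      exact ⟨p (g⁻¹.1 (i y)), by rw [← h2, hginv, hpi]⟩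
  let E := LinearEquiv.ofBijective h hb
  let R' : X →ₗ[ℝ] X := E.symm.toLinearMap ∘ₗ p ∘ₗ (R : V →ₗ[ℝ] V) ∘ₗ i
  have hR' : FiniteDimensional ℝ (range R') := by
    unfold FinRk at hR
    refine Submodule.finiteDimensional_of_le
      (S₂ := (range (R : V →ₗ[ℝ] V)).map (E.symm.toLinearMap ∘ₗ p)) ?_
    rintro _ ⟨v, rfl⟩
    exact ⟨R (i v), ⟨i v, rfl⟩, rfl⟩
  obtain ⟨f1, f2⟩ := ind_one_add R' hR'
  have f3 : Fr h := Fr.of_bij hb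
  have heq : p ∘ₗ (Z : V →ₗ[ℝ] V) ∘ₗ i = h ∘ₗ (LinearMap.id + R') := by
    ext x
    have a : h (R' x) = p (R (i x)) := E.apply_symm_apply _
    have b : Z (i x) = i x + N (i x) + R (i x) := by
      rw [hNd]
      simp
      abel
    simp only [LinearMap.comp_apply, LinearMap.add_apply, LinearMap.id_apply, map_add, a]
    rw [ContinuousLinearMap.coe_coe, b, hhv]
    simp [hpi]
  rw [heq]
  exact ⟨f3.comp f1, by rw [ind_comp f3 f1, f2, ind_of_bij hb]; rfl⟩

variable (V) in
/-- a decomposition of `V` into even and odd parts -/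
structure Gr (X0 X1 : Type*) [AddCommGroup X0] [Module ℝ X0] [AddCommGroup X1] [Module ℝ X1] where
  i0 : X0 →ₗ[ℝ] V
  i1 : X1 →ₗ[ℝ] V
  p0 : V →ₗ[ℝ] X0
  p1 : V →ₗ[ℝ] X1
  e0 : V →L[ℝ] V
  e1 : V →L[ℝ] V
  pi0 : ∀ x, p0 (i0 x) = x
  pi1 : ∀ x, p1 (i1 x) = x
  he0 : ∀ v, e0 v = i0 (p0 v)
  he1 : ∀ v, e1 v = i1 (p1 v)
  n0 : ‖e0‖ ≤ 1
  n1 : ‖e1‖ ≤ 1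
  hs : e0 + e1 = 1

variable {X0 X1 : Type*} [AddCommGroup X0] [Module ℝ X0] [AddCommGroup X1] [Module ℝ X1]
variable (Γ : Gr V X0 X1)

namespace Gr

def swap : Gr V X1 X0 :=
  ⟨Γ.i1, Γ.i0, Γ.p1, Γ.p0, Γ.e1, Γ.e0, Γ.pi1, Γ.pi0, Γ.he1, Γ.he0, Γ.n1, Γ.n0,
    by rw [add_comm]; exact Γ.hs⟩

def Odd (T : V →L[ℝ] V) : Prop := Γ.e1 * T = T * Γ.e0
def Even (T : V →L[ℝ] V) : Prop := Γ.e0 * T = T * Γ.e0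

lemma e1_eq : Γ.e1 = 1 - Γ.e0 := by rw [← Γ.hs]; abel

variable {Γ}
lemma Odd.swap {T : V →L[ℝ] V} (h : Γ.Odd T) : Γ.swap.Odd T := by
  show Γ.e0 * T = T * Γ.e1
  unfold Odd at h
  rw [e1_eq] at h ⊢
  rw [sub_mul, one_mul] at h
  rw [mul_sub, mul_one, ← h]; abel

lemma Odd.mul {T S : V →L[ℝ] V} (hT : Γ.Odd T) (hS : Γ.Odd S) : Γ.Even (T * S) := by
  have := hT.swap
  unfold Odd Even at *
  rw [← mul_assoc, show Γ.e0 * T = T * Γ.e1 from this, mul_assoc, hS, mul_assoc]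

lemma Odd.mul_even {T S : V →L[ℝ] V} (hT : Γ.Odd T) (hS : Γ.Even S) : Γ.Odd (T * S) := by
  unfold Odd Even at *
  rw [← mul_assoc, hT, mul_assoc, hS, mul_assoc]

lemma Even.swap {T : V →L[ℝ] V} (h : Γ.Even T) : Γ.swap.Even T := by
  show Γ.e1 * T = T * Γ.e1
  unfold Even at h
  rw [e1_eq, sub_mul, mul_sub, h]; simp

lemma Even.mul_odd {T S : V →L[ℝ] V} (hS : Γ.Even S) (hT : Γ.Odd T) : Γ.Odd (S * T) := by
  have := hS.swap
  unfold Odd Even at *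
  rw [← mul_assoc, show Γ.e1 * S = S * Γ.e1 from this, mul_assoc, hT, mul_assoc]

lemma Odd.add {T S : V →L[ℝ] V} (hT : Γ.Odd T) (hS : Γ.Odd S) : Γ.Odd (T + S) := by
  unfold Odd at *; rw [mul_add, add_mul, hT, hS]

lemma Odd.neg {T : V →L[ℝ] V} (hT : Γ.Odd T) : Γ.Odd (-T) := by
  unfold Odd at *; rw [mul_neg, neg_mul, hT]

lemma Odd.sum {ι : Type*} (s : Finset ι) {T : ι → V →L[ℝ] V} (hT : ∀ i, Γ.Odd (T i)) :
    Γ.Odd (∑ i ∈ s, T i) := by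
  unfold Odd at *
  rw [Finset.mul_sum, Finset.sum_mul]
  exact Finset.sum_congr rfl (fun i _ => hT i)

lemma Even.add {T S : V →L[ℝ] V} (hT : Γ.Even T) (hS : Γ.Even S) : Γ.Even (T + S) := by
  unfold Even at *; rw [mul_add, add_mul, hT, hS]

lemma Even.smul {T : V →L[ℝ] V} (c : ℝ) (hT : Γ.Even T) : Γ.Even (c • T) := by
  unfold Even at *; rw [mul_smul_comm, smul_mul_assoc, hT]

lemma Even.one : Γ.Even 1 := by simp [Even]

lemma Even.sum {ι : Type*} (s : Finset ι) {T : ι → V →L[ℝ] V} (hT : ∀ i, Γ.Even (T i)) :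
    Γ.Even (∑ i ∈ s, T i) := by
  unfold Even at *
  rw [Finset.mul_sum, Finset.sum_mul]
  exact Finset.sum_congr rfl (fun i _ => hT i)

lemma Even.inv {g : (V →L[ℝ] V)ˣ} (hg : Γ.Even g.1) : Γ.Even g⁻¹.1 := by
  unfold Even at *
  have : g⁻¹.1 * (Γ.e0 * g.1) * g⁻¹.1 = g⁻¹.1 * (g.1 * Γ.e0) * g⁻¹.1 := by rw [hg]
  simpa [mul_assoc] using this.symm

variable (Γ)
def c01 (T : V →L[ℝ] V) : X0 →ₗ[ℝ] X1 := Γ.p1 ∘ₗ (T : V →ₗ[ℝ] V) ∘ₗ Γ.i0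
def c10 (T : V →L[ℝ] V) : X1 →ₗ[ℝ] X0 := Γ.p0 ∘ₗ (T : V →ₗ[ℝ] V) ∘ₗ Γ.i1
def c00 (T : V →L[ℝ] V) : X0 →ₗ[ℝ] X0 := Γ.p0 ∘ₗ (T : V →ₗ[ℝ] V) ∘ₗ Γ.i0

variable {Γ}
lemma ei1 (x : X0) : Γ.e0 (Γ.i0 x) = Γ.i0 x := by rw [Γ.he0, Γ.pi0]

lemma c10_c01 {T S : V →L[ℝ] V} (hS : Γ.Odd S) : Γ.c10 T ∘ₗ Γ.c01 S = Γ.c00 (T * S) := by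
  ext x
  have h : Γ.e1 (S (Γ.i0 x)) = S (Γ.e0 (Γ.i0 x)) := by
    have := congrArg (fun T => T (Γ.i0 x)) hS
    exact this
  rw [ei1, Γ.he1] at h
  show Γ.p0 (T (Γ.i1 (Γ.p1 (S (Γ.i0 x))))) = Γ.p0 (T (S (Γ.i0 x)))
  rw [h]

lemma c00_c00 {T S : V →L[ℝ] V} (hS : Γ.Even S) : Γ.c00 T ∘ₗ Γ.c00 S = Γ.c00 (T * S) := by
  ext x
  have h : Γ.e0 (S (Γ.i0 x)) = S (Γ.e0 (Γ.i0 x)) := by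
    have := congrArg (fun T => T (Γ.i0 x)) hS
    exact this
  rw [ei1, Γ.he0] at h
  show Γ.p0 (T (Γ.i0 (Γ.p0 (S (Γ.i0 x))))) = Γ.p0 (T (S (Γ.i0 x)))
  rw [h]

lemma c00_one_add {Z : V →L[ℝ] V} (hZ : Z - 1 ∈ Kid V) : Fr (Γ.c00 Z) ∧ ind (Γ.c00 Z) = 0 :=
  compress_one_add Γ.i0 Γ.p0 Γ.pi0 Γ.e0 Γ.he0 Γ.n0 Z hZ

lemma c00_unit (g : (V →L[ℝ] V)ˣ) (hg : Γ.Even g.1) :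
    Function.Bijective (Γ.c00 g.1) := by
  have h1 := c00_c00 (T := g⁻¹.1) hg
  have h2 := c00_c00 (T := g.1) hg.inv
  rw [Units.inv_mul] at h1
  rw [Units.mul_inv] at h2
  have h3 : Γ.c00 1 = LinearMap.id := by
    ext x; exact Γ.pi0 x
  rw [h3] at h1 h2
  exact ⟨Function.LeftInverse.injective (g := Γ.c00 g⁻¹.1) (fun x => LinearMap.congr_fun h1 x),
    Function.RightInverse.surjective (g := Γ.c00 g⁻¹.1) (fun x => LinearMap.congr_fun h2 x)⟩

variable (Γ) in
structure OFr (T : V →L[ℝ] V) : Prop where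
  odd : Γ.Odd T
  par : ∃ S, Γ.Odd S ∧ S * T - 1 ∈ Kid V ∧ T * S - 1 ∈ Kid V

lemma OFr.swap {T : V →L[ℝ] V} (h : Γ.OFr T) : Γ.swap.OFr T := by
  obtain ⟨h1, S, h2, h3, h4⟩ := h
  exact ⟨h1.swap, S, h2.swap, h3, h4⟩

lemma OFr.fr01 {T : V →L[ℝ] V} (h : Γ.OFr T) : Fr (Γ.c01 T) := by
  obtain ⟨h1, S, h2, h3, h4⟩ := h
  refine Fr.of_comp (S := Γ.c10 S) (S' := Γ.c10 S) ?_ ?_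
  · rw [c10_c01 h1]; exact (c00_one_add h3).1
  · have := c10_c01 (Γ := Γ.swap) (T := T) h2.swap
    have h5 := (c00_one_add (Γ := Γ.swap) h4).1
    rw [← this] at h5
    exact h5

lemma OFr.fr10 {T : V →L[ℝ] V} (h : Γ.OFr T) : Fr (Γ.c10 T) := h.swap.fr01

/-- left and right parametrices suffice -/
lemma OFr.of_lr {T L R : V →L[ℝ] V} (hT : Γ.Odd T) (hL : Γ.Odd L) 
    (h1 : L * T - 1 ∈ Kid V) (h2 : T * R - 1 ∈ Kid V) : Γ.OFr T := by
  refine ⟨hT, L, hL, h1, ?_⟩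
  -- L ≡ R
  have a : L * T * R - L ∈ Kid V := by
    have := (Kid V).mul_mem_left L h2
    rwa [mul_sub, mul_one, ← mul_assoc] at this
  have b : L * T * R - R ∈ Kid V := by
    have := (Kid V).mul_mem_right R h1
    rwa [sub_mul, one_mul] at this
  have c : L - R ∈ Kid V := by
    have := (Kid V).sub_mem b a
    have h : L * T * R - R - (L * T * R - L) = L - R := by abel
    rwa [h] at this
  have d := (Kid V).add_mem ((Kid V).mul_mem_left T c) h2
  have h : T * (L - R) + (T * R - 1) = T * L - 1 := by rw [mul_sub]; abel
  rwa [h] at d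

lemma OFr.ind_eq {T S T' S' : V →L[ℝ] V} (hT : Γ.OFr T) (hS : Γ.OFr S) (hT' : Γ.OFr T')
    (hS' : Γ.OFr S') (h : T * S - T' * S' ∈ Kid V) :
    ind (Γ.c10 T) + ind (Γ.c01 S) = ind (Γ.c10 T') + ind (Γ.c01 S') := by
  rw [← ind_comp hT.fr10 hS.fr01, ← ind_comp hT'.fr10 hS'.fr01, c10_c01 hS.odd, c10_c01 hS'.odd]
  have f1 : Fr (Γ.c00 (T * S)) := by rw [← c10_c01 hS.odd]; exact hT.fr10.comp hS.fr01
  have f2 : Fr (Γ.c00 (T' * S')) := by rw [← c10_c01 hS'.odd]; exact hT'.fr10.comp hS'.fr01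
  obtain ⟨A, a1, a2, a3⟩ := hT.par
  obtain ⟨B, b1, b2, b3⟩ := hS.par
  have hA : Γ.OFr A := ⟨a1, T, hT.odd, a3, a2⟩
  have hB : Γ.OFr B := ⟨b1, S, hS.odd, b3, b2⟩
  have fP : Fr (Γ.c00 (B * A)) := by
    rw [← c10_c01 a1]; exact hB.fr10.comp hA.fr01
  have k1 : B * A * (T * S) - 1 ∈ Kid V := by
    have := (Kid V).add_mem ((Kid V).mul_mem_left B ((Kid V).mul_mem_right S a2)) b2
    have h : B * ((A * T - 1) * S) + (B * S - 1) = B * A * (T * S) - 1 := by noncomm_ring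
    rwa [h] at this
  have k2 : B * A * (T' * S') - 1 ∈ Kid V := by
    have := (Kid V).sub_mem k1 ((Kid V).mul_mem_left (B * A) h)
    have h : B * A * (T * S) - 1 - B * A * (T * S - T' * S') = B * A * (T' * S') - 1 := by
      noncomm_ring
    rwa [h] at this
  have e1 := ind_comp fP f1
  have e2 := ind_comp fP f2
  rw [c00_c00 (hT.odd.mul hS.odd), (c00_one_add k1).2] at e1
  rw [c00_c00 (hT'.odd.mul hS'.odd), (c00_one_add k2).2] at e2
  linarith

lemma OFr.ind_zero {T S : V →L[ℝ] V} (hT : Γ.OFr T) (hS : Γ.OFr S) (g : (V →L[ℝ] V)ˣ)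
    (hg : Γ.Even g.1) (h : T * S - g.1 ∈ Kid V) :
    ind (Γ.c10 T) + ind (Γ.c01 S) = 0 := by
  rw [← ind_comp hT.fr10 hS.fr01, c10_c01 hS.odd]
  have k : g⁻¹.1 * (T * S) - 1 ∈ Kid V := by
    have := (Kid V).mul_mem_left g⁻¹.1 h
    rwa [mul_sub, Units.inv_mul] at this
  have e : Γ.c00 g.1 ∘ₗ Γ.c00 (g⁻¹.1 * (T * S)) = Γ.c00 (T * S) := by
    rw [c00_c00, ← mul_assoc, Units.mul_inv, one_mul]
    have := hg.inv
    have h2 := hT.odd.mul hS.odd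
    unfold Even at *
    rw [← mul_assoc, this, mul_assoc, h2]
    simp only [mul_assoc]
  rw [← e, ind_comp (Fr.of_bij (c00_unit g hg)) (c00_one_add k).1, (c00_one_add k).2,
    ind_of_bij (c00_unit g hg)]
  rfl

lemma OFr.ind_congr {T T' : V →L[ℝ] V} (hT : Γ.OFr T) (hT' : Γ.OFr T') (h : T - T' ∈ Kid V) :
    ind (Γ.c10 T) = ind (Γ.c10 T') := by
  have := OFr.ind_eq hT hT hT' hT (by
    have := (Kid V).mul_mem_right T h
    rwa [sub_mul] at this)
  linarith

end Gr
end Calkin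
end HR

set_option linter.unusedSectionVars false
namespace HR
open Module
open LinearMap (range ker)

section Shift
variable (ι : Type*) (E : Type*) [NormedAddCommGroup E] [InnerProductSpace ℝ E]

abbrev VV := lp (fun _ : ι => E) 2

noncomputable instance vvN : NormedAddCommGroup (VV ι E) := inferInstance
noncomputable instance vvS : SeminormedAddCommGroup (VV ι E) := inferInstance
noncomputable instance vvA : AddCommGroup (VV ι E) := inferInstance
noncomputable instance vvM : AddCommMonoid (VV ι E) := inferInstance
noncomputable instance vvT : TopologicalSpace (VV ι E) := inferInstance
noncomputable instance vvU : UniformSpace (VV ι E) := inferInstance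
noncomputable instance vvI : InnerProductSpace ℝ (VV ι E) := inferInstance
noncomputable instance vvMod : Module ℝ (VV ι E) := inferInstance
noncomputable instance bvR : Ring (VV ι E →L[ℝ] VV ι E) := inferInstance
noncomputable instance bvS : Semiring (VV ι E →L[ℝ] VV ι E) := inferInstance
noncomputable instance bvN : NonAssocSemiring (VV ι E →L[ℝ] VV ι E) := inferInstance
noncomputable instance bvU : NonUnitalNonAssocSemiring (VV ι E →L[ℝ] VV ι E) := inferInstance
noncomputable instance bvA : AddCommMonoid (VV ι E →L[ℝ] VV ι E) := inferInstance
noncomputable instance bvG : AddCommGroup (VV ι E →L[ℝ] VV ι E) := inferInstance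
noncomputable instance bvMu : Mul (VV ι E →L[ℝ] VV ι E) := inferInstance
noncomputable instance bvAd : Add (VV ι E →L[ℝ] VV ι E) := inferInstance
noncomputable instance bvMo : Monoid (VV ι E →L[ℝ] VV ι E) := inferInstance

variable {ι E}
variable {E' : Type*} [NormedAddCommGroup E'] [InnerProductSpace ℝ E']

def Good (φ : ι → ι) (w : ι → ℝ) : Prop :=
  (∃ C, ∀ β, |w β| ≤ C) ∧ ∀ β β', w β ≠ 0 → w β' ≠ 0 → φ β = φ β' → β = β'

lemma sum_sq_le (u : VV ι E) (s : Finset ι) : ∑ β ∈ s, ‖u β‖ ^ 2 ≤ ‖u‖ ^ 2 := by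
  have := lp.sum_rpow_le_norm_rpow (p := 2) (by norm_num) u s
  simpa using this

lemma op_bound (M : E →L[ℝ] E') {φ : ι → ι} {w : ι → ℝ} {C : ℝ} (hC : ∀ β, |w β| ≤ C)
    (hi : ∀ β β', w β ≠ 0 → w β' ≠ 0 → φ β = φ β' → β = β') (u : VV ι E) (s : Finset ι) :
    ∑ β ∈ s, ‖w β • M (u (φ β))‖ ^ 2 ≤ (‖M‖ * C * ‖u‖) ^ 2 := by
  classical
  have h1 : ∑ β ∈ s, ‖w β • M (u (φ β))‖ ^ 2 =
      ∑ β ∈ s.filter (fun β => w β ≠ 0), ‖w β • M (u (φ β))‖ ^ 2 := by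
    rw [Finset.sum_filter]
    refine Finset.sum_congr rfl (fun β _ => ?_)
    split_ifs with h
    · rfl
    · push Not at h
      simp [h]
  have h2 : ∀ β, ‖w β • M (u (φ β))‖ ^ 2 ≤ (‖M‖ * C) ^ 2 * ‖u (φ β)‖ ^ 2 := by
    intro β
    rw [norm_smul, Real.norm_eq_abs, ← mul_pow]
    refine pow_le_pow_left₀ (by positivity) ?_ 2
    have := M.le_opNorm (u (φ β))
    have h3 := hC β
    have h4 := abs_nonneg (w β)
    have h5 : |w β| * ‖M (u (φ β))‖ ≤ C * (‖M‖ * ‖u (φ β)‖) := by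
      apply mul_le_mul h3 this (norm_nonneg _) (h4.trans h3)
    linarith
  rw [h1]
  refine (Finset.sum_le_sum (fun β _ => h2 β)).trans ?_
  rw [← Finset.mul_sum, mul_pow (‖M‖ * C) ‖u‖]
  refine mul_le_mul_of_nonneg_left ?_ (by positivity)
  rw [← Finset.sum_image (s := s.filter (fun β : ι => w β ≠ 0)) (g := φ) (f := fun β => ‖u β‖ ^ 2)]
  · exact sum_sq_le u _
  · intro a ha b hb hab
    simp only [Finset.coe_filter, Set.mem_ofPred_eq] at ha hb
    exact hi a b ha.2 hb.2 hab

noncomputable def Op (M : E →L[ℝ] E') (φ : ι → ι) (w : ι → ℝ) (h : Good φ w) : VV ι E →L[ℝ] VV ι E' :=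
  LinearMap.mkContinuousOfExistsBound
    { toFun := fun u => ⟨fun β => w β • M (u (φ β)), by
        obtain ⟨⟨C, hC⟩, hi⟩ := h
        refine memℓp_gen' (C := (‖M‖ * C * ‖u‖) ^ 2) (fun s => ?_)
        simpa using op_bound M hC hi u s⟩
      map_add' := fun u v => by
        ext β
        show w β • M (u (φ β) + v (φ β)) =
          w β • M (u (φ β)) + w β • M (v (φ β))
        simp
      map_smul' := fun c u => by
        ext β
        simp [smul_comm c] }
    (by
      obtain ⟨⟨C, hC⟩, hi⟩ := h
      have hC' : ∀ β, |w β| ≤ |C| := fun β => (hC β).trans (le_abs_self C)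
      refine ⟨‖M‖ * |C|, fun u => ?_⟩
      refine lp.norm_le_of_forall_sum_le (by norm_num) (by positivity) (fun s => ?_)
      simpa using op_bound M hC' hi u s)

@[simp] lemma Op_apply (M : E →L[ℝ] E') (φ : ι → ι) (w : ι → ℝ) (h : Good φ w) (u : VV ι E) (β : ι) :
    (Op M φ w h u) β = w β • M (u (φ β)) := rfl

lemma Op_norm (M : E →L[ℝ] E') (φ : ι → ι) (w : ι → ℝ) (h : Good φ w) (C : ℝ) (h0 : 0 ≤ C)
    (hC : ∀ β, |w β| ≤ C) : ‖Op M φ w h‖ ≤ ‖M‖ * C := by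
  refine ContinuousLinearMap.opNorm_le_bound _ (by positivity) (fun u => ?_)
  refine lp.norm_le_of_forall_sum_le (by norm_num) (by positivity) (fun s => ?_)
  simpa using op_bound M hC h.2 u s

lemma ext_op {T S : VV ι E →L[ℝ] VV ι E} (h : ∀ u β, (T u) β = (S u) β) : T = S := by
  ext u β
  exact h u β

lemma Good.id_one : Good (id : ι → ι) (fun _ => 1) :=
  ⟨⟨1, fun _ => by simp⟩, fun _ _ _ _ h => h⟩

/-- pointwise action -/
noncomputable def Dg (M : E →L[ℝ] E') : VV ι E →L[ℝ] VV ι E' := Op M id (fun _ => 1) Good.id_one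

@[simp] lemma Dg_apply (M : E →L[ℝ] E') (u : VV ι E) (β : ι) : (Dg M u) β = M (u β) := by
  simp [Dg]

noncomputable def Sh (φ : ι → ι) (w : ι → ℝ) (h : Good φ w) : VV ι E →L[ℝ] VV ι E := Op 1 φ w h

@[simp] lemma Sh_apply (φ : ι → ι) (w : ι → ℝ) (h : Good φ w) (u : VV ι E) (β : ι) :
    (Sh φ w h u) β = w β • u (φ β) := rfl

lemma Dg_one : (Dg (1 : E →L[ℝ] E) : VV ι E →L[ℝ] VV ι E) = 1 := by
  apply ext_op; intro u β; simp

lemma Dg_mul (M M' : E →L[ℝ] E) : (Dg (M * M') : VV ι E →L[ℝ] VV ι E) = Dg M * Dg M' := by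
  apply ext_op; intro u β; simp

lemma Dg_add (M M' : E →L[ℝ] E) : (Dg (M + M') : VV ι E →L[ℝ] VV ι E) = Dg M + Dg M' := by
  apply ext_op; intro u β; simp

lemma Dg_neg (M : E →L[ℝ] E) : (Dg (-M) : VV ι E →L[ℝ] VV ι E) = -Dg M := by
  apply ext_op; intro u β; simp

lemma Dg_zero : (Dg (0 : E →L[ℝ] E) : VV ι E →L[ℝ] VV ι E) = 0 := by
  apply ext_op; intro u β; simp

lemma Dg_Sh (M : E →L[ℝ] E) (φ : ι → ι) (w : ι → ℝ) (h : Good φ w) :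
    Dg M * Sh φ w h = Sh φ w h * (Dg M : VV ι E →L[ℝ] VV ι E) := by
  apply ext_op; intro u β; simp

/-- adjoint of a shift -/
lemma Op_adj [CompleteSpace E] (M : E →L[ℝ] E) (φ ψ : ι → ι) (w w' : ι → ℝ) (h : Good φ w)
    (h' : Good ψ w') (h1 : ∀ β, ψ (φ β) = β) (h2 : ∀ β, w' (φ β) = w β)
    (h3 : ∀ α, w' α ≠ 0 → α ∈ Set.range φ) :
    ContinuousLinearMap.adjoint (Op M φ w h) = Op (ContinuousLinearMap.adjoint M) ψ w' h' := by
  symm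
  rw [ContinuousLinearMap.eq_adjoint_iff]
  intro x y
  rw [lp.inner_eq_tsum, lp.inner_eq_tsum]
  have hφ : Function.Injective φ := Function.LeftInverse.injective h1
  rw [← hφ.tsum_eq]
  · refine tsum_congr (fun β => ?_)
    simp [h1, h2, inner_smul_left, inner_smul_right, ContinuousLinearMap.adjoint_inner_left]
  · intro α hα
    refine h3 α ?_
    intro h0
    apply hα
    simp [h0]

lemma Kid_crit [FiniteDimensional ℝ E] [CompleteSpace E] (T : VV ι E →L[ℝ] VV ι E) (φ : ι → ι)
    (w : ι → ℝ)
    (hT : ∀ u β, (T u) β = w β • u (φ β))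
    (hi : ∀ β β', w β ≠ 0 → w β' ≠ 0 → φ β = φ β' → β = β')
    (hw : ∀ ε > 0, {β | ε ≤ |w β|}.Finite) : T ∈ Kid (VV ι E) := by
  classical
  intro ε hε
  have hf := hw (ε / 2) (by linarith)
  set s := hf.toFinset with hs
  have hmem : ∀ β, β ∈ s ↔ ε / 2 ≤ |w β| := by intro β; simp [hs]
  let w1 : ι → ℝ := fun β => if β ∈ s then w β else 0
  let w2 : ι → ℝ := fun β => if β ∈ s then 0 else w β
  have hb1 : ∃ C, ∀ β, |w1 β| ≤ C := by
    refine ⟨∑ β ∈ s, |w β|, fun β => ?_⟩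
    by_cases h : β ∈ s
    · simp only [w1, h, if_true]
      exact Finset.single_le_sum (f := fun β => |w β|) (fun _ _ => abs_nonneg _) h
    · simp only [w1, h, if_false, abs_zero]
      exact Finset.sum_nonneg (fun _ _ => abs_nonneg _)
  have hb2 : ∀ β, |w2 β| ≤ ε / 2 := by
    intro β
    by_cases h : β ∈ s
    · simp [w2, h]; linarith
    · simp only [w2, h, if_false]
      rw [hmem] at h
      linarith
  have g1 : Good φ w1 := ⟨hb1, fun β β' h h' => hi β β'
    (fun h0 => h (by simp [w1, h0])) (fun h0 => h' (by simp [w1, h0]))⟩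
  have g2 : Good φ w2 := ⟨⟨_, hb2⟩, fun β β' h h' => hi β β'
    (fun h0 => h (by simp [w2, h0])) (fun h0 => h' (by simp [w2, h0]))⟩
  refine ⟨Sh φ w1 g1, ?_, ?_⟩
  · unfold FinRk
    let Ψ : (s → E) →ₗ[ℝ] VV ι E :=
      ∑ b : s, lp.lsingle (𝕜 := ℝ) (E := fun _ : ι => E) 2 (b : ι) ∘ₗ LinearMap.proj b
    have hΨ : ∀ f β, (Ψ f) β = if h : β ∈ s then f ⟨β, h⟩ else 0 := by
      intro f β
      simp only [Ψ, LinearMap.sum_apply, lp.coeFn_sum, Finset.sum_apply, LinearMap.comp_apply,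
        LinearMap.proj_apply, lp.lsingle_apply, lp.single_apply]
      split_ifs with h
      · rw [Finset.sum_eq_single ⟨β, h⟩]
        · simp
        · intro b _ hb
          rw [Pi.single_apply, if_neg]
          intro h0
          exact hb (Subtype.ext h0.symm)
        · simp
      · refine Finset.sum_eq_zero (fun b _ => ?_)
        rw [Pi.single_apply, if_neg]
        rintro rfl
        exact h b.2
    refine Submodule.finiteDimensional_of_le (S₂ := range Ψ) ?_
    rintro _ ⟨u, rfl⟩
    refine ⟨fun b => w b • u (φ b), ?_⟩
    ext β
    rw [hΨ]
    simp only [ContinuousLinearMap.coe_coe, Sh_apply, w1]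
    split_ifs <;> simp
  · have : T - Sh φ w1 g1 = Sh φ w2 g2 := by
      apply ext_op
      intro u β
      simp only [_root_.sub_apply, lp.coeFn_sub, Pi.sub_apply, hT, Sh_apply, w1, w2]
      split_ifs <;> simp
    rw [this]
    have h1 := Op_norm (1 : E →L[ℝ] E) φ w2 g2 (ε / 2) (by linarith) hb2
    have h2 : ‖(1 : E →L[ℝ] E)‖ ≤ 1 := ContinuousLinearMap.norm_id_le
    unfold Sh
    nlinarith

/-! parity grading -/
variable (P : ι → Prop)

def XP (P : ι → Prop) (E : Type*) [NormedAddCommGroup E] [InnerProductSpace ℝ E] :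
    Submodule ℝ (VV ι E) where
  carrier := {u | ∀ β, ¬ P β → u β = 0}
  zero_mem' := fun β _ => rfl
  add_mem' := fun {u v} hu hv β h => by simp [hu β h, hv β h]
  smul_mem' := fun c u hu β h => by simp [hu β h]

open Classical in
noncomputable def eP (P : ι → Prop) (E : Type*) [NormedAddCommGroup E] [InnerProductSpace ℝ E] : VV ι E →L[ℝ] VV ι E :=
  Sh id (fun β => if P β then 1 else 0) ⟨⟨1, fun β => by beta_reduce; split_ifs <;> simp⟩, fun _ _ _ _ h => h⟩

open Classical in
lemma eP_apply (u : VV ι E) (β : ι) : (eP P E u) β = if P β then u β else 0 := by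
  show (if P β then (1 : ℝ) else 0) • u β = _
  split_ifs <;> simp

lemma eP_norm : ‖(eP P E : VV ι E →L[ℝ] VV ι E)‖ ≤ 1 := by
  classical
  have h1 := Op_norm (1 : E →L[ℝ] E) id (fun β => if P β then (1 : ℝ) else 0)
    ⟨⟨1, fun β => by beta_reduce; split_ifs <;> simp⟩, fun _ _ _ _ h => h⟩ 1 zero_le_one
    (fun β => by split_ifs <;> simp)
  have h2 : ‖(1 : E →L[ℝ] E)‖ ≤ 1 := ContinuousLinearMap.norm_id_le
  refine le_trans (le_of_eq ?_) (h1.trans (by linarith))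
  rfl

noncomputable def pP (P : ι → Prop) : VV ι E →ₗ[ℝ] XP P E :=
  LinearMap.codRestrict (XP P E) (eP P E : VV ι E →ₗ[ℝ] VV ι E) (fun u β h => by
    simp [eP_apply, h])

lemma pP_apply (u : VV ι E) : ((pP P u : XP P E) : VV ι E) = eP P E u := rfl

lemma pP_mem (u : XP P E) : eP P E (u : VV ι E) = u := by
  ext β
  rw [eP_apply]
  split_ifs with h
  · rfl
  · exact (u.2 β h).symm

noncomputable def grP (P : ι → Prop) (E : Type*) [NormedAddCommGroup E] [InnerProductSpace ℝ E]
    [CompleteSpace E] :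
    Gr (VV ι E) (XP P E) (XP (fun β => ¬ P β) E) where
  i0 := (XP P E).subtype
  i1 := (XP _ E).subtype
  p0 := pP P
  p1 := pP _
  e0 := eP P E
  e1 := eP _ E
  pi0 := fun x => Subtype.ext (pP_mem P x)
  pi1 := fun x => Subtype.ext (pP_mem _ x)
  he0 := fun v => rfl
  he1 := fun v => rfl
  n0 := eP_norm P
  n1 := eP_norm _
  hs := by
    classical
    apply ext_op
    intro u β
    simp only [_root_.add_apply, lp.coeFn_add, Pi.add_apply, eP_apply]
    by_cases h : P β <;> simp [h]

variable [CompleteSpace E]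
lemma odd_Sh (φ : ι → ι) (w : ι → ℝ) (h : Good φ w) (hP : ∀ β, w β ≠ 0 → (P (φ β) ↔ ¬ P β)) :
    (grP P E).Odd (Sh φ w h) := by
  classical
  show eP (fun β => ¬ P β) E * _ = _ * eP P E
  apply ext_op
  intro u β
  simp only [mul_apply_eq_comp, eP_apply, Sh_apply]
  by_cases h0 : w β = 0
  · simp [h0]
  · simp only [hP β h0]
    split_ifs <;> simp

lemma even_Sh (φ : ι → ι) (w : ι → ℝ) (h : Good φ w) (hP : ∀ β, w β ≠ 0 → (P (φ β) ↔ P β)) :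
    (grP P E).Even (Sh φ w h) := by
  classical
  show eP P E * _ = _ * eP P E
  apply ext_op
  intro u β
  simp only [mul_apply_eq_comp, eP_apply, Sh_apply]
  by_cases h0 : w β = 0
  · simp [h0]
  · simp only [hP β h0]
    split_ifs <;> simp

lemma even_Dg (M : E →L[ℝ] E) : (grP P E).Even (Dg M) := by
  classical
  show eP P E * _ = _ * eP P E
  apply ext_op
  intro u β
  simp only [mul_apply_eq_comp, eP_apply, Dg_apply]
  split_ifs <;> simp

end Shift
end HR

set_option linter.unusedSectionVars false
namespace HR
open Module
open LinearMap (range ker)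

section Osc
variable {n : ℕ}

abbrev Ix (n : ℕ) := Fin n → ℕ

def deg (β : Ix n) : ℕ := ∑ i, β i
def up (j : Fin n) (β : Ix n) : Ix n := Function.update β j (β j + 1)
def dn (j : Fin n) (β : Ix n) : Ix n := Function.update β j (β j - 1)

@[simp] lemma up_same (j : Fin n) (β : Ix n) : up j β j = β j + 1 := by simp [up]
@[simp] lemma dn_same (j : Fin n) (β : Ix n) : dn j β j = β j - 1 := by simp [dn]
lemma up_ne {j k : Fin n} (h : k ≠ j) (β : Ix n) : up j β k = β k := by simp [up, h]
lemma dn_ne {j k : Fin n} (h : k ≠ j) (β : Ix n) : dn j β k = β k := by simp [dn, h]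

@[simp] lemma dn_up (j : Fin n) (β : Ix n) : dn j (up j β) = β := by simp [dn, up]
lemma up_dn (j : Fin n) (β : Ix n) (h : β j ≠ 0) : up j (dn j β) = β := by
  simp only [dn, up, Function.update_self, Function.update_idem]
  rw [Nat.sub_add_cancel (Nat.one_le_iff_ne_zero.2 h)]
  simp

lemma up_up (j k : Fin n) (β : Ix n) : up j (up k β) = up k (up j β) := by
  by_cases h : j = k
  · rw [h]
  · have h' : k ≠ j := fun e => h e.symm
    simp only [up, Function.update_of_ne h, Function.update_of_ne h']
    rw [Function.update_comm h]

lemma dn_dn (j k : Fin n) (β : Ix n) : dn j (dn k β) = dn k (dn j β) := by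
  by_cases h : j = k
  · rw [h]
  · have h' : k ≠ j := fun e => h e.symm
    simp only [dn, Function.update_of_ne h, Function.update_of_ne h']
    rw [Function.update_comm h]

lemma up_dn_comm {j k : Fin n} (h : j ≠ k) (β : Ix n) : up j (dn k β) = dn k (up j β) := by
  have h' : k ≠ j := fun e => h e.symm
  simp only [up, dn, Function.update_of_ne h, Function.update_of_ne h']
  rw [Function.update_comm h]

lemma up_inj (j : Fin n) : Function.Injective (up j : Ix n → Ix n) :=
  Function.LeftInverse.injective (dn_up j)

@[simp] lemma deg_up (j : Fin n) (β : Ix n) : deg (up j β) = deg β + 1 := by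
  unfold deg up
  rw [Finset.sum_update_of_mem (Finset.mem_univ j), ← Finset.add_sum_erase _ β (Finset.mem_univ j),
    ← Finset.sdiff_singleton_eq_erase]
  ring

lemma deg_dn (j : Fin n) (β : Ix n) (h : β j ≠ 0) : deg (dn j β) + 1 = deg β := by
  conv_rhs => rw [← up_dn j β h, deg_up]

lemma le_deg (j : Fin n) (β : Ix n) : β j ≤ deg β :=
  Finset.single_le_sum (f := β) (fun _ _ => Nat.zero_le _) (Finset.mem_univ j)

lemma two_le_deg {j k : Fin n} (h : j ≠ k) (β : Ix n) : β j + β k ≤ deg β := by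
  unfold deg
  rw [← Finset.sum_pair h]
  exact Finset.sum_le_sum_of_subset (Finset.subset_univ _)

lemma fin_crit (w : Ix n → ℝ) (hw : ∀ β, |w β| ≤ 1 / (1 + deg β)) (ε : ℝ) (hε : 0 < ε) :
    {β | ε ≤ |w β|}.Finite := by
  obtain ⟨d, hd⟩ := exists_nat_gt (1 / ε)
  have hfin : (Set.Iic (fun _ : Fin n => d)).Finite := Set.finite_Iic _
  refine hfin.subset (fun β hβ => ?_)
  intro j
  have h1 : ε ≤ 1 / (1 + deg β : ℝ) := le_trans hβ (hw β)
  have h2 : (1 + deg β : ℝ) ≤ 1 / ε := by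
    rw [le_div_iff₀ (by positivity)] at h1 ⊢
    linarith
  have h3 : (deg β : ℝ) < d := by linarith
  have := le_deg j β
  exact this.trans (by exact_mod_cast h3.le)

noncomputable def ws (j : Fin n) (β : Ix n) : ℝ := √(β j + 1) / √(2 + deg β)
noncomputable def wt (j : Fin n) (β : Ix n) : ℝ := √(β j) / √(1 + deg β)
noncomputable def wt' (j : Fin n) (β : Ix n) : ℝ := √(β j) / √(deg β)

lemma abs_le_one_aux {a b : ℝ} (h : a ≤ b) : |√a / √b| ≤ 1 := by
  rw [abs_of_nonneg (by positivity)]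
  exact div_le_one_of_le₀ (Real.sqrt_le_sqrt h) (Real.sqrt_nonneg _)

lemma ledeg' (j : Fin n) (β : Ix n) : (β j : ℝ) ≤ deg β := by exact_mod_cast le_deg j β

lemma gs (j : Fin n) : Good (up j) (ws j) :=
  ⟨⟨1, fun β => abs_le_one_aux (by have := ledeg' j β; linarith)⟩, fun _ _ _ _ h => up_inj j h⟩

lemma wt_ne {j : Fin n} {β : Ix n} (h : wt j β ≠ 0) : β j ≠ 0 := by
  intro h0; apply h; simp [wt, h0]
lemma wt'_ne {j : Fin n} {β : Ix n} (h : wt' j β ≠ 0) : β j ≠ 0 := by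
  intro h0; apply h; simp [wt', h0]

lemma dn_inj {j : Fin n} {β β' : Ix n} (h : β j ≠ 0) (h' : β' j ≠ 0) (e : dn j β = dn j β') :
    β = β' := by
  rw [← up_dn j β h, e, up_dn j β' h']

lemma gt (j : Fin n) : Good (dn j) (wt j) :=
  ⟨⟨1, fun β => abs_le_one_aux (by have := ledeg' j β; linarith)⟩,
    fun _ _ h h' e => dn_inj (wt_ne h) (wt_ne h') e⟩

lemma gt' (j : Fin n) : Good (dn j) (wt' j) :=
  ⟨⟨1, fun β => abs_le_one_aux (ledeg' j β)⟩,
    fun _ _ h h' e => dn_inj (wt'_ne h) (wt'_ne h') e⟩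

variable {E : Type*} [NormedAddCommGroup E] [InnerProductSpace ℝ E]

abbrev W (n : ℕ) (E : Type*) [NormedAddCommGroup E] [InnerProductSpace ℝ E] := VV (Ix n) E
abbrev BW (n : ℕ) (E : Type*) [NormedAddCommGroup E] [InnerProductSpace ℝ E] := W n E →L[ℝ] W n E

variable (E)
noncomputable def S (j : Fin n) : BW n E := Sh (up j) (ws j) (gs j)
noncomputable def T (j : Fin n) : BW n E := Sh (dn j) (wt j) (gt j)
noncomputable def T' (j : Fin n) : BW n E := Sh (dn j) (wt' j) (gt' j)

lemma S_apply (j : Fin n) (u : W n E) (β : Ix n) : (S E j u) β = ws j β • u (up j β) := rfl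
lemma T_apply (j : Fin n) (u : W n E) (β : Ix n) : (T E j u) β = wt j β • u (dn j β) := rfl
lemma T'_apply (j : Fin n) (u : W n E) (β : Ix n) : (T' E j u) β = wt' j β • u (dn j β) := rfl

lemma S_comm (j k : Fin n) : S E j * S E k = S E k * S E j := by
  apply ext_op
  intro u β
  by_cases h : j = k
  · rw [h]
  have h' : k ≠ j := fun e => h e.symm
  simp only [mul_apply_eq_comp, S_apply, smul_smul]
  rw [up_up k j]
  congr 1
  unfold ws
  rw [up_ne h, up_ne h', deg_up, deg_up]
  ring

variable [CompleteSpace E]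

lemma S_adj (j : Fin n) : ContinuousLinearMap.adjoint (S E j) = T E j := by
  unfold S T Sh
  rw [Op_adj (1 : E →L[ℝ] E) (up j) (dn j) (ws j) (wt j) (gs j) (gt j) (dn_up j)]
  · congr 1
    exact ContinuousLinearMap.adjoint_id
  · intro β
    unfold wt ws
    rw [up_same, deg_up]
    push_cast
    ring_nf
  · intro α h
    exact ⟨dn j α, up_dn j α (wt_ne h)⟩

lemma T_adj (j : Fin n) : ContinuousLinearMap.adjoint (T E j) = S E j := by
  rw [← S_adj, ContinuousLinearMap.adjoint_adjoint]

lemma T_comm (j k : Fin n) : T E j * T E k = T E k * T E j := by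
  have := congrArg ContinuousLinearMap.adjoint (S_comm E k j)
  have h : ∀ A B : BW n E, ContinuousLinearMap.adjoint (A * B) =
    ContinuousLinearMap.adjoint B * ContinuousLinearMap.adjoint A :=
    fun A B => ContinuousLinearMap.adjoint_comp A B
  rw [h, h, S_adj, S_adj] at this
  exact this

variable [FiniteDimensional ℝ E]

lemma T'_T (j : Fin n) : T' E j - T E j ∈ Kid (W n E) := by
  refine Kid_crit _ (dn j) (fun β => wt' j β - wt j β) ?_ ?_ ?_
  · intro u β
    rw [_root_.sub_apply, lp.coeFn_sub, Pi.sub_apply, T_apply, T'_apply, sub_smul]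
  · intro β β' h h' e
    refine dn_inj ?_ ?_ e
    · intro h0; apply h; simp [wt, wt', h0]
    · intro h0; apply h'; simp [wt, wt', h0]
  · refine fun ε hε => fin_crit _ (fun β => ?_) ε hε
    have hj := ledeg' j β
    by_cases h0 : deg β = 0
    · have : β j = 0 := by have := le_deg j β; omega
      simp [wt, wt', this]
      positivity
    have hm : (0 : ℝ) < deg β := by exact_mod_cast Nat.pos_of_ne_zero h0
    unfold wt wt'
    set m : ℝ := ((deg β : ℕ) : ℝ)
    have e1 : √(β j) ≤ √m := Real.sqrt_le_sqrt hj
    have p1 : 0 < √m := Real.sqrt_pos.2 hm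
    have p2 : 0 < √(1 + m) := Real.sqrt_pos.2 (by linarith)
    have e2 : √m ≤ √(1 + m) := Real.sqrt_le_sqrt (by linarith)
    have s1 := Real.sq_sqrt hm.le
    have s2 := Real.sq_sqrt (show 0 ≤ 1 + m by linarith)
    have e3 := Real.sqrt_nonneg (β j : ℝ)
    rw [abs_of_nonneg]
    · rw [div_sub_div _ _ p1.ne' p2.ne', div_le_div_iff₀ (by positivity) (by positivity)]
      set a := √m
      set b := √(1 + m)
      set c := √(β j)
      have : b ^ 2 - a ^ 2 = 1 := by rw [s1, s2]; ring
      have k1 : c * b - a * c = c * (b - a) := by ring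
      have k2 : (b - a) * b ≤ 1 := by nlinarith
      have k3 : c * (b - a) * b ^ 2 ≤ a * (b * ((b - a) * b)) := by
        have : c * ((b - a) * b ^ 2) ≤ a * ((b - a) * b ^ 2) :=
          mul_le_mul_of_nonneg_right e1 (by
            have : 0 ≤ b - a := by linarith
            positivity)
        nlinarith
      have k4 : a * (b * ((b - a) * b)) ≤ a * (b * 1) := by gcongr
      rw [k1, ← s2]; linarith
    · rw [sub_nonneg]
      gcongr

lemma ST_same (j : Fin n) : S E j * T E j - T E j * S E j ∈ Kid (W n E) := by
  refine Kid_crit _ id (fun β => (β j + 1) / (2 + deg β) - β j / (1 + deg β)) ?_ ?_ ?_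
  · intro u β
    rw [_root_.sub_apply, lp.coeFn_sub, Pi.sub_apply]
    simp only [mul_apply_eq_comp, S_apply, T_apply, smul_smul, dn_up]
    have h1 : ws j β * wt j (up j β) = (β j + 1) / (2 + deg β) := by
      unfold ws wt
      rw [up_same, deg_up]
      push_cast
      rw [show (1 + (deg β + 1 : ℝ)) = 2 + deg β by ring, div_mul_div_comm,
        Real.mul_self_sqrt (by positivity), Real.mul_self_sqrt (by positivity)]
    rw [h1, sub_smul]
    congr 1
    by_cases h0 : β j = 0
    · simp [wt, h0]
    · rw [up_dn j β h0]
      congr 1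
      unfold ws wt
      have h2 := deg_dn j β h0
      have h3 : (deg (dn j β) : ℝ) + 1 = deg β := by exact_mod_cast h2
      have h4 : ((dn j β j : ℕ) : ℝ) + 1 = β j := by
        rw [dn_same]
        have : β j - 1 + 1 = β j := by omega
        exact_mod_cast this
      rw [h4, show (2 + (deg (dn j β) : ℝ)) = 1 + deg β by rw [← h3]; ring, div_mul_div_comm,
        Real.mul_self_sqrt (by positivity), Real.mul_self_sqrt (by positivity)]
  · intro β β' _ _ h
    exact h
  · refine fun ε hε => fin_crit _ (fun β => ?_) ε hε
    have hj := ledeg' j β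
    have : (0 : ℝ) ≤ β j := by positivity
    rw [div_sub_div _ _ (by positivity) (by positivity), abs_of_nonneg]
    · rw [div_le_div_iff₀ (by positivity) (by positivity)]
      nlinarith
    · apply div_nonneg _ (by positivity)
      nlinarith

lemma ST_ne {j k : Fin n} (hjk : j ≠ k) : S E j * T E k - T E k * S E j ∈ Kid (W n E) := by
  have hkj : k ≠ j := fun e => hjk e.symm
  refine Kid_crit _ (fun β => up j (dn k β))
    (fun β => √(β j + 1) * √(β k) * (1 / (2 + deg β) - 1 / (1 + deg β))) ?_ ?_ ?_
  · intro u β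
    rw [_root_.sub_apply, lp.coeFn_sub, Pi.sub_apply]
    simp only [mul_apply_eq_comp, S_apply, T_apply, smul_smul]
    rw [mul_sub, sub_smul, up_dn_comm hjk]
    congr 1
    · congr 1
      unfold ws wt
      rw [up_ne hkj, deg_up]
      push_cast
      rw [show (1 + (deg β + 1 : ℝ)) = 2 + deg β by ring, div_mul_div_comm,
        Real.mul_self_sqrt (by positivity)]
      ring
    · by_cases h0 : β k = 0
      · simp [wt, h0]
      · congr 1
        unfold ws wt
        have h3 : (deg (dn k β) : ℝ) + 1 = deg β := by exact_mod_cast deg_dn k β h0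
        rw [dn_ne hjk, show (2 + (deg (dn k β) : ℝ)) = 1 + deg β by rw [← h3]; ring, div_mul_div_comm,
          Real.mul_self_sqrt (by positivity)]
        ring
  · intro β β' h h' e
    refine dn_inj ?_ ?_ (up_inj j e)
    · intro h0; apply h; simp [h0]
    · intro h0; apply h'; simp [h0]
  · refine fun ε hε => fin_crit _ (fun β => ?_) ε hε
    have hj := ledeg' j β
    have hk := ledeg' k β
    have h0 : 0 ≤ √(β j + 1) * √(β k) := by positivity
    have h1 : √(β j + 1) * √(β k) ≤ 1 + deg β := by
      have a : √(β j + 1) ≤ √(1 + deg β) := Real.sqrt_le_sqrt (by linarith)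
      have b : √(β k) ≤ √(1 + deg β) := Real.sqrt_le_sqrt (by linarith)
      calc _ ≤ √(1 + deg β) * √(1 + deg β) := by gcongr
        _ = _ := Real.mul_self_sqrt (by positivity)
    rw [abs_mul, abs_of_nonneg h0, div_sub_div _ _ (by positivity) (by positivity), abs_div,
      abs_of_nonneg (by positivity : (0 : ℝ) ≤ (2 + deg β) * (1 + deg β)),
      show |(1 * (1 + (deg β : ℝ)) - (2 + deg β) * 1)| = 1 by
        rw [show (1 * (1 + (deg β : ℝ)) - (2 + deg β) * 1) = -1 by ring]; simp]
    rw [mul_one_div, div_le_div_iff₀ (by positivity) (by positivity)]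
    nlinarith [(Nat.cast_nonneg (deg β) : (0 : ℝ) ≤ deg β)]

lemma ST_comm (j k : Fin n) : S E j * T E k - T E k * S E j ∈ Kid (W n E) := by
  by_cases h : j = k
  · rw [h]; exact ST_same E k
  · exact ST_ne E h

lemma TS_one : ∑ j, T E j * S E j - 1 ∈ Kid (W n E) := by
  refine Kid_crit _ id (fun β => - (1 / (1 + deg β))) ?_ ?_ ?_
  · intro u β
    rw [_root_.sub_apply, lp.coeFn_sub, Pi.sub_apply]
    have h : ∀ j, ((T E j * S E j) u) β = (β j / (1 + deg β) : ℝ) • u β := by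
      intro j
      simp only [mul_apply_eq_comp, S_apply, T_apply, smul_smul]
      by_cases h0 : β j = 0
      · simp [wt, h0]
      · rw [up_dn j β h0]
        congr 1
        unfold ws wt
        have h2 := deg_dn j β h0
        have h3 : (deg (dn j β) : ℝ) + 1 = deg β := by exact_mod_cast h2
        have h4 : ((dn j β j : ℕ) : ℝ) + 1 = β j := by
          rw [dn_same]
          have : β j - 1 + 1 = β j := by omega
          exact_mod_cast this
        rw [h4, show (2 + (deg (dn j β) : ℝ)) = 1 + deg β by rw [← h3]; ring, div_mul_div_comm,
          Real.mul_self_sqrt (by positivity), Real.mul_self_sqrt (by positivity)]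
    rw [_root_.sum_apply, lp.coeFn_sum, Finset.sum_apply]
    simp only [h]
    rw [← Finset.sum_smul, ← Finset.sum_div, show ∑ i, (β i : ℝ) = deg β by simp [deg]]
    rw [show (1 : BW n E) u = u from rfl, id]
    nth_rewrite 2 [← one_smul ℝ (u β)]
    rw [← sub_smul]
    congr 1
    field_simp
    ring
  · intro β β' _ _ h
    exact h
  · refine fun ε hε => fin_crit _ (fun β => ?_) ε hε
    rw [abs_neg, abs_of_nonneg (by positivity)]

/-! parity -/
def par (β : Ix n) : Prop := Even (deg β)

lemma S_odd (j : Fin n) : (grP par E).Odd (S E j : BW n E) :=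
  odd_Sh _ _ _ _ (fun β _ => by unfold par; rw [deg_up]; exact Nat.even_add_one)

lemma T_odd (j : Fin n) : (grP par E).Odd (T E j : BW n E) :=
  odd_Sh _ _ _ _ (fun β h => by
    unfold par; rw [← deg_dn j β (wt_ne h), Nat.even_add_one, not_not])

lemma T'_odd (j : Fin n) : (grP par E).Odd (T' E j : BW n E) :=
  odd_Sh _ _ _ _ (fun β h => by
    unfold par; rw [← deg_dn j β (wt'_ne h), Nat.even_add_one, not_not])

end Osc
end HR

set_option linter.unusedSectionVars false
namespace HR
open Module
open LinearMap (range ker)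

section Pos

lemma joint_pos {G : Type*} [NormedAddCommGroup G] [InnerProductSpace ℝ G] [FiniteDimensional ℝ G]
    {n : ℕ} (X A : Fin n → G →ₗ[ℝ] G) (hX : ∀ j, (X j).IsSymmetric)
    (hc : ∀ j k, X j * X k = X k * X j) (hA : ∀ j k v, A j (X k v) = X k (A j v)) (δ : ℝ)
    (hδ : ∀ (l : Fin n → ℝ) (v : G), δ * (∑ j, l j ^ 2) * ‖v‖ ^ 2 ≤ ‖∑ j, l j • A j v‖ ^ 2) (v : G) :
    δ * ∑ j, ‖X j v‖ ^ 2 ≤ ‖∑ j, A j (X j v)‖ ^ 2 := by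
  have htop := LinearMap.IsSymmetric.iSup_iInf_eq_top_of_commute hX
    (fun j k _ => hc j k)
  have horth := LinearMap.IsSymmetric.orthogonalFamily_iInf_eigenspaces hX
  have hv : v ∈ ⨆ χ : Fin n → ℝ, ⨅ i, End.eigenspace (X i) (χ i) := by rw [htop]; trivial
  rw [Submodule.mem_iSup_iff_exists_finsupp] at hv
  obtain ⟨f, hf, rfl⟩ := hv
  have hf' : ∀ χ j, X j (f χ) = χ j • f χ := by
    intro χ j
    have := (Submodule.mem_iInf _).1 (hf χ) j
    exact End.mem_eigenspace_iff.1 this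
  have hnorm : ∀ g : (Fin n → ℝ) → G, (∀ χ, g χ ∈ ⨅ i, End.eigenspace (X i) (χ i)) →
      ‖∑ χ ∈ f.support, g χ‖ ^ 2 = ∑ χ ∈ f.support, ‖g χ‖ ^ 2 := by
    intro g hg
    exact horth.norm_sum (fun χ => ⟨g χ, hg χ⟩) f.support
  have e1 : ∀ j, X j (f.sum fun _ x => x) = ∑ χ ∈ f.support, χ j • f χ := by
    intro j
    rw [Finsupp.sum, map_sum]
    exact Finset.sum_congr rfl (fun χ _ => hf' χ j)
  have e2 : ∑ j, A j (X j (f.sum fun _ x => x)) = ∑ χ ∈ f.support, ∑ j, χ j • A j (f χ) := by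
    rw [Finset.sum_comm]
    refine Finset.sum_congr rfl (fun j _ => ?_)
    rw [e1, map_sum]
    simp
  rw [e2, hnorm]
  · have e3 : ∀ j, ‖X j (f.sum fun _ x => x)‖ ^ 2 = ∑ χ ∈ f.support, χ j ^ 2 * ‖f χ‖ ^ 2 := by
      intro j
      rw [e1, hnorm]
      · simp [norm_smul, mul_pow]
      · exact fun χ => Submodule.smul_mem _ _ (hf χ)
    simp only [e3]
    rw [Finset.sum_comm, Finset.mul_sum]
    refine Finset.sum_le_sum (fun χ _ => ?_)
    rw [← Finset.sum_mul, ← mul_assoc]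
    exact hδ χ (f χ)
  · intro χ
    refine Submodule.sum_mem _ (fun j _ => Submodule.smul_mem _ _ ?_)
    rw [Submodule.mem_iInf]
    intro k
    rw [End.mem_eigenspace_iff, ← hA, hf' χ k, map_smul]

variable {n : ℕ} (E : Type*) [NormedAddCommGroup E] [InnerProductSpace ℝ E]

noncomputable def wa (m : ℕ) (j : Fin n) (β : Ix n) : ℝ := if β j + 1 < m then √(β j + 1) else 0
noncomputable def wb (m : ℕ) (j : Fin n) (β : Ix n) : ℝ := if β j < m then √(β j) else 0

lemma ga (m : ℕ) (j : Fin n) : Good (up j) (wa m j) :=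
  ⟨⟨√m, fun β => by
    unfold wa
    split_ifs with h
    · rw [abs_of_nonneg (by positivity)]
      exact Real.sqrt_le_sqrt (by exact_mod_cast h.le)
    · simp⟩, fun _ _ _ _ h => up_inj j h⟩

lemma wb_ne {m : ℕ} {j : Fin n} {β : Ix n} (h : wb m j β ≠ 0) : β j ≠ 0 := by
  intro h0; apply h; simp [wb, h0]

lemma gb (m : ℕ) (j : Fin n) : Good (dn j) (wb m j) :=
  ⟨⟨√m, fun β => by
    unfold wb
    split_ifs with h
    · rw [abs_of_nonneg (by positivity)]
      exact Real.sqrt_le_sqrt (by exact_mod_cast h.le)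
    · simp⟩, fun _ _ h h' e => dn_inj (wb_ne h) (wb_ne h') e⟩

noncomputable def aa (m : ℕ) (j : Fin n) : BW n E := Sh (up j) (wa m j) (ga m j)
noncomputable def bb (m : ℕ) (j : Fin n) : BW n E := Sh (dn j) (wb m j) (gb m j)
noncomputable def xx (m : ℕ) (j : Fin n) : BW n E := aa E m j + bb E m j

lemma aa_apply (m : ℕ) (j : Fin n) (u : W n E) (β : Ix n) :
    (aa E m j u) β = wa m j β • u (up j β) := rfl
lemma bb_apply (m : ℕ) (j : Fin n) (u : W n E) (β : Ix n) :
    (bb E m j u) β = wb m j β • u (dn j β) := rfl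
lemma xx_apply (m : ℕ) (j : Fin n) (u : W n E) (β : Ix n) :
    (xx E m j u) β = wa m j β • u (up j β) + wb m j β • u (dn j β) := rfl

lemma aa_aa (m : ℕ) {j k : Fin n} (h : j ≠ k) : aa E m j * aa E m k = aa E m k * aa E m j := by
  have h' : k ≠ j := fun e => h e.symm
  apply ext_op
  intro u β
  simp only [mul_apply_eq_comp, aa_apply, smul_smul]
  rw [up_up k j]
  congr 1
  unfold wa
  rw [up_ne h, up_ne h', mul_comm]

lemma bb_bb (m : ℕ) {j k : Fin n} (h : j ≠ k) : bb E m j * bb E m k = bb E m k * bb E m j := by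
  have h' : k ≠ j := fun e => h e.symm
  apply ext_op
  intro u β
  simp only [mul_apply_eq_comp, bb_apply, smul_smul]
  rw [dn_dn k j]
  congr 1
  unfold wb
  rw [dn_ne h, dn_ne h', mul_comm]

lemma aa_bb (m : ℕ) {j k : Fin n} (h : j ≠ k) : aa E m j * bb E m k = bb E m k * aa E m j := by
  have h' : k ≠ j := fun e => h e.symm
  apply ext_op
  intro u β
  simp only [mul_apply_eq_comp, bb_apply, aa_apply, smul_smul]
  rw [up_dn_comm h]
  congr 1
  unfold wb wa
  rw [dn_ne h, up_ne h', mul_comm]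

lemma xx_comm (m : ℕ) (j k : Fin n) : xx E m j * xx E m k = xx E m k * xx E m j := by
  by_cases h : j = k
  · rw [h]
  have h' : k ≠ j := fun e => h e.symm
  unfold xx
  simp only [mul_add, add_mul]
  rw [aa_aa E m h, bb_bb E m h, aa_bb E m h, aa_bb E m h']
  abel

lemma aa_adj [CompleteSpace E] (m : ℕ) (j : Fin n) :
    ContinuousLinearMap.adjoint (aa E m j) = bb E m j := by
  unfold aa bb Sh
  rw [Op_adj (1 : E →L[ℝ] E) (up j) (dn j) (wa m j) (wb m j) (ga m j) (gb m j) (dn_up j)]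
  · congr 1
    exact ContinuousLinearMap.adjoint_id
  · intro β
    unfold wa wb
    rw [up_same]
    push_cast
    rfl
  · intro α h
    exact ⟨dn j α, up_dn j α (wb_ne h)⟩

lemma xx_symm [CompleteSpace E] (m : ℕ) (j : Fin n) :
    ((xx E m j : BW n E) : W n E →ₗ[ℝ] W n E).IsSymmetric := by
  rw [← ContinuousLinearMap.isSelfAdjoint_iff_isSymmetric]
  show ContinuousLinearMap.adjoint (xx E m j) = xx E m j
  unfold xx
  rw [map_add, aa_adj, ← aa_adj, ContinuousLinearMap.adjoint_adjoint, add_comm]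

/-- functions supported in a box -/
abbrev Bx (n : ℕ) (m : ℕ) : Submodule ℝ (W n E) := XP (fun β : Ix n => ∀ i, β i < m) E

instance [FiniteDimensional ℝ E] (m : ℕ) : FiniteDimensional ℝ (Bx E n m) := by
  let f : Bx E n m →ₗ[ℝ] ((Fin n → Fin m) → E) :=
    { toFun := fun u α => u.1 (fun i => (α i : ℕ))
      map_add' := fun _ _ => rfl
      map_smul' := fun _ _ => rfl }
  refine FiniteDimensional.of_injective f ?_
  rw [injective_iff_map_eq_zero]
  intro u hu
  apply Subtype.ext
  ext β
  by_cases h : ∀ i, β i < m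
  · exact congrFun hu (fun i => ⟨β i, h i⟩)
  · exact u.2 β h

lemma xx_box (m : ℕ) (j : Fin n) (u : W n E) (hu : u ∈ Bx E n m) : xx E m j u ∈ Bx E n m := by
  intro β hβ
  rw [xx_apply]
  push Not at hβ
  obtain ⟨k, hk⟩ := hβ
  by_cases h : k = j
  · subst h
    have h1 : ¬ β k + 1 < m := by omega
    have h2 : ¬ β k < m := by omega
    rw [wa, wb, if_neg h1, if_neg h2, zero_smul, zero_smul, add_zero]
  · rw [hu, hu, smul_zero, smul_zero, add_zero]
    · push Not; exact ⟨k, by rw [dn_ne h]; exact hk⟩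
    · push Not; exact ⟨k, by rw [up_ne h]; exact hk⟩

lemma Dg_box (m : ℕ) (M : E →L[ℝ] E) (u : W n E) (hu : u ∈ Bx E n m) : Dg M u ∈ Bx E n m := by
  intro β hβ
  rw [Dg_apply, hu β hβ, map_zero]

lemma Dg_lower (A : Fin n → E →L[ℝ] E) (δ : ℝ) (hδ0 : 0 < δ)
    (hδ : ∀ (l : Fin n → ℝ) (v : E), δ * (∑ j, l j ^ 2) * ‖v‖ ^ 2 ≤ ‖∑ j, l j • A j v‖ ^ 2)
    (l : Fin n → ℝ) (u : W n E) :
    δ * (∑ j, l j ^ 2) * ‖u‖ ^ 2 ≤ ‖∑ j, l j • Dg (A j) u‖ ^ 2 := by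
  set c := δ * ∑ j, l j ^ 2 with hc
  have hc0 : 0 ≤ c := by positivity
  set z := ∑ j, l j • Dg (A j) u with hz
  have hz' : ∀ β, z β = ∑ j, l j • A j (u β) := by
    intro β
    rw [hz, lp.coeFn_sum, Finset.sum_apply]
    simp
  have : ‖√c • u‖ ≤ ‖z‖ := by
    refine lp.norm_le_of_forall_sum_le (by norm_num) (norm_nonneg _) (fun s => ?_)
    have h := sum_sq_le z s
    simp only [ENNReal.toReal_ofNat, Real.rpow_ofNat]
    refine le_trans (Finset.sum_le_sum (fun β _ => ?_)) h
    rw [hz', lp.coeFn_smul, Pi.smul_apply, norm_smul, mul_pow, Real.norm_eq_abs, sq_abs, Real.sq_sqrt hc0]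
    exact hδ l (u β)
  rw [norm_smul, Real.norm_eq_abs, abs_of_nonneg (Real.sqrt_nonneg _)] at this
  have h2 := pow_le_pow_left₀ (by positivity) this 2
  rwa [mul_pow, Real.sq_sqrt hc0] at h2

noncomputable def X' (j : Fin n) : BW n E := S E j + T' E j

lemma glam : Good (id : Ix n → Ix n) (fun β => 1 / √(1 + deg β)) :=
  ⟨⟨1, fun β => by
    rw [abs_of_nonneg (by positivity)]
    apply div_le_one_of_le₀ _ (Real.sqrt_nonneg _)
    rw [Real.one_le_sqrt]
    have : (0 : ℝ) ≤ deg β := by positivity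
    linarith⟩, fun _ _ _ _ h => h⟩

variable [CompleteSpace E] [FiniteDimensional ℝ E]

lemma pos_fin (A : Fin n → E →L[ℝ] E) (δ : ℝ) (hδ0 : 0 < δ)
    (hδ : ∀ (l : Fin n → ℝ) (v : E), δ * (∑ j, l j ^ 2) * ‖v‖ ^ 2 ≤ ‖∑ j, l j • A j v‖ ^ 2)
    (u : W n E) (m : ℕ) (hu : ∀ β, u β ≠ 0 → ∀ i, β i + 1 < m) :
    δ * ∑ j, ‖X' E j u‖ ^ 2 ≤ ‖∑ j, Dg (A j) (X' E j u)‖ ^ 2 := by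
  set v : W n E := Sh id (fun β => 1 / √(1 + deg β)) glam u with hv
  have hvb : ∀ β, v β = (1 / √(1 + deg β)) • u β := fun β => rfl
  have hvm : v ∈ Bx E n m := by
    intro β hβ
    rw [hvb]
    by_cases h : u β = 0
    · rw [h, smul_zero]
    · exact absurd (fun i => by have := hu β h i; omega) hβ
  have hX : ∀ j, X' E j u = xx E m j v := by
    intro j
    ext β
    rw [xx_apply, hvb, hvb]
    show ws j β • u (up j β) + wt' j β • u (dn j β) = _
    rw [smul_smul, smul_smul]
    congr 1
    · by_cases h : u (up j β) = 0
      · rw [h, smul_zero, smul_zero]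
      · have := hu _ h j
        rw [up_same] at this
        congr 1
        unfold ws wa
        rw [if_pos (by omega), deg_up]
        push_cast
        rw [show (1 + (deg β + 1 : ℝ)) = 2 + deg β by ring]
        ring
    · by_cases h : u (dn j β) = 0
      · rw [h, smul_zero, smul_zero]
      · have := hu _ h j
        rw [dn_same] at this
        congr 1
        unfold wt' wb
        rw [if_pos (by omega)]
        by_cases h0 : β j = 0
        · simp [h0]
        · have h3 : (deg (dn j β) : ℝ) + 1 = deg β := by exact_mod_cast deg_dn j β h0
          rw [add_comm 1, h3]
          ring
  simp only [hX]
  have key := joint_pos (G := Bx E n m)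
    (fun j => ((xx E m j : BW n E) : W n E →ₗ[ℝ] W n E).restrict (xx_box E m j))
    (fun j => ((Dg (A j) : BW n E) : W n E →ₗ[ℝ] W n E).restrict (Dg_box E m (A j)))
    (fun j => (xx_symm E m j).restrict_invariant _)
    (fun j k => by
      ext1 x
      apply Subtype.ext
      exact congrArg (fun T : BW n E => T x.1) (xx_comm E m j k))
    (fun j k x => by
      apply Subtype.ext
      show (Dg (A j) * xx E m k : BW n E) x.1 = (xx E m k * Dg (A j) : BW n E) x.1
      unfold xx aa bb
      rw [mul_add, add_mul, Dg_Sh, Dg_Sh]) δ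
    (fun l x => by
      have := Dg_lower E A δ hδ0 hδ l x.1
      rw [Submodule.coe_norm, Submodule.coe_norm, AddSubmonoidClass.coe_finsetSum]
      exact this)
    ⟨v, hvm⟩
  simp only [Submodule.coe_norm, AddSubmonoidClass.coe_finsetSum] at key
  exact key

lemma pos_main (A : Fin n → E →L[ℝ] E) (δ : ℝ) (hδ0 : 0 < δ)
    (hδ : ∀ (l : Fin n → ℝ) (v : E), δ * (∑ j, l j ^ 2) * ‖v‖ ^ 2 ≤ ‖∑ j, l j • A j v‖ ^ 2)
    (u : W n E) :
    δ * ∑ j, ‖X' E j u‖ ^ 2 ≤ ‖∑ j, Dg (A j) (X' E j u)‖ ^ 2 := by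
  classical
  have hs := lp.hasSum_single (E := fun _ : Ix n => E) (p := 2) (by norm_num) u
  have h1 : Continuous (fun u : W n E => δ * ∑ j, ‖X' E j u‖ ^ 2) := by fun_prop
  have h2 : Continuous (fun u : W n E => ‖∑ j, Dg (A j) (X' E j u)‖ ^ 2) := by fun_prop
  refine le_of_tendsto_of_tendsto' ((h1.tendsto u).comp hs) ((h2.tendsto u).comp hs) (fun s => ?_)
  simp only [Function.comp]
  obtain ⟨m, hm⟩ : ∃ m, ∀ β ∈ s, deg β + 1 < m := by
    refine ⟨s.sup deg + 2, fun β hβ => ?_⟩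
    have := Finset.le_sup (f := deg) hβ
    omega
  refine pos_fin E A δ hδ0 hδ _ m (fun β hβ i => ?_)
  have hβs : β ∈ s := by
    by_contra hn
    apply hβ
    rw [lp.coeFn_sum, Finset.sum_apply]
    refine Finset.sum_eq_zero (fun b hb => ?_)
    rw [lp.single_apply_ne]
    rintro rfl
    exact hn hb
  have := hm β hβs
  have := le_deg i β
  omega

end Pos
end HR

set_option linter.unusedSectionVars false
namespace HR
open Module
open LinearMap (range ker)

section RingL
variable {R : Type*} [Ring R] {n : ℕ}

lemma ring_V (h2 : ∀ x y : R, x + x = y + y → x = y) (g y : Fin n → R)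
    (hgy : ∀ j k, Commute (g j) (y k)) (hy : ∀ j k, Commute (y j) (y k))
    (hg : ∀ j k, g j * g k + g k * g j = if j = k then 2 else 0) :
    (∑ j, g j * y j) * (∑ j, g j * y j) = ∑ j, y j * y j := by
  apply h2
  have e : ∀ j k, g j * y j * (g k * y k) = g j * g k * (y j * y k) := by
    intro j k
    have := (hgy k j).eq
    calc g j * y j * (g k * y k) = g j * (y j * g k) * y k := by noncomm_ring
      _ = _ := by rw [← this]; noncomm_ring
  have h1 : (∑ j, g j * y j) * (∑ j, g j * y j) = ∑ j, ∑ k, g j * g k * (y j * y k) := by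
    rw [Finset.sum_mul_sum]
    exact Finset.sum_congr rfl (fun j _ => Finset.sum_congr rfl (fun k _ => e j k))
  have h3 : (∑ j, g j * y j) * (∑ j, g j * y j) = ∑ j, ∑ k, g k * g j * (y j * y k) := by
    rw [h1, Finset.sum_comm]
    exact Finset.sum_congr rfl (fun j _ => Finset.sum_congr rfl (fun k _ => by rw [(hy k j).eq]))
  conv_lhs => lhs; rw [h1]
  conv_lhs => rhs; rw [h3]
  rw [← Finset.sum_add_distrib, ← Finset.sum_add_distrib]
  refine Finset.sum_congr rfl (fun j _ => ?_)
  rw [← Finset.sum_add_distrib]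
  rw [Finset.sum_eq_single j]
  · rw [← add_mul, hg, if_pos rfl, two_mul]
  · intro k _ hk
    rw [← add_mul, hg, if_neg (fun e => hk e.symm), zero_mul]
  · simp

lemma ring_F (h2 : ∀ x y : R, x + x = y + y → x = y) (g a s t : Fin n → R)
    (hgs : ∀ j k, Commute (g j) (s k)) (hgt : ∀ j k, Commute (g j) (t k))
    (has : ∀ j k, Commute (a j) (s k)) (hat : ∀ j k, Commute (a j) (t k))
    (hag : ∀ j k, Commute (a j) (g k))
    (hss : ∀ j k, Commute (s j) (s k)) (htt : ∀ j k, Commute (t j) (t k))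
    (hst : ∀ j k, Commute (s j) (t k))
    (hg : ∀ j k, g j * g k + g k * g j = if j = k then 2 else 0) :
    (∑ j, a j * (s j + t j) - ∑ j, g j * (s j - t j)) *
      (∑ j, g j * (s j - t j) + ∑ j, a j * (s j + t j)) =
      (∑ j, a j * (s j + t j)) * (∑ j, a j * (s j + t j)) - ∑ j, (s j - t j) * (s j - t j) ∧
    (∑ j, g j * (s j - t j) + ∑ j, a j * (s j + t j)) *
      (∑ j, a j * (s j + t j) - ∑ j, g j * (s j - t j)) =
      (∑ j, a j * (s j + t j)) * (∑ j, a j * (s j + t j)) - ∑ j, (s j - t j) * (s j - t j) := by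
  have hV := ring_V h2 g (fun j => s j - t j) (fun j k => (hgs j k).sub_right (hgt j k))
    (fun j k => ((hss j k).sub_left (hst k j).symm).sub_right ((hst j k).sub_left (htt j k))) hg
  have hUV : Commute (∑ j, a j * (s j + t j)) (∑ j, g j * (s j - t j)) := by
    refine Commute.sum_left _ _ _ (fun j _ => Commute.sum_right _ _ _ (fun k _ => ?_))
    refine Commute.mul_left ?_ ?_
    · exact (hag j k).mul_right ((has j k).sub_right (hat j k))
    · refine Commute.mul_right ?_ ?_
      · exact ((hgs k j).symm).add_left ((hgt k j).symm)
      · exact ((hss j k).sub_right (hst j k)).add_left ((hst k j).symm.sub_right (htt j k))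
  set U := ∑ j, a j * (s j + t j)
  set V := ∑ j, g j * (s j - t j)
  rw [← hV]
  constructor
  · rw [sub_mul, mul_add, mul_add, hUV.eq]; abel
  · rw [add_mul, mul_sub, mul_sub, hUV.eq]; abel

/-- formal oscillator computation -/
lemma ring_C (h2 : ∀ x y : R, x + x = y + y → x = y) (p q s t : Fin n → R) (c : R)
    (hc : ∀ j, Commute c (p j)) (hc' : ∀ j, Commute c (q j))
    (hps : ∀ j k, Commute (p j) (s k)) (hpt : ∀ j k, Commute (p j) (t k))
    (hqs : ∀ j k, Commute (q j) (s k)) (hqt : ∀ j k, Commute (q j) (t k))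
    (hss : ∀ j k, Commute (s j) (s k)) (htt : ∀ j k, Commute (t j) (t k))
    (hst : ∀ j k, s j * t k = t k * s j + if j = k then c else 0)
    (hpp : ∀ j k, p j * p k + p k * p j = 0) (hqq : ∀ j k, q j * q k + q k * q j = 0)
    (hpq : ∀ j k, p j * q k + q k * p j = if j = k then 1 else 0) :
    (∑ j, p j * s j + ∑ j, q j * t j) * (∑ j, p j * s j + ∑ j, q j * t j) =
      ∑ j, t j * s j + c * ∑ j, p j * q j := by
  have zero : ∀ (p s : Fin n → R), (∀ j k, Commute (p j) (s k)) → (∀ j k, Commute (s j) (s k)) →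
      (∀ j k, p j * p k + p k * p j = 0) → (∑ j, p j * s j) * (∑ j, p j * s j) = 0 := by
    intro p s hps hss hpp
    apply h2
    have e : ∀ j k, p j * s j * (p k * s k) = p j * p k * (s j * s k) := by
      intro j k
      have := (hps k j).eq
      calc p j * s j * (p k * s k) = p j * (s j * p k) * s k := by noncomm_ring
        _ = _ := by rw [← this]; noncomm_ring
    have h1 : (∑ j, p j * s j) * (∑ j, p j * s j) = ∑ j, ∑ k, p j * p k * (s j * s k) := by
      rw [Finset.sum_mul_sum]
      exact Finset.sum_congr rfl (fun j _ => Finset.sum_congr rfl (fun k _ => e j k))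
    have h3 : (∑ j, p j * s j) * (∑ j, p j * s j) = ∑ j, ∑ k, p k * p j * (s j * s k) := by
      rw [h1, Finset.sum_comm]
      exact Finset.sum_congr rfl (fun j _ => Finset.sum_congr rfl (fun k _ => by rw [(hss k j).eq]))
    conv_lhs => lhs; rw [h1]
    conv_lhs => rhs; rw [h3]
    rw [← Finset.sum_add_distrib, add_zero]
    refine Finset.sum_eq_zero (fun j _ => ?_)
    rw [← Finset.sum_add_distrib]
    exact Finset.sum_eq_zero (fun k _ => by rw [← add_mul, hpp, zero_mul])
  rw [mul_add, add_mul, add_mul, zero p s hps hss hpp, zero q t hqt htt hqq, zero_add, add_zero]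
  have e1 : (∑ j, q j * t j) * (∑ j, p j * s j) = ∑ j, ∑ k, q k * p j * (t k * s j) := by
    rw [Finset.sum_mul_sum, Finset.sum_comm]
    refine Finset.sum_congr rfl (fun k _ => Finset.sum_congr rfl (fun j _ => ?_))
    have := (hpt k j).eq
    calc q j * t j * (p k * s k) = q j * (t j * p k) * s k := by noncomm_ring
        _ = _ := by rw [← this]; noncomm_ring
  have e2 : (∑ j, p j * s j) * (∑ j, q j * t j) =
      ∑ j, ∑ k, (p j * q k * (t k * s j) + if j = k then c * (p j * q j) else 0) := by
    rw [Finset.sum_mul_sum]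
    refine Finset.sum_congr rfl (fun j _ => Finset.sum_congr rfl (fun k _ => ?_))
    have := (hqs k j).eq
    calc p j * s j * (q k * t k) = p j * (s j * q k) * t k := by noncomm_ring
        _ = p j * q k * (s j * t k) := by rw [← this]; noncomm_ring
        _ = _ := by
          rw [hst, mul_add]
          congr 1
          split_ifs with h
          · subst h
            exact ((hc j).mul_right (hc' j)).eq.symm
          · simp
  rw [e1, e2, ← Finset.sum_add_distrib, Finset.mul_sum, ← Finset.sum_add_distrib]
  refine Finset.sum_congr rfl (fun j _ => ?_)
  rw [← Finset.sum_add_distrib]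
  have : ∀ k, q k * p j * (t k * s j) + (p j * q k * (t k * s j) + if j = k then c * (p j * q j) else 0)
      = if j = k then t j * s j + c * (p j * q j) else 0 := by
    intro k
    rw [← add_assoc, ← add_mul, add_comm (q k * p j), hpq]
    split_ifs with h
    · subst h; simp
    · simp
  simp only [this]
  simp

lemma ring_Z (s t : Fin n → R) (hst : ∀ j, s j * t j = t j * s j) (h : ∑ j, t j * s j = 1) :
    ∑ j, (s j + t j) * (s j + t j) + ∑ j, -(s j - t j) * (s j - t j) - 4 = 0 := by
  rw [← Finset.sum_add_distrib]
  have h1 : ∀ j : Fin n, (s j + t j) * (s j + t j) + -(s j - t j) * (s j - t j) =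
      4 * (t j * s j) := by
    intro j
    have e : (s j + t j) * (s j + t j) + -(s j - t j) * (s j - t j) =
      2 * (s j * t j) + 2 * (t j * s j) := by noncomm_ring
    rw [e, hst]; noncomm_ring
  simp only [h1]
  rw [← Finset.mul_sum, h, mul_one, sub_self]
end RingL

section Fred
variable {n : ℕ} (E : Type*) [NormedAddCommGroup E] [InnerProductSpace ℝ E] [CompleteSpace E]

lemma eP_star {ι : Type*} (P : ι → Prop) : star (eP P E) = eP P E := by
  classical
  show ContinuousLinearMap.adjoint (eP P E) = eP P E
  have hg : Good (id : ι → ι) (fun β => if P β then (1 : ℝ) else 0) :=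
    ⟨⟨1, fun β => by beta_reduce; split_ifs <;> simp⟩, fun _ _ _ _ h => h⟩
  have h := Op_adj (1 : E →L[ℝ] E) id id _ _ hg hg
    (fun _ => rfl) (fun _ => rfl) (fun α _ => ⟨α, rfl⟩)
  rw [show ContinuousLinearMap.adjoint (1 : E →L[ℝ] E) = 1 from star_one (E →L[ℝ] E)] at h
  exact h

lemma odd_star {ι : Type*} (P : ι → Prop) {T : VV ι E →L[ℝ] VV ι E} (h : (grP P E).Odd T) :
    (grP P E).Odd (star T) := by
  have h1 : eP (fun β => ¬ P β) E * T = T * eP P E := h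
  have h2 := congrArg star h1
  rw [star_mul, star_mul, eP_star, eP_star] at h2
  have h3 : (grP P E).swap.Odd (star T) := h2.symm
  exact h3.swap

lemma star_Dg {ι : Type*} (M : E →L[ℝ] E) : star (Dg M : VV ι E →L[ℝ] VV ι E) = Dg (star M) := by
  show ContinuousLinearMap.adjoint (Dg M) = _
  unfold Dg
  rw [Op_adj M id id _ _ _ Good.id_one (fun _ => rfl) (fun _ => rfl) (fun α _ => ⟨α, rfl⟩)]
  rfl

variable [FiniteDimensional ℝ E]

abbrev QQ (n : ℕ) := (BW n E) ⧸ (Kid (W n E))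
noncomputable instance qqRing : Ring (QQ E n) := Ideal.Quotient.ring _
noncomputable instance qqSr : Semiring (QQ E n) := inferInstance
noncomputable instance qqNas : NonAssocSemiring (QQ E n) := inferInstance
noncomputable instance qqNunas : NonUnitalNonAssocSemiring (QQ E n) := inferInstance
noncomputable instance qqNur : NonUnitalNonAssocRing (QQ E n) := inferInstance
noncomputable instance qqNus : NonUnitalSemiring (QQ E n) := inferInstance
noncomputable instance qqAcg : AddCommGroup (QQ E n) := inferInstance
noncomputable instance qqAcm : AddCommMonoid (QQ E n) := inferInstance
noncomputable instance qqAg : AddGroup (QQ E n) := inferInstance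
noncomputable instance qqAm : AddMonoid (QQ E n) := inferInstance
noncomputable instance qqMul : Mul (QQ E n) := inferInstance
noncomputable instance qqAdd : Add (QQ E n) := inferInstance
noncomputable instance qqMon : Monoid (QQ E n) := inferInstance
noncomputable instance qqAzc : AddZeroClass (QQ E n) := inferInstance
noncomputable instance qqDst : Distrib (QQ E n) := inferInstance
noncomputable instance qqMzc : MulZeroClass (QQ E n) := inferInstance
noncomputable instance qqSg : Semigroup (QQ E n) := inferInstance
noncomputable abbrev pq : BW n E →+* QQ E n := Ideal.Quotient.mk (Kid (W n E))

lemma q_two (x y : QQ E n) (h : x + x = y + y) : x = y := by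
  have e : ∀ z : QQ E n, pq E ((1 / 2 : ℝ) • 1) * (z + z) = z := by
    intro z
    obtain ⟨z, rfl⟩ := Ideal.Quotient.mk_surjective z
    rw [← map_add, ← map_mul]
    congr 1
    rw [smul_mul_assoc, one_mul, ← two_smul ℝ, smul_smul]; norm_num
  rw [← e x, h, e y]

lemma q_eq {x y : BW n E} : pq E x = pq E y ↔ x - y ∈ Kid (W n E) := Ideal.Quotient.eq

lemma Dg_S (M : E →L[ℝ] E) (j : Fin n) : Commute (Dg M) (S E j) := Dg_Sh _ _ _ _
lemma Dg_T (M : E →L[ℝ] E) (j : Fin n) : Commute (Dg M) (T E j) := Dg_Sh _ _ _ _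

noncomputable def FF (γ A : Fin n → E →L[ℝ] E) : BW n E :=
  ∑ j, Dg (γ j) * (S E j - T E j) + ∑ j, Dg (A j) * (S E j + T E j)

lemma even_mul_odd' {M : E →L[ℝ] E} {Z : BW n E} (h : (grP par E).Odd Z) :
    (grP par E).Odd (Dg M * Z) := (even_Dg par M).mul_odd h

lemma odd_sub' {Z Z' : BW n E} (h : (grP par E).Odd Z) (h' : (grP par E).Odd Z') :
    (grP par E).Odd (Z - Z') := by rw [sub_eq_add_neg]; exact h.add h'.neg

lemma FF_odd (γ A : Fin n → E →L[ℝ] E) : (grP par E).Odd (FF E γ A) :=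
  (Gr.Odd.sum _ (fun j => even_mul_odd' E (odd_sub' E (S_odd E j) (T_odd E j)))).add
    (Gr.Odd.sum _ (fun j => even_mul_odd' E ((S_odd E j).add (T_odd E j))))

/-- the data of the main operator -/
structure Dat (γ A : Fin n → E →L[ℝ] E) : Prop where
  sA : ∀ j, star (A j) = A j
  gg : ∀ j k, γ j * γ k + γ k * γ j = if j = k then 2 else 0
  ga : ∀ j k, A j * γ k = γ k * A j
  low : ∃ δ : ℝ, 0 < δ ∧ ∀ (l : Fin n → ℝ) (v : E),
    δ * (∑ j, l j ^ 2) * ‖v‖ ^ 2 ≤ ‖∑ j, l j • A j v‖ ^ 2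

variable {E}
lemma Dat.neg {γ A : Fin n → E →L[ℝ] E} (h : Dat E γ A) : Dat E (fun j => - γ j) A :=
  ⟨h.sA, fun j k => by simpa using h.gg j k, fun j k => by simpa using h.ga j k, h.low⟩

lemma Dg_two : (Dg (2 : E →L[ℝ] E) : BW n E) = 2 := by
  have h : (2 : E →L[ℝ] E) = 1 + 1 := one_add_one_eq_two.symm
  rw [h, Dg_add, Dg_one]
  exact one_add_one_eq_two

lemma F_sq {γ A : Fin n → E →L[ℝ] E} (h : Dat E γ A) :
    pq E (FF E (fun j => - γ j) A) * pq E (FF E γ A) =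
      (∑ j, pq E (Dg (A j)) * (pq E (S E j) + pq E (T E j))) *
      (∑ j, pq E (Dg (A j)) * (pq E (S E j) + pq E (T E j))) -
      ∑ j, (pq E (S E j) - pq E (T E j)) * (pq E (S E j) - pq E (T E j)) ∧
    pq E (FF E γ A) * pq E (FF E (fun j => - γ j) A) =
      (∑ j, pq E (Dg (A j)) * (pq E (S E j) + pq E (T E j))) *
      (∑ j, pq E (Dg (A j)) * (pq E (S E j) + pq E (T E j))) -
      ∑ j, (pq E (S E j) - pq E (T E j)) * (pq E (S E j) - pq E (T E j)) := by
  have key := ring_F (q_two E) (fun j => pq E (Dg (γ j))) (fun j => pq E (Dg (A j)))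
    (fun j => pq E (S E j)) (fun j => pq E (T E j))
    (fun j k => (Dg_S E _ k).map (pq E)) (fun j k => (Dg_T E _ k).map (pq E))
    (fun j k => (Dg_S E _ k).map (pq E)) (fun j k => (Dg_T E _ k).map (pq E))
    (fun j k => by
      refine Commute.map ?_ (pq E)
      show Dg _ * Dg _ = Dg _ * Dg _
      rw [← Dg_mul, ← Dg_mul, h.ga])
    (fun j k => Commute.map (S_comm E j k) (pq E)) (fun j k => Commute.map (T_comm E j k) (pq E))
    (fun j k => by
      show pq E _ * pq E _ = pq E _ * pq E _
      rw [← map_mul, ← map_mul, q_eq]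
      exact ST_comm E j k)
    (fun j k => by
      rw [← map_mul, ← map_mul, ← map_add, ← Dg_mul, ← Dg_mul, ← Dg_add, h.gg]
      split_ifs
      · rw [Dg_two, map_ofNat]
      · rw [Dg_zero, map_zero])
  have e1 : pq E (FF E γ A) = ∑ j, pq E (Dg (γ j)) * (pq E (S E j) - pq E (T E j)) +
      ∑ j, pq E (Dg (A j)) * (pq E (S E j) + pq E (T E j)) := by
    unfold FF
    simp only [map_add, map_sum, map_mul, map_sub]
  have e2 : pq E (FF E (fun j => - γ j) A) = ∑ j, pq E (Dg (A j)) * (pq E (S E j) + pq E (T E j)) -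
      ∑ j, pq E (Dg (γ j)) * (pq E (S E j) - pq E (T E j)) := by
    unfold FF
    simp only [map_add, map_sum, map_mul, map_sub, Dg_neg, map_neg, neg_mul, Finset.sum_neg_distrib]
    abel
  rw [e1, e2]
  exact key

set_option maxHeartbeats 1000000 in
lemma G_exists {A : Fin n → E →L[ℝ] E} (sA : ∀ j, star (A j) = A j) (δ : ℝ) (hδ0 : 0 < δ)
    (hδ : ∀ (l : Fin n → ℝ) (v : E), δ * (∑ j, l j ^ 2) * ‖v‖ ^ 2 ≤ ‖∑ j, l j • A j v‖ ^ 2) :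
    ∃ g : (BW n E)ˣ, (grP par E).Even g.1 ∧ pq E g.1 =
      (∑ j, pq E (Dg (A j)) * (pq E (S E j) + pq E (T E j))) *
      (∑ j, pq E (Dg (A j)) * (pq E (S E j) + pq E (T E j))) -
      ∑ j, (pq E (S E j) - pq E (T E j)) * (pq E (S E j) - pq E (T E j)) := by
  set f' : BW n E := ∑ j, Dg (A j) * X' E j with hf'
  set Y : Fin n → BW n E := fun j => S E j - T E j with hY
  set Z : BW n E := ∑ j, star (X' E j) * X' E j + ∑ j, star (Y j) * Y j - (4 : ℝ) • 1 with hZ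
  set μ := min 1 δ with hμ
  have μ0 : 0 < μ := lt_min one_pos hδ0
  have μ1 : μ ≤ 1 := min_le_left _ _
  have μd : μ ≤ δ := min_le_right _ _
  set G : BW n E := star f' * f' + ∑ j, star (Y j) * Y j + (-μ) • Z with hG
  have X'odd : ∀ j : Fin n, (grP par E).Odd (X' E j) := fun j => (S_odd E j).add (T'_odd E j)
  have Yodd : ∀ j, (grP par E).Odd (Y j) := fun j => odd_sub' E (S_odd E j) (T_odd E j)
  have f'odd : (grP par E).Odd f' := Gr.Odd.sum _ (fun j => even_mul_odd' E (X'odd j))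
  have sq : ∀ {Q : BW n E}, (grP par E).Odd Q → (grP par E).Even (star Q * Q) :=
    fun h => (odd_star E par h).mul h
  have Geven : (grP par E).Even G := by
    refine ((sq f'odd).add (Gr.Even.sum _ (fun j => sq (Yodd j)))).add (Gr.Even.smul _ ?_)
    rw [hZ, sub_eq_add_neg, ← neg_smul]
    exact ((Gr.Even.sum _ (fun j => sq (X'odd j))).add (Gr.Even.sum _ (fun j => sq (Yodd j)))).add
      (Gr.Even.one.smul _)
  have hin : ∀ (Q : BW n E) (u : W n E), inner ℝ ((star Q * Q) u) u = ‖Q u‖ ^ 2 := by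
    intro Q u
    show inner ℝ (ContinuousLinearMap.adjoint Q (Q u)) u = _
    rw [ContinuousLinearMap.adjoint_inner_left, real_inner_self_eq_norm_sq]
  have coer : ∀ u, 4 * μ * ‖u‖ ^ 2 ≤ inner ℝ (G u) u := by
    intro u
    have e : inner ℝ (G u) u = ‖f' u‖ ^ 2 + ∑ j, ‖Y j u‖ ^ 2 - μ * (∑ j, ‖X' E j u‖ ^ 2 +
        ∑ j, ‖Y j u‖ ^ 2 - 4 * ‖u‖ ^ 2) := by
      rw [hG, hZ]
      simp only [_root_.add_apply, _root_.sub_apply, _root_.sum_apply, _root_.smul_apply,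
        inner_add_left, inner_sub_left, sum_inner, real_inner_smul_left, hin,
        one_apply_eq_self, real_inner_self_eq_norm_sq]
      ring
    rw [e]
    have h1 := pos_main E A δ hδ0 hδ u
    have e2 : ∑ j, Dg (A j) (X' E j u) = f' u := by
      rw [hf']; simp [_root_.sum_apply]
    rw [e2] at h1
    have h3 : 0 ≤ ∑ j, ‖X' E j u‖ ^ 2 := Finset.sum_nonneg (fun _ _ => by positivity)
    have h4 : 0 ≤ ∑ j, ‖Y j u‖ ^ 2 := Finset.sum_nonneg (fun _ _ => by positivity)
    nlinarith
  have Gu : IsUnit G := by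
    refine ContinuousLinearMap.isUnit_of_forall_le_norm_inner_map G (c := ⟨4 * μ, by positivity⟩)
      (by show (0:ℝ) < 4 * μ; positivity) (fun u => ?_)
    have := coer u
    calc ‖u‖ ^ 2 * (4 * μ) = 4 * μ * ‖u‖ ^ 2 := by ring
      _ ≤ _ := this
      _ ≤ _ := le_abs_self _
  obtain ⟨g, hg⟩ := Gu
  refine ⟨g, by rw [hg]; exact Geven, ?_⟩
  rw [hg]
  have sS : ∀ j : Fin n, star (S E j) = T E j := fun j => S_adj E j
  have sT : ∀ j : Fin n, star (T E j) = S E j := fun j => T_adj E j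
  have pT' : ∀ j : Fin n, pq E (T' E j) = pq E (T E j) := fun j => (q_eq E).2 (T'_T E j)
  have pT'2 : ∀ j : Fin n, pq E (star (T' E j)) = pq E (S E j) := fun j => by
    rw [q_eq, ← sT, ← star_sub]
    exact Kid.adj (T'_T E j)
  have pX : ∀ j : Fin n, pq E (X' E j) = pq E (S E j) + pq E (T E j) := fun j => by
    unfold X'; rw [map_add, pT']
  have pX2 : ∀ j : Fin n, pq E (star (X' E j)) = pq E (S E j) + pq E (T E j) := fun j => by
    unfold X'; rw [star_add, map_add, pT'2, sS, add_comm]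
  have pY : ∀ j, pq E (Y j) = pq E (S E j) - pq E (T E j) := fun j => by rw [hY, map_sub]
  have pY2 : ∀ j, pq E (star (Y j)) = -(pq E (S E j) - pq E (T E j)) := fun j => by
    rw [hY, star_sub, map_sub, sS, sT, neg_sub]
  have comm : ∀ j k : Fin n, pq E (S E j) * pq E (T E k) = pq E (T E k) * pq E (S E j) := by
    intro j k
    rw [← map_mul, ← map_mul, q_eq]; exact ST_comm E j k
  have pZ : pq E Z = 0 := by
    rw [hZ]
    simp only [map_sub, map_add, map_sum, map_mul, pX, pX2, pY, pY2]
    have h2 : ∑ j : Fin n, pq E (T E j) * pq E (S E j) = 1 := by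
      rw [← map_one (pq E), ← (q_eq E).2 (TS_one E (n := n)), map_sum]
      exact Finset.sum_congr rfl (fun j _ => (map_mul _ _ _).symm)
    have h3 : pq E ((4 : ℝ) • 1 : BW n E) = 4 := by
      rw [show (4 : ℝ) = ((4 : ℕ) : ℝ) by norm_num, Nat.cast_smul_eq_nsmul, map_nsmul, map_one]
      simp
    rw [h3]
    exact ring_Z _ _ (fun j => comm j j) h2
  have pZ' : pq E ((-μ) • Z) = 0 := by
    have : (-μ) • Z = ((-μ) • 1 : BW n E) * Z := by rw [smul_mul_assoc, one_mul]
    rw [this, map_mul, pZ, mul_zero]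
  have pf : pq E f' = ∑ j, pq E (Dg (A j)) * (pq E (S E j) + pq E (T E j)) := by
    rw [hf']; simp only [map_sum, map_mul, pX]
  have pf2 : pq E (star f') = ∑ j, pq E (Dg (A j)) * (pq E (S E j) + pq E (T E j)) := by
    rw [hf']; simp only [star_sum, star_mul, map_sum, map_mul, pX2, star_Dg, sA]
    refine Finset.sum_congr rfl (fun j _ => ?_)
    have a := (Dg_S E (A j) j).map (pq E)
    have b := (Dg_T E (A j) j).map (pq E)
    exact (a.add_right b).eq.symm
  rw [hG, map_add, pZ', add_zero, map_add, map_mul, pf, pf2, map_sum]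
  simp only [map_mul, pY, pY2, neg_mul, Finset.sum_neg_distrib]
  rw [sub_eq_add_neg]

/-- the main operator is Fredholm -/
lemma FF_main {γ A : Fin n → E →L[ℝ] E} (h : Dat E γ A) :
    (grP par E).OFr (FF E γ A) ∧
    ind ((grP par E).c10 (FF E (fun j => - γ j) A)) + ind ((grP par E).c01 (FF E γ A)) = 0 := by
  obtain ⟨δ, hδ0, hδ⟩ := h.low
  obtain ⟨g, hg, hg2⟩ := G_exists h.sA δ hδ0 hδ
  obtain ⟨f1, f2⟩ := F_sq h
  rw [← hg2, ← map_mul] at f1 f2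
  rw [q_eq] at f1 f2
  have key : ∀ γ : Fin n → E →L[ℝ] E, FF E (fun j => - γ j) A * FF E γ A - g.1 ∈ Kid (W n E) →
      FF E γ A * FF E (fun j => - γ j) A - g.1 ∈ Kid (W n E) → (grP par E).OFr (FF E γ A) := by
    intro γ f1 f2
    refine Gr.OFr.of_lr (L := g⁻¹.1 * FF E (fun j => - γ j) A)
      (R := FF E (fun j => - γ j) A * g⁻¹.1) (FF_odd E _ _) (hg.inv.mul_odd (FF_odd E _ _)) ?_ ?_
    · have := (Kid (W n E)).mul_mem_left g⁻¹.1 f1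
      rwa [mul_sub, Units.inv_mul, ← mul_assoc] at this
    · have := (Kid (W n E)).mul_mem_right g⁻¹.1 f2
      rwa [sub_mul, Units.mul_inv, mul_assoc] at this
  refine ⟨key γ f1 f2, ?_⟩
  refine Gr.OFr.ind_zero (key _ ?_ ?_) (key γ f1 f2) g hg f1
  · simpa using f2
  · simpa using f1

end Fred
end HR

set_option linter.unusedSectionVars false
namespace HR
open Module
open LinearMap (range ker)

section Nat
variable {ι : Type*} {E E' : Type*} [NormedAddCommGroup E] [InnerProductSpace ℝ E]
  [NormedAddCommGroup E'] [InnerProductSpace ℝ E']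

noncomputable def XPmap (P : ι → Prop) (M : E →L[ℝ] E') : XP P E →ₗ[ℝ] XP P E' :=
  LinearMap.restrict ((Dg M : VV ι E →L[ℝ] VV ι E') : VV ι E →ₗ[ℝ] VV ι E') (fun u hu β hβ => by
    show (Dg M u) β = 0
    rw [Dg_apply, hu β hβ, map_zero])

lemma XPmap_apply (P : ι → Prop) (M : E →L[ℝ] E') (u : XP P E) (β : ι) :
    (XPmap P M u).1 β = M (u.1 β) := Dg_apply M u.1 β

lemma XP_ext {P : ι → Prop} {u v : XP P E} (h : ∀ β, u.1 β = v.1 β) : u = v := by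
  apply Subtype.ext; ext β; exact h β

variable [CompleteSpace E] [CompleteSpace E']

lemma nat_aux (P : ι → Prop) (M : E →L[ℝ] E') (y : VV ι E) :
    XPmap P M (pP P y) = pP P (Dg M y) := by
  classical
  apply XP_ext
  intro β
  rw [XPmap_apply]
  show M ((eP P E y) β) = (eP P E' (Dg M y)) β
  rw [eP_apply, eP_apply, Dg_apply]
  split_ifs <;> simp

lemma nat01 (P : ι → Prop) (M : E →L[ℝ] E') {Θ : VV ι E →L[ℝ] VV ι E} {Θ' : VV ι E' →L[ℝ] VV ι E'}
    (h : ∀ u, Dg M (Θ u) = Θ' (Dg M u)) (u : XP P E) :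
    XPmap _ M ((grP P E).c01 Θ u) = (grP P E').c01 Θ' (XPmap P M u) := by
  show XPmap _ M (pP _ (Θ u.1)) = pP _ (Θ' (Dg M u.1))
  rw [nat_aux, h]

lemma nat10 (P : ι → Prop) (M : E →L[ℝ] E') {Θ : VV ι E →L[ℝ] VV ι E} {Θ' : VV ι E' →L[ℝ] VV ι E'}
    (h : ∀ u, Dg M (Θ u) = Θ' (Dg M u)) (u : XP _ E) :
    XPmap P M ((grP P E).c10 Θ u) = (grP P E').c10 Θ' (XPmap _ M u) := by
  show XPmap _ M (pP _ (Θ u.1)) = pP _ (Θ' (Dg M u.1))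
  rw [nat_aux, h]

noncomputable def XPequiv (P : ι → Prop) (M : E →L[ℝ] E') (M' : E' →L[ℝ] E)
    (h : ∀ x, M' (M x) = x) (h' : ∀ x, M (M' x) = x) : XP P E ≃ₗ[ℝ] XP P E' :=
  LinearEquiv.ofLinearMap (XPmap P M) (XPmap P M')
    (by ext1 u; apply XP_ext; intro β; show (XPmap P M (XPmap P M' u)).1 β = _
        rw [XPmap_apply, XPmap_apply, h']; rfl)
    (by ext1 u; apply XP_ext; intro β; show (XPmap P M' (XPmap P M u)).1 β = _
        rw [XPmap_apply, XPmap_apply, h]; rfl)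

noncomputable def XPcopies {κ : Type*} [Fintype κ] [DecidableEq κ] (P : ι → Prop)
    (pr : κ → E' →L[ℝ] E) (inc : κ → E →L[ℝ] E')
    (h : ∀ c d x, pr c (inc d x) = if c = d then x else 0) (h' : ∀ x, ∑ c, inc c (pr c x) = x) :
    XP P E' ≃ₗ[ℝ] (κ → XP P E) :=
  LinearEquiv.ofLinearMap (LinearMap.pi (fun c => XPmap P (pr c)))
    (∑ c, XPmap P (inc c) ∘ₗ LinearMap.proj c)
    (by
      apply LinearMap.ext
      intro w
      funext c
      apply XP_ext
      intro β
      show (XPmap P (pr c) ((∑ d, XPmap P (inc d) ∘ₗ LinearMap.proj d) w)).1 β = (w c).1 β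
      rw [LinearMap.sum_apply, map_sum]
      have : ∀ d, XPmap P (pr c) ((XPmap P (inc d) ∘ₗ LinearMap.proj d) w) =
          if c = d then w c else 0 := by
        intro d
        apply XP_ext
        intro β
        show (XPmap P (pr c) (XPmap P (inc d) (w d))).1 β = _
        rw [XPmap_apply, XPmap_apply, h]
        split_ifs with e
        · rw [e]
        · rfl
      simp only [this]
      simp)
    (by
      apply LinearMap.ext
      intro u
      apply XP_ext
      intro β
      show ((∑ d, XPmap P (inc d) ∘ₗ LinearMap.proj d) (fun c => XPmap P (pr c) u)).1 β = u.1 β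
      rw [LinearMap.sum_apply, AddSubmonoidClass.coe_finsetSum, lp.coeFn_sum, Finset.sum_apply]
      conv_rhs => rw [← h' (u.1 β)]
      refine Finset.sum_congr rfl (fun c _ => ?_)
      show (XPmap P (inc c) (XPmap P (pr c) u)).1 β = _
      rw [XPmap_apply, XPmap_apply])

lemma ind_copies01 {κ : Type*} [Fintype κ] [DecidableEq κ] (P : ι → Prop)
    (pr : κ → E' →L[ℝ] E) (inc : κ → E →L[ℝ] E')
    (h : ∀ c d x, pr c (inc d x) = if c = d then x else 0) (h' : ∀ x, ∑ c, inc c (pr c x) = x)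
    {Θ : VV ι E →L[ℝ] VV ι E} {Θ' : VV ι E' →L[ℝ] VV ι E'} (hΘ : Fr ((grP P E).c01 Θ))
    (hΘ' : Fr ((grP P E').c01 Θ'))
    (hc : ∀ c u, Dg (pr c) (Θ' u) = Θ (Dg (pr c) u)) :
    ind ((grP P E').c01 Θ') = Fintype.card κ * ind ((grP P E).c01 Θ) := by
  rw [← ind_pi κ hΘ]
  refine (ind_equiv (XPcopies P pr inc h h') (XPcopies _ pr inc h h') hΘ' ?_).2.symm
  intro v
  funext c
  exact nat01 P (pr c) (hc c) v

lemma ind_copies10 {κ : Type*} [Fintype κ] [DecidableEq κ] (P : ι → Prop)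
    (pr : κ → E' →L[ℝ] E) (inc : κ → E →L[ℝ] E')
    (h : ∀ c d x, pr c (inc d x) = if c = d then x else 0) (h' : ∀ x, ∑ c, inc c (pr c x) = x)
    {Θ : VV ι E →L[ℝ] VV ι E} {Θ' : VV ι E' →L[ℝ] VV ι E'} (hΘ : Fr ((grP P E).c10 Θ))
    (hΘ' : Fr ((grP P E').c10 Θ'))
    (hc : ∀ c u, Dg (pr c) (Θ' u) = Θ (Dg (pr c) u)) :
    ind ((grP P E').c10 Θ') = Fintype.card κ * ind ((grP P E).c10 Θ) := by
  rw [← ind_pi κ hΘ]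
  refine (ind_equiv (XPcopies _ pr inc h h') (XPcopies P pr inc h h') hΘ' ?_).2.symm
  intro v
  funext c
  exact nat10 P (pr c) (hc c) v
end Nat

section Ref
variable {n : ℕ} {E : Type*} [NormedAddCommGroup E] [InnerProductSpace ℝ E] [CompleteSpace E]
  [FiniteDimensional ℝ E]

variable (E) in
noncomputable def CC (e : Fin n → E →L[ℝ] E) : BW n E :=
  ∑ j, Dg (e j) * S E j + ∑ j, Dg (star (e j)) * T E j

structure CDat (e : Fin n → E →L[ℝ] E) : Prop where
  ee : ∀ j k, e j * e k + e k * e j = 0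
  es : ∀ j k, e j * star (e k) + star (e k) * e j = if j = k then 1 else 0

lemma CDat.ss {e : Fin n → E →L[ℝ] E} (h : CDat e) (j k : Fin n) :
    star (e j) * star (e k) + star (e k) * star (e j) = 0 := by
  have := congrArg star (h.ee k j)
  simpa using this

lemma CC_odd (e : Fin n → E →L[ℝ] E) : (grP par E).Odd (CC E e) :=
  (Gr.Odd.sum _ (fun j => (even_Dg par (e j)).mul_odd (S_odd E j))).add
    (Gr.Odd.sum _ (fun j => (even_Dg par _).mul_odd (T_odd E j)))

lemma CC_sq {e : Fin n → E →L[ℝ] E} (h : CDat e) : CC E e * CC E e - 1 ∈ Kid (W n E) := by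
  rw [← q_eq, map_mul]
  have key := ring_C (q_two E) (fun j => pq E (Dg (e j))) (fun j => pq E (Dg (star (e j))))
    (fun j => pq E (S E j)) (fun j => pq E (T E j)) 0 (fun _ => Commute.zero_left _)
    (fun _ => Commute.zero_left _)
    (fun j k => (Dg_S E _ k).map (pq E)) (fun j k => (Dg_T E _ k).map (pq E))
    (fun j k => (Dg_S E _ k).map (pq E)) (fun j k => (Dg_T E _ k).map (pq E))
    (fun j k => Commute.map (S_comm E j k) (pq E)) (fun j k => Commute.map (T_comm E j k) (pq E))
    (fun j k => by
      rw [ite_self, add_zero, ← map_mul, ← map_mul, q_eq]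
      exact ST_comm E j k)
    (fun j k => by
      rw [← map_mul, ← map_mul, ← map_add, ← Dg_mul, ← Dg_mul, ← Dg_add, h.ee, Dg_zero, map_zero])
    (fun j k => by
      rw [← map_mul, ← map_mul, ← map_add, ← Dg_mul, ← Dg_mul, ← Dg_add, h.ss, Dg_zero, map_zero])
    (fun j k => by
      rw [← map_mul, ← map_mul, ← map_add, ← Dg_mul, ← Dg_mul, ← Dg_add, h.es]
      split_ifs
      · rw [Dg_one, map_one]
      · rw [Dg_zero, map_zero])
  have e1 : pq E (CC E e) = ∑ j, pq E (Dg (e j)) * pq E (S E j) +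
      ∑ j, pq E (Dg (star (e j))) * pq E (T E j) := by
    unfold CC
    simp only [map_add, map_sum, map_mul]
  rw [e1, key, zero_mul, add_zero, ← (q_eq E).2 (TS_one E (n := n)), map_sum]
  exact Finset.sum_congr rfl (fun j _ => (map_mul _ _ _).symm)

lemma CC_OFr {e : Fin n → E →L[ℝ] E} (h : CDat e) : (grP par E).OFr (CC E e) :=
  ⟨CC_odd e, CC E e, CC_odd e, CC_sq h, CC_sq h⟩

lemma CC_ind0 {e : Fin n → E →L[ℝ] E} (h : CDat e) :
    ind ((grP par E).c10 (CC E e)) + ind ((grP par E).c01 (CC E e)) = 0 :=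
  Gr.OFr.ind_zero (CC_OFr h) (CC_OFr h) 1 Gr.Even.one (CC_sq h)

noncomputable def hh : ℕ → ℝ
  | 0 => 1
  | 1 => 1
  | (k + 2) => hh k * (√(k + 3) / √(k + 2))

lemma hh_pos : ∀ k, 0 < hh k
  | 0 => one_pos
  | 1 => one_pos
  | (k + 2) => by
    have := hh_pos k
    unfold hh
    positivity

noncomputable def fa (j : Fin n) : Module.End ℝ (Ix n → E) where
  toFun v β := √(β j + 1) • v (up j β)
  map_add' _ _ := by funext β; simp
  map_smul' c _ := by funext β; simp [smul_comm c]

noncomputable def fb (j : Fin n) : Module.End ℝ (Ix n → E) where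
  toFun v β := √(β j) • v (dn j β)
  map_add' _ _ := by funext β; simp
  map_smul' c _ := by funext β; simp [smul_comm c]

def fM (M : E →L[ℝ] E) : Module.End ℝ (Ix n → E) where
  toFun v β := M (v β)
  map_add' _ _ := by funext β; simp
  map_smul' c _ := by funext β; simp

lemma fa_apply (j : Fin n) (v : Ix n → E) (β : Ix n) : fa j v β = √(β j + 1) • v (up j β) := rfl
lemma fb_apply (j : Fin n) (v : Ix n → E) (β : Ix n) : fb j v β = √(β j) • v (dn j β) := rfl
lemma fM_apply (M : E →L[ℝ] E) (v : Ix n → E) (β : Ix n) : fM M v β = M (v β) := rfl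

lemma fa_comm (j k : Fin n) : Commute (fa j : Module.End ℝ (Ix n → E)) (fa k) := by
  by_cases hjk : j = k
  · rw [hjk]
  apply LinearMap.ext
  intro v
  funext β
  show fa j (fa k v) β = fa k (fa j v) β
  simp only [fa_apply, smul_smul, up_up k j]
  rw [up_ne (fun e => hjk e.symm), up_ne hjk, mul_comm]

lemma fb_comm (j k : Fin n) : Commute (fb j : Module.End ℝ (Ix n → E)) (fb k) := by
  by_cases hjk : j = k
  · rw [hjk]
  apply LinearMap.ext
  intro v
  funext β
  show fb j (fb k v) β = fb k (fb j v) β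
  simp only [fb_apply, smul_smul, dn_dn k j]
  rw [dn_ne (fun e => hjk e.symm), dn_ne hjk, mul_comm]

lemma fba (j : Fin n) (v : Ix n → E) (β : Ix n) : fb j (fa j v) β = (β j : ℝ) • v β := by
  simp only [fa_apply, fb_apply, smul_smul]
  by_cases h : β j = 0
  · simp [h]
  · rw [up_dn j β h, dn_same]
    congr 1
    have : ((β j - 1 : ℕ) : ℝ) + 1 = β j := by
      have : β j - 1 + 1 = β j := Nat.sub_add_cancel (Nat.one_le_iff_ne_zero.2 h)
      exact_mod_cast this
    rw [this]
    exact Real.mul_self_sqrt (by positivity)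

lemma fab (j k : Fin n) : (fa j : Module.End ℝ (Ix n → E)) * fb k =
    fb k * fa j + if j = k then 1 else 0 := by
  apply LinearMap.ext
  intro v
  funext β
  by_cases hjk : j = k
  · subst hjk
    rw [if_pos rfl]
    show fa j (fb j v) β = fb j (fa j v) β + v β
    rw [fba]
    simp only [fa_apply, fb_apply, smul_smul, dn_up, up_same]
    push_cast
    rw [Real.mul_self_sqrt (by positivity), add_smul, one_smul]
  · rw [if_neg hjk, add_zero]
    show fa j (fb k v) β = fb k (fa j v) β
    simp only [fa_apply, fb_apply, smul_smul]
    rw [up_dn_comm hjk, up_ne (fun e => hjk e.symm), dn_ne hjk, mul_comm]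

lemma CC_apply (e : Fin n → E →L[ℝ] E) (u : W n E) (β : Ix n) :
    (CC E e u) β = ∑ j, ws j β • e j (u (up j β)) + ∑ j, wt j β • star (e j) (u (dn j β)) := by
  unfold CC
  simp only [_root_.add_apply, _root_.sum_apply, lp.coeFn_add, lp.coeFn_sum, Pi.add_apply,
    Finset.sum_apply, mul_apply_eq_comp, Dg_apply, S_apply, T_apply, map_smul]

lemma CC_formal (e : Fin n → E →L[ℝ] E) (u : W n E) (hu : CC E e u = 0) :
    (∑ j, fM (e j) * fa j + ∑ j, fM (star (e j)) * fb j : Module.End ℝ (Ix n → E))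
      (fun β => (hh (deg β))⁻¹ • u β) = 0 := by
  funext β
  set v : Ix n → E := fun β => (hh (deg β))⁻¹ • u β with hv
  have huv : ∀ β, u β = hh (deg β) • v β := fun β => by
    rw [hv]; simp only [smul_smul]; rw [mul_inv_cancel₀ (hh_pos _).ne', one_smul]
  clear_value v
  have h0 : (CC E e u) β = 0 := by rw [hu]; rfl
  rw [CC_apply] at h0
  set c := hh (deg β + 1) / √(2 + deg β) with hc
  have c0 : c ≠ 0 := by
    have := hh_pos (deg β + 1)
    positivity
  have h1 : ∀ j, ws j β • e j (u (up j β)) = c • ((fM (e j) * fa j : Module.End ℝ (Ix n → E)) v β) := by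
    intro j
    show _ = c • e j (√(β j + 1) • v (up j β))
    rw [huv, deg_up, map_smul, map_smul, smul_smul, smul_smul]
    congr 1
    unfold ws; rw [hc]; ring
  have h2 : ∀ j, wt j β • star (e j) (u (dn j β)) =
      c • ((fM (star (e j)) * fb j : Module.End ℝ (Ix n → E)) v β) := by
    intro j
    show _ = c • star (e j) (√(β j) • v (dn j β))
    by_cases hj : β j = 0
    · simp [wt, hj]
    · rw [huv, map_smul, map_smul, smul_smul, smul_smul]
      congr 1
      have hd := deg_dn j β hj
      set d := deg (dn j β)
      unfold wt; rw [hc, ← hd]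
      have : hh (d + 1 + 1) = hh d * (√(d + 3) / √(d + 2)) := rfl
      rw [this]
      push_cast
      have e1 : (1 + ((d : ℝ) + 1)) = d + 2 := by ring
      have e2 : (2 + ((d : ℝ) + 1)) = d + 3 := by ring
      rw [e1, e2]
      have : √((d : ℝ) + 3) ≠ 0 := by positivity
      have : √((d : ℝ) + 2) ≠ 0 := by positivity
      field_simp
  simp only [h1, h2, ← Finset.smul_sum] at h0
  rw [← smul_add] at h0
  have := (smul_eq_zero.1 h0).resolve_left c0
  simp only [LinearMap.add_apply, LinearMap.sum_apply, Pi.add_apply, Finset.sum_apply] at this ⊢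
  exact this

lemma CC_ker {e : Fin n → E →L[ℝ] E} (h : CDat e) (u : W n E) (hu : CC E e u = 0) :
    (∀ β, β ≠ 0 → u β = 0) ∧ ∀ j, star (e j) (u 0) = 0 := by
  have h1 := CC_formal e u hu
  set v : Ix n → E := fun β => (hh (deg β))⁻¹ • u β with hv
  have huv : ∀ β, u β = hh (deg β) • v β := fun β => by
    rw [hv]; simp only [smul_smul]; rw [mul_inv_cancel₀ (hh_pos _).ne', one_smul]
  have h2 := congrArg (∑ j, fM (e j) * fa j + ∑ j, fM (star (e j)) * fb j :
    Module.End ℝ (Ix n → E)) h1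
  rw [map_zero, ← Module.End.mul_apply] at h2
  have fmm : ∀ M M' : E →L[ℝ] E, (fM M * fM M' : Module.End ℝ (Ix n → E)) = fM (M * M') :=
    fun M M' => rfl
  have fma : ∀ M M' : E →L[ℝ] E, (fM M + fM M' : Module.End ℝ (Ix n → E)) = fM (M + M') :=
    fun M M' => rfl
  have fm0 : (fM (0 : E →L[ℝ] E) : Module.End ℝ (Ix n → E)) = 0 := rfl
  have fm1 : (fM (1 : E →L[ℝ] E) : Module.End ℝ (Ix n → E)) = 1 := rfl
  have ca : ∀ (M : E →L[ℝ] E) (j : Fin n), Commute (fM M : Module.End ℝ (Ix n → E)) (fa j) := by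
    intro M j
    apply LinearMap.ext; intro v; funext β
    show M (√(β j + 1) • v (up j β)) = √(β j + 1) • M (v (up j β))
    rw [map_smul]
  have cb : ∀ (M : E →L[ℝ] E) (j : Fin n), Commute (fM M : Module.End ℝ (Ix n → E)) (fb j) := by
    intro M j
    apply LinearMap.ext; intro v; funext β
    show M (√(β j) • v (dn j β)) = √(β j) • M (v (dn j β))
    rw [map_smul]
  have key := ring_C (R := Module.End ℝ (Ix n → E)) (fun x y hxy => by
      have : (2 : ℝ) • x = (2 : ℝ) • y := by rw [two_smul, two_smul, hxy]
      exact smul_right_injective _ (two_ne_zero) this) (fun j => fM (e j)) (fun j => fM (star (e j)))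
    (fun j => fa j) (fun j => fb j) 1 (fun _ => Commute.one_left _) (fun _ => Commute.one_left _)
    (fun j k => ca _ _) (fun j k => cb _ _) (fun j k => ca _ _) (fun j k => cb _ _)
    fa_comm fb_comm fab
    (fun j k => by rw [fmm, fmm, fma, h.ee, fm0])
    (fun j k => by rw [fmm, fmm, fma, h.ss, fm0])
    (fun j k => by rw [fmm, fmm, fma, h.es]; split_ifs <;> rfl)
  rw [key, one_mul] at h2
  have h3 : ∀ β, (deg β : ℝ) • v β + ∑ j, e j (star (e j) (v β)) = 0 := by
    intro β
    have := congrFun h2 β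
    simp only [LinearMap.add_apply, LinearMap.sum_apply, Pi.add_apply, Finset.sum_apply] at this
    have e1 : ∑ j, (fb j * fa j : Module.End ℝ (Ix n → E)) v β = (deg β : ℝ) • v β := by
      unfold deg
      push_cast
      rw [Finset.sum_smul]
      exact Finset.sum_congr rfl (fun j _ => fba j v β)
    rw [e1] at this
    exact this
  have h4 : ∀ β, (deg β : ℝ) * ‖v β‖ ^ 2 + ∑ j, ‖star (e j) (v β)‖ ^ 2 = 0 := by
    intro β
    have := congrArg (fun z => inner ℝ z (v β)) (h3 β)
    simp only [inner_add_left, real_inner_smul_left, sum_inner, inner_zero_left,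
      real_inner_self_eq_norm_sq] at this
    rw [← this]
    congr 1
    refine Finset.sum_congr rfl (fun j _ => ?_)
    rw [← real_inner_self_eq_norm_sq]
    exact ContinuousLinearMap.adjoint_inner_right _ _ _
  have pos1 : ∀ β, 0 ≤ (deg β : ℝ) * ‖v β‖ ^ 2 := fun β => by positivity
  have pos2 : ∀ β, 0 ≤ ∑ j, ‖star (e j) (v β)‖ ^ 2 := fun β =>
    Finset.sum_nonneg (fun _ _ => by positivity)
  constructor
  · intro β hβ
    have hd : (deg β : ℝ) ≠ 0 := by
      intro h0
      apply hβ
      have : deg β = 0 := by exact_mod_cast h0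
      funext i
      have := le_deg i β
      show β i = 0
      omega
    have : (deg β : ℝ) * ‖v β‖ ^ 2 = 0 := by linarith [h4 β, pos1 β, pos2 β]
    have : ‖v β‖ ^ 2 = 0 := (mul_eq_zero.1 this).resolve_left hd
    rw [huv, norm_eq_zero.1 (pow_eq_zero_iff two_ne_zero |>.1 this), smul_zero]
  · intro j
    have : ∑ j, ‖star (e j) (v 0)‖ ^ 2 = 0 := by linarith [h4 0, pos1 0, pos2 0]
    rw [Finset.sum_eq_zero_iff_of_nonneg (fun _ _ => by positivity)] at this
    have := this j (Finset.mem_univ j)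
    rw [huv, map_smul, norm_eq_zero.1 (pow_eq_zero_iff two_ne_zero |>.1 this), smul_zero]

lemma par_zero : par (0 : Ix n) := by
  unfold par deg; simp

/-- index of the reference operator -/
lemma CC_ind {e : Fin n → E →L[ℝ] E} (h : CDat e) (w0 : E) (hw0 : w0 ≠ 0)
    (hw1 : ∀ j, star (e j) w0 = 0)
    (hw2 : ∀ w, (∀ j, star (e j) w = 0) → ∃ c : ℝ, c • w0 = w) :
    ind ((grP par E).c01 (CC E e)) = 1 ∧ ind ((grP par E).c10 (CC E e)) = -1 := by
  classical
  have hs := CC_ind0 h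
  set u0 : W n E := lp.single 2 (0 : Ix n) w0 with hu0
  have u00 : u0 0 = w0 := lp.single_apply_self _ _ _
  have u0n : ∀ β, β ≠ 0 → u0 β = 0 := fun β hβ => lp.single_apply_ne _ _ _ hβ
  have hu0P : u0 ∈ XP (par (n := n)) E := by
    intro β hβ
    apply u0n
    rintro rfl
    exact hβ par_zero
  have hCu0 : CC E e u0 = 0 := by
    ext β
    rw [CC_apply, lp.coeFn_zero, Pi.zero_apply]
    have a : ∀ j, u0 (up j β) = 0 := fun j => u0n _ (fun h => by
      have := congrFun h j
      simp at this)
    have b : ∀ j, star (e j) (u0 (dn j β)) = 0 := by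
      intro j
      by_cases hd : dn j β = 0
      · rw [hd, u00, hw1]
      · rw [u0n _ hd, map_zero]
    simp [a, b]
  have k1 : finrank ℝ (ker ((grP par E).c01 (CC E e))) = 1 := by
    rw [finrank_eq_one_iff']
    refine ⟨⟨⟨u0, hu0P⟩, ?_⟩, ?_, ?_⟩
    · rw [LinearMap.mem_ker]
      show pP _ (CC E e u0) = 0
      rw [hCu0, map_zero]
    · intro h0
      apply hw0
      have := congrArg (fun z => z.1.1 0) h0
      rw [← u00]
      exact this
    · rintro ⟨⟨u, hu⟩, hk⟩
      rw [LinearMap.mem_ker] at hk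
      have hCu : CC E e u = 0 := by
        have h1 : eP (fun β => ¬ par β) E (CC E e u) = CC E e (eP par E u) := by
          have := congrArg (fun T => T u) (CC_odd (n := n) e)
          exact this
        rw [show eP par E u = u from pP_mem par ⟨u, hu⟩] at h1
        rw [← h1]
        have := congrArg Subtype.val hk
        exact this
      obtain ⟨a, b⟩ := CC_ker h u hCu
      obtain ⟨c, hc⟩ := hw2 _ b
      refine ⟨c, ?_⟩
      apply Subtype.ext
      apply XP_ext
      intro β
      show c • u0 β = u β
      by_cases hβ : β = 0
      · rw [hβ, u00, hc]
      · rw [a β hβ, u0n β hβ, smul_zero]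
  have k2 : finrank ℝ (ker ((grP par E).c10 (CC E e))) = 0 := by
    have : ker ((grP par E).c10 (CC E e)) = ⊥ := by
      rw [LinearMap.ker_eq_bot']
      rintro ⟨u, hu⟩ hk
      have hCu : CC E e u = 0 := by
        have h1 : eP par E (CC E e u) = CC E e (eP (fun β => ¬ par β) E u) := by
          have := congrArg (fun T => T u) (CC_odd (n := n) e).swap
          exact this
        rw [show eP (fun β => ¬ par β) E u = u from pP_mem _ ⟨u, hu⟩] at h1
        rw [← h1]
        have := congrArg Subtype.val hk
        exact this
      obtain ⟨a, b⟩ := CC_ker h u hCu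
      apply XP_ext
      intro β
      show u β = 0
      by_cases hβ : β = 0
      · rw [hβ]
        exact hu 0 (not_not.2 par_zero)
      · exact a β hβ
    rw [this, finrank_bot]
  have k3 : 0 < finrank ℝ ((XP (par (n := n)) E) ⧸ range ((grP par E).c10 (CC E e))) := by
    have := (CC_OFr h).fr10.c
    have : Nontrivial ((XP (par (n := n)) E) ⧸ range ((grP par E).c10 (CC E e))) := by
      rw [Submodule.Quotient.nontrivial_iff]
      intro htop
      have hm : (⟨u0, hu0P⟩ : XP (par (n := n)) E) ∈ range ((grP par E).c10 (CC E e)) := by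
        rw [htop]; trivial
      obtain ⟨x, hx⟩ := hm
      have h0 : (eP par E (CC E e x.1)) 0 = w0 := by
        rw [← u00]
        exact congrArg (fun z => z.1 0) hx
      rw [eP_apply, if_pos par_zero, CC_apply] at h0
      have h1 : inner ℝ w0 w0 = 0 := by
        conv_lhs => lhs; rw [← h0]
        have : ∀ j : Fin n, wt j 0 = 0 := fun j => by simp [wt]
        simp only [this, zero_smul, Finset.sum_const_zero, add_zero, sum_inner, real_inner_smul_left]
        refine Finset.sum_eq_zero (fun j _ => ?_)
        have : inner ℝ (e j (x.1 (up j 0))) w0 = inner ℝ (x.1 (up j 0)) (star (e j) w0) :=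
          (ContinuousLinearMap.adjoint_inner_right _ _ _).symm
        rw [this, hw1, inner_zero_right, mul_zero]
      exact hw0 (inner_self_eq_zero.1 h1)
    exact finrank_pos
  unfold ind at hs ⊢
  rw [k1, k2] at hs
  rw [k1, k2]
  constructor <;> omega
end Ref
end HR

set_option linter.unusedSectionVars false
namespace HR
open Module
open LinearMap (range ker)

section Kron
open Matrix Kronecker
variable {κ κ' : Type*} [Fintype κ] [DecidableEq κ] [Fintype κ'] [DecidableEq κ']

abbrev EE (κ : Type*) := EuclideanSpace ℝ κ

noncomputable abbrev tE : Matrix κ κ ℝ ≃⋆ₐ[ℝ] (EE κ →L[ℝ] EE κ) :=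
  Matrix.toEuclideanCLM (𝕜 := ℝ) (n := κ)

noncomputable def PL : Matrix κ κ ℝ →+* (EE (κ × κ') →L[ℝ] EE (κ × κ')) where
  toFun M := tE (M ⊗ₖ (1 : Matrix κ' κ' ℝ))
  map_one' := by rw [one_kronecker_one, map_one]
  map_zero' := by rw [zero_kronecker, map_zero]
  map_mul' M N := by rw [← map_mul, ← mul_kronecker_mul, one_mul]
  map_add' M N := by rw [add_kronecker, map_add]

noncomputable def PR : Matrix κ' κ' ℝ →+* (EE (κ × κ') →L[ℝ] EE (κ × κ')) where
  toFun M := tE ((1 : Matrix κ κ ℝ) ⊗ₖ M)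
  map_one' := by rw [one_kronecker_one, map_one]
  map_zero' := by rw [kronecker_zero, map_zero]
  map_mul' M N := by rw [← map_mul, ← mul_kronecker_mul, one_mul]
  map_add' M N := by rw [kronecker_add, map_add]

lemma PL_star (M : Matrix κ κ ℝ) : star (PL M : EE (κ × κ') →L[ℝ] EE (κ × κ')) = PL Mᴴ := by
  show star (tE _) = tE _
  rw [← map_star, star_eq_conjTranspose, conjTranspose_kronecker, conjTranspose_one]

lemma PR_star (M : Matrix κ' κ' ℝ) : star (PR M : EE (κ × κ') →L[ℝ] EE (κ × κ')) = PR Mᴴ := by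
  show star (tE _) = tE _
  rw [← map_star, star_eq_conjTranspose, conjTranspose_kronecker, conjTranspose_one]

lemma PLR (M : Matrix κ κ ℝ) (N : Matrix κ' κ' ℝ) :
    Commute (PL M : EE (κ × κ') →L[ℝ] EE (κ × κ')) (PR N) := by
  show tE _ * tE _ = tE _ * tE _
  rw [← map_mul, ← map_mul, ← mul_kronecker_mul, ← mul_kronecker_mul]
  simp

noncomputable def prG {ι : Type*} [Fintype ι] (σ : ι ≃ κ × κ') (c : κ') : EE ι →L[ℝ] EE κ :=
  LinearMap.toContinuousLinearMap
    { toFun := fun v => WithLp.toLp 2 (fun i => v (σ.symm (i, c)))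
      map_add' := fun _ _ => rfl
      map_smul' := fun _ _ => rfl }

noncomputable def incG {ι : Type*} [Fintype ι] (σ : ι ≃ κ × κ') (c : κ') : EE κ →L[ℝ] EE ι :=
  LinearMap.toContinuousLinearMap
    { toFun := fun v => WithLp.toLp 2 (fun i => if (σ i).2 = c then v (σ i).1 else 0)
      map_add' := fun _ _ => by ext i; simp; split_ifs <;> simp
      map_smul' := fun _ _ => by ext i; simp }

lemma prG_apply {ι : Type*} [Fintype ι] (σ : ι ≃ κ × κ') (c : κ') (v : EE ι) (i : κ) :
    prG σ c v i = v (σ.symm (i, c)) := rfl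
lemma incG_apply {ι : Type*} [Fintype ι] (σ : ι ≃ κ × κ') (c : κ') (v : EE κ) (i : ι) :
    incG σ c v i = if (σ i).2 = c then v (σ i).1 else 0 := rfl

lemma pr_inc {ι : Type*} [Fintype ι] (σ : ι ≃ κ × κ') (c d : κ') (x : EE κ) :
    prG σ c (incG σ d x) = if c = d then x else 0 := by
  ext i
  rw [prG_apply, incG_apply, Equiv.apply_symm_apply]
  split_ifs <;> rfl

lemma inc_pr {ι : Type*} [Fintype ι] (σ : ι ≃ κ × κ') (x : EE ι) :
    ∑ c, incG σ c (prG σ c x) = x := by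
  ext i
  rw [WithLp.ofLp_sum, Finset.sum_apply]
  have : ∀ c, (incG σ c (prG σ c x)).ofLp i = if (σ i).2 = c then x i else 0 := by
    intro c
    rw [incG_apply]
    split_ifs with h
    · rw [prG_apply, ← h]; simp
    · rfl
  simp only [this]
  simp

lemma norm_pr {ι : Type*} [Fintype ι] (σ : ι ≃ κ × κ') (x : EE ι) :
    ‖x‖ ^ 2 = ∑ c, ‖prG σ c x‖ ^ 2 := by
  simp only [EuclideanSpace.real_norm_sq_eq, prG_apply]
  rw [Finset.sum_comm, ← Fintype.sum_prod_type', ← Equiv.sum_comp σ.symm]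

lemma pr_PL (M : Matrix κ κ ℝ) (c : κ') (v : EE (κ × κ')) :
    prG (Equiv.refl _) c (PL M v) = tE M (prG (Equiv.refl _) c v) := by
  ext i
  rw [prG_apply]
  show ((tE (M ⊗ₖ (1 : Matrix κ' κ' ℝ))) v).ofLp (i, c) = _
  rw [Matrix.ofLp_toEuclideanCLM, Matrix.ofLp_toEuclideanCLM]
  simp only [mulVec, dotProduct, kroneckerMap_apply, Fintype.sum_prod_type, prG_apply]
  refine Finset.sum_congr rfl (fun k _ => ?_)
  simp [Matrix.one_apply]

lemma pr_PR (M : Matrix κ' κ' ℝ) (c : κ) (v : EE (κ × κ')) :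
    prG (Equiv.prodComm _ _) c (PR M v) = tE M (prG (Equiv.prodComm _ _) c v) := by
  ext i
  rw [prG_apply]
  show ((tE ((1 : Matrix κ κ ℝ) ⊗ₖ M)) v).ofLp (c, i) = _
  rw [Matrix.ofLp_toEuclideanCLM, Matrix.ofLp_toEuclideanCLM]
  simp only [mulVec, dotProduct, kroneckerMap_apply, Fintype.sum_prod_type, prG_apply]
  rw [Finset.sum_comm]
  refine Finset.sum_congr rfl (fun k _ => ?_)
  simp [Matrix.one_apply]
end Kron

section Intw
variable {n : ℕ} {E E' : Type*} [NormedAddCommGroup E] [InnerProductSpace ℝ E] [CompleteSpace E]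
  [FiniteDimensional ℝ E] [NormedAddCommGroup E'] [InnerProductSpace ℝ E'] [CompleteSpace E']
  [FiniteDimensional ℝ E']

lemma FF_apply (γ A : Fin n → E →L[ℝ] E) (u : W n E) (β : Ix n) :
    (FF E γ A u) β = ∑ j, γ j (ws j β • u (up j β) - wt j β • u (dn j β)) +
      ∑ j, A j (ws j β • u (up j β) + wt j β • u (dn j β)) := by
  unfold FF
  simp only [_root_.add_apply, _root_.sub_apply, _root_.sum_apply, lp.coeFn_add, lp.coeFn_sub,
    lp.coeFn_sum, Pi.add_apply, Pi.sub_apply,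
    Finset.sum_apply, mul_apply_eq_comp, Dg_apply, S_apply, T_apply]

lemma FF_nat (M : E' →L[ℝ] E) {γ A : Fin n → E →L[ℝ] E} {γ' A' : Fin n → E' →L[ℝ] E'}
    (h1 : ∀ j v, M (γ' j v) = γ j (M v)) (h2 : ∀ j v, M (A' j v) = A j (M v)) (u : W n E') :
    Dg M (FF E' γ' A' u) = FF E γ A (Dg M u) := by
  ext β
  simp only [Dg_apply, FF_apply, map_add, map_sum, h1, h2, map_sub, map_smul]

lemma CC_nat (M : E' →L[ℝ] E) {e : Fin n → E →L[ℝ] E} {e' : Fin n → E' →L[ℝ] E'}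
    (h1 : ∀ j v, M (e' j v) = e j (M v)) (h2 : ∀ j v, M (star (e' j) v) = star (e j) (M v))
    (u : W n E') :
    Dg M (CC E' e' u) = CC E e (Dg M u) := by
  ext β
  simp only [Dg_apply, CC_apply, map_add, map_sum, h1, h2, map_smul]

lemma FC_comm {γ A e : Fin n → E →L[ℝ] E} (h1 : ∀ j k, Commute (γ j) (e k))
    (h2 : ∀ j k, Commute (A j) (e k)) (h3 : ∀ j k, Commute (γ j) (star (e k)))
    (h4 : ∀ j k, Commute (A j) (star (e k))) :
    FF E γ A * CC E e - CC E e * FF E γ A ∈ Kid (W n E) := by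
  rw [← q_eq, map_mul, map_mul]
  show Commute _ _
  have dd : ∀ {M N : E →L[ℝ] E}, Commute M N → Commute (pq E (Dg M : BW n E)) (pq E (Dg N)) := by
    intro M N h
    refine Commute.map ?_ (pq E)
    show Dg _ * Dg _ = Dg _ * Dg _
    rw [← Dg_mul, ← Dg_mul, h.eq]
  have ds : ∀ (M : E →L[ℝ] E) (j : Fin n), Commute (pq E (Dg M : BW n E)) (pq E (S E j)) :=
    fun M j => (Dg_S E M j).map (pq E)
  have dt : ∀ (M : E →L[ℝ] E) (j : Fin n), Commute (pq E (Dg M : BW n E)) (pq E (T E j)) :=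
    fun M j => (Dg_T E M j).map (pq E)
  have ss : ∀ j k : Fin n, Commute (pq E (S E j)) (pq E (S E k)) :=
    fun j k => Commute.map (S_comm E j k) (pq E)
  have tt : ∀ j k : Fin n, Commute (pq E (T E j)) (pq E (T E k)) :=
    fun j k => Commute.map (T_comm E j k) (pq E)
  have st : ∀ j k : Fin n, Commute (pq E (S E j)) (pq E (T E k)) := fun j k => by
    show pq E _ * pq E _ = pq E _ * pq E _
    rw [← map_mul, ← map_mul, q_eq]
    exact ST_comm E j k
  have main : ∀ (M N : E →L[ℝ] E) (Z Z' : QQ E n), Commute M N → Commute (pq E (Dg M)) Z' →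
      Commute (pq E (Dg N)) Z → Commute Z Z' → Commute (pq E (Dg M) * Z) (pq E (Dg N) * Z') :=
    fun M N Z Z' a b c d => Commute.mul_left ((dd a).mul_right b) (c.symm.mul_right d)
  have e1 : pq E (FF E γ A) = ∑ j, pq E (Dg (γ j)) * (pq E (S E j) - pq E (T E j)) +
      ∑ j, pq E (Dg (A j)) * (pq E (S E j) + pq E (T E j)) := by
    unfold FF
    simp only [map_add, map_sum, map_mul, map_sub]
  have e2 : pq E (CC E e) = ∑ j, pq E (Dg (e j)) * pq E (S E j) +
      ∑ j, pq E (Dg (star (e j))) * pq E (T E j) := by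
    unfold CC
    simp only [map_add, map_sum, map_mul]
  rw [e1, e2]
  refine Commute.add_left (Commute.add_right ?_ ?_) (Commute.add_right ?_ ?_)
  · refine Commute.sum_left _ _ _ (fun j _ => Commute.sum_right _ _ _ (fun k _ => ?_))
    exact main _ _ _ _ (h1 j k) (ds _ _) ((ds _ _).sub_right (dt _ _)) ((ss _ _).sub_left (st _ _).symm)
  · refine Commute.sum_left _ _ _ (fun j _ => Commute.sum_right _ _ _ (fun k _ => ?_))
    exact main _ _ _ _ (h3 j k) (dt _ _) ((ds _ _).sub_right (dt _ _)) ((st _ _).sub_left (tt _ _))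
  · refine Commute.sum_left _ _ _ (fun j _ => Commute.sum_right _ _ _ (fun k _ => ?_))
    exact main _ _ _ _ (h2 j k) (ds _ _) ((ds _ _).add_right (dt _ _)) ((ss _ _).add_left (st _ _).symm)
  · refine Commute.sum_left _ _ _ (fun j _ => Commute.sum_right _ _ _ (fun k _ => ?_))
    exact main _ _ _ _ (h4 j k) (dt _ _) ((ds _ _).add_right (dt _ _)) ((st _ _).add_left (tt _ _))
end Intw
end HR

set_option linter.unusedSectionVars false
set_option linter.unusedSimpArgs false
namespace HR
open Module
open LinearMap (range ker)
open Matrix Kronecker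

def s2P : Matrix (Fin 2) (Fin 2) ℝ := !![0,1;0,0]
def s2Z : Matrix (Fin 2) (Fin 2) ℝ := !![1,0;0,-1]

lemma s2_1 : s2P * s2P = 0 := by ext i j; fin_cases i <;> fin_cases j <;> simp [s2P]
lemma s2_2 : s2P * s2Z = - (s2Z * s2P) := by
  ext i j; fin_cases i <;> fin_cases j <;> simp [s2P, s2Z]
lemma s2_3 : s2Z * s2Z = 1 := by ext i j; fin_cases i <;> fin_cases j <;> simp [s2Z]
lemma s2_4 : s2P * s2Pᴴ + s2Pᴴ * s2P = 1 := by
  ext i j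
  simp only [Matrix.add_apply, Matrix.mul_apply, Fin.sum_univ_two, conjTranspose_apply]
  fin_cases i <;> fin_cases j <;> simp [s2P]
lemma s2_5 : s2Zᴴ = s2Z := by ext i j; fin_cases i <;> fin_cases j <;> simp [s2Z]
lemma s2_6 : s2Z * s2Pᴴ = - (s2Pᴴ * s2Z) := by
  ext i j; fin_cases i <;> fin_cases j <;> simp [s2P, s2Z, Matrix.mul_apply]

lemma refdata (n : ℕ) : ∃ (κ : Type) (_ : Fintype κ) (_ : DecidableEq κ)
    (e : Fin n → Matrix κ κ ℝ) (i0 : κ), Fintype.card κ = 2 ^ n ∧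
    (∀ j k, e j * e k + e k * e j = 0) ∧
    (∀ j k, e j * (e k)ᴴ + (e k)ᴴ * e j = if j = k then 1 else 0) ∧
    (∀ j, (e j)ᴴ *ᵥ Pi.single i0 1 = 0) ∧
    ∀ w : κ → ℝ, (∀ j, (e j)ᴴ *ᵥ w = 0) → ∀ i, i ≠ i0 → w i = 0 := by
  induction n with
  | zero =>
    exact ⟨Unit, inferInstance, inferInstance, fun j => j.elim0, (), by simp, fun j => j.elim0,
      fun j => j.elim0, fun j => j.elim0, fun w _ i hi => (hi rfl).elim⟩
  | succ n ih =>
    obtain ⟨κ, _, _, e, i0, hc, h1, h2, h3, h4⟩ := ih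
    refine ⟨κ × Fin 2, inferInstance, inferInstance,
      Fin.cases ((1 : Matrix κ κ ℝ) ⊗ₖ s2P) (fun j => e j ⊗ₖ s2Z), (i0, 1), ?_, ?_, ?_, ?_, ?_⟩
    · simp [hc, pow_succ]
    · intro j k
      refine Fin.cases ?_ (fun j => ?_) j <;> refine Fin.cases ?_ (fun k => ?_) k <;>
        simp only [Fin.cases_zero, Fin.cases_succ, ← mul_kronecker_mul, one_mul, mul_one, s2_1,
          s2_2, s2_3, kronecker_zero, add_zero]
      · rw [← kronecker_add, neg_add_cancel, kronecker_zero]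
      · rw [← kronecker_add, add_neg_cancel, kronecker_zero]
      · rw [← add_kronecker, h1, zero_kronecker]
    · intro j k
      refine Fin.cases ?_ (fun j => ?_) j <;> refine Fin.cases ?_ (fun k => ?_) k <;>
        simp only [Fin.cases_zero, Fin.cases_succ, conjTranspose_kronecker, conjTranspose_one,
          ← mul_kronecker_mul, one_mul, mul_one, s2_2, s2_3, s2_5, s2_6, if_true]
      · rw [← kronecker_add, s2_4, one_kronecker_one]
      · rw [← kronecker_add, neg_add_cancel, kronecker_zero, if_neg (Fin.succ_ne_zero k).symm]
      · rw [← kronecker_add, neg_add_cancel, kronecker_zero, if_neg (Fin.succ_ne_zero j)]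
      · rw [← add_kronecker, h2]
        by_cases h : j = k
        · simp [h]
        · simp [h]
    · intro j
      refine Fin.cases ?_ (fun j => ?_) j
      · ext ⟨i, a⟩
        simp only [Fin.cases_zero, Fin.cases_succ, conjTranspose_kronecker, conjTranspose_one]
        fin_cases a <;> simp [mulVec_single_one, s2P, Matrix.col]
      · ext ⟨i, a⟩
        have := congrFun (h3 j) i
        simp only [mulVec_single_one] at this
        simp only [Fin.cases_zero, Fin.cases_succ, conjTranspose_kronecker, conjTranspose_one,
          mulVec_single_one]
        simp only [Matrix.col_apply, kroneckerMap_apply] at this ⊢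
        rw [this]; simp
    · intro w hw
      have a0 : ∀ i, w (i, 0) = 0 := by
        intro i
        have := congrFun (hw 0) (i, 1)
        simpa [conjTranspose_kronecker, mulVec, dotProduct, Fintype.sum_prod_type, s2P,
          Matrix.one_apply] using this
      have a1 := h4 (fun i => w (i, 1)) (fun j => by
        ext i
        have := congrFun (hw j.succ) (i, 1)
        simpa [conjTranspose_kronecker, mulVec, dotProduct, Fintype.sum_prod_type, s2Z,
          Matrix.one_apply] using this)
      rintro ⟨i, a⟩ hi
      fin_cases a
      · exact a0 i
      · exact a1 i (fun h => hi (by simp [h]))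

variable {n : ℕ} {κ : Type*} [Fintype κ] [DecidableEq κ]

structure MDat (γ A : Fin n → Matrix κ κ ℝ) : Prop where
  sA : ∀ j, (A j)ᴴ = A j
  gg : ∀ j k, γ j * γ k + γ k * γ j = if j = k then 2 else 0
  ga : ∀ j k, A j * γ k = γ k * A j
  low : ∃ δ : ℝ, 0 < δ ∧ ∀ (l : Fin n → ℝ) (v : EE κ),
    δ * (∑ j, l j ^ 2) * ‖v‖ ^ 2 ≤ ‖∑ j, l j • tE (A j) v‖ ^ 2

lemma MDat.dat {γ A : Fin n → Matrix κ κ ℝ} (h : MDat γ A) :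
    Dat (EE κ) (fun j => tE (γ j)) (fun j => tE (A j)) where
  sA j := by rw [← map_star, star_eq_conjTranspose, h.sA]
  gg j k := by
    rw [← map_mul, ← map_mul, ← map_add, h.gg]
    split_ifs
    · rw [map_ofNat]
    · rw [map_zero]
  ga j k := by rw [← map_mul, ← map_mul, h.ga]
  low := h.low

lemma MDat.dat' {κ' : Type*} [Fintype κ'] [DecidableEq κ']
    {γ A : Fin n → Matrix κ κ ℝ} (h : MDat γ A) :
    Dat (EE (κ × κ')) (fun j => PL (γ j)) (fun j => PL (A j)) where
  sA j := by rw [PL_star, h.sA]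
  gg j k := by
    rw [← map_mul, ← map_mul, ← map_add, h.gg]
    split_ifs
    · rw [map_ofNat]
    · rw [map_zero]
  ga j k := by rw [← map_mul, ← map_mul, h.ga]
  low := by
    obtain ⟨δ, h0, h1⟩ := h.low
    refine ⟨δ, h0, fun l v => ?_⟩
    rw [norm_pr (Equiv.refl _) v, norm_pr (Equiv.refl _) (∑ j, _), Finset.mul_sum]
    refine Finset.sum_le_sum (fun c _ => ?_)
    rw [map_sum]
    simp only [map_smul, pr_PL]
    exact h1 l _

lemma four_dvd01 {E : Type*} [NormedAddCommGroup E] [InnerProductSpace ℝ E] [CompleteSpace E]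
    (Θ : W n E →L[ℝ] W n E) (I J : E →L[ℝ] E) (hI : I * I = -1)
    (hJ : J * J = -1) (hIJ : I * J = - (J * I)) (h1 : ∀ u, Dg I (Θ u) = Θ (Dg I u))
    (h2 : ∀ u, Dg J (Θ u) = Θ (Dg J u)) : 4 ∣ ind ((grP par E).c01 Θ) := by
  have ev : ∀ {M N : E →L[ℝ] E} (v : E), M (N v) = (M * N) v := fun v => rfl
  have hMM : ∀ (P : Ix n → Prop) (M : E →L[ℝ] E), M * M = -1 →
      (XPmap P M) ∘ₗ (XPmap P M) = - LinearMap.id := by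
    intro P M hM
    ext1 u; apply XP_ext; intro β
    show (XPmap P _ (XPmap P _ u)).1 β = - (u.1 β)
    rw [XPmap_apply, XPmap_apply, ev, hM]; rfl
  have hMN : ∀ (P : Ix n → Prop), (XPmap P I) ∘ₗ (XPmap P J) = - ((XPmap P J) ∘ₗ (XPmap P I)) := by
    intro P
    ext1 u; apply XP_ext; intro β
    show (XPmap P _ (XPmap P _ u)).1 β = - ((XPmap P _ (XPmap P _ u)).1 β)
    rw [XPmap_apply, XPmap_apply, XPmap_apply, XPmap_apply, ev, hIJ, ev]; rfl
  refine four_dvd_ind _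
    (XPmap _ I) (XPmap _ J) (hMM _ I hI) (hMM _ J hJ) (hMN _)
    (XPmap _ I) (XPmap _ J) (hMM _ I hI) (hMM _ J hJ) (hMN _) ?_ ?_
  · apply LinearMap.ext
    intro u
    exact (nat01 par I h1 u).symm
  · apply LinearMap.ext
    intro u
    exact (nat01 par J h2 u).symm

set_option maxHeartbeats 800000 in
theorem core {γ A : Fin n → Matrix κ κ ℝ} (h : MDat γ A) (Γ Γ' I J : Matrix κ κ ℝ)
    (hΓ : Γ * Γ' = 1) (hΓ' : Γ' * Γ = 1) (hΓγ : ∀ j, Γ * γ j = - (γ j * Γ))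
    (hΓA : ∀ j, Γ * A j = A j * Γ) (hI : I * I = -1) (hJ : J * J = -1) (hIJ : I * J = - (J * I))
    (hIγ : ∀ j, I * γ j = γ j * I) (hIA : ∀ j, I * A j = A j * I)
    (hJγ : ∀ j, J * γ j = γ j * J) (hJA : ∀ j, J * A j = A j * J) :
    4 * 2 ^ n ∣ Fintype.card κ := by
  obtain ⟨κ', _, _, e, i0, hc, he1, he2, he3, he4⟩ := refdata n
  obtain ⟨hF, hF0⟩ := FF_main h.dat
  obtain ⟨hF', -⟩ := FF_main (h.dat' (κ' := κ'))
  have hFn := (FF_main h.dat.neg).1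
  have ev : ∀ {M N : Matrix κ κ ℝ} (v : EE κ), tE M (tE N v) = tE (M * N) v := by
    intro M N v; rw [map_mul]; rfl
  -- Γ conjugation
  have hG := (ind_equiv (XPequiv (fun β => ¬ par β) (tE Γ) (tE Γ')
    (fun x => by rw [ev, hΓ', map_one]; rfl) (fun x => by rw [ev, hΓ, map_one]; rfl))
    (XPequiv par (tE Γ) (tE Γ')
    (fun x => by rw [ev, hΓ', map_one]; rfl) (fun x => by rw [ev, hΓ, map_one]; rfl))
    hF.fr10 (nat10 par (tE Γ) (FF_nat (γ := fun j => - tE (γ j)) (A := fun j => tE (A j)) (tE Γ)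
      (fun j v => by rw [ev, hΓγ, map_neg, map_mul]; rfl)
      (fun j v => by rw [ev, ev, hΓA])))).2
  rw [hG] at hF0
  -- quaternionic structure
  have h4 := four_dvd01 (FF (EE κ) (fun j => tE (γ j)) (fun j => tE (A j))) (tE I) (tE J)
    (by rw [← map_mul, hI, map_neg, map_one]) (by rw [← map_mul, hJ, map_neg, map_one])
    (by rw [← map_mul, hIJ, map_neg, map_mul])
    (FF_nat (tE I) (fun j v => by rw [ev, ev, hIγ]) (fun j v => by rw [ev, ev, hIA]))
    (FF_nat (tE J) (fun j v => by rw [ev, ev, hJγ]) (fun j v => by rw [ev, ev, hJA]))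
  -- reference operator
  have hs : ∀ j, star (tE (e j)) = tE (e j)ᴴ := by
    intro j; rw [← map_star, star_eq_conjTranspose]
  have hC : CDat (fun j => tE (e j)) := by
    refine ⟨fun j k => by rw [← map_mul, ← map_mul, ← map_add, he1, map_zero], fun j k => ?_⟩
    rw [hs, ← map_mul, ← map_mul, ← map_add, he2]
    split_ifs
    · rw [map_one]
    · rw [map_zero]
  have hC' : CDat (fun j => (PR (e j) : EE (κ × κ') →L[ℝ] EE (κ × κ'))) := by
    refine ⟨fun j k => by rw [← map_mul, ← map_mul, ← map_add, he1, map_zero], fun j k => ?_⟩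
    rw [PR_star, ← map_mul, ← map_mul, ← map_add, he2]
    split_ifs
    · rw [map_one]
    · rw [map_zero]
  have hCi := CC_ind hC (EuclideanSpace.single i0 (1 : ℝ))
    (by intro h0
        have := congrArg (fun w : EE κ' => w i0) h0
        simp at this)
    (fun j => by
      rw [hs]
      ext i
      rw [Matrix.ofLp_toEuclideanCLM]
      exact congrFun (he3 j) i)
    (fun w hw => ⟨w i0, by
      ext i
      by_cases hi : i = i0
      · subst hi; simp
      · have := he4 w (fun j => by
          have := hw j
          rw [hs] at this
          rw [← Matrix.ofLp_toEuclideanCLM, this]; rfl) i hi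
        simp [hi, this]⟩)
  have k1 := ind_copies01 par (fun c : κ' => prG (Equiv.refl (κ × κ')) c) (fun c => incG (Equiv.refl _) c)
    (fun c d x => pr_inc _ c d x) (inc_pr _) hF.fr01 hF'.fr01
    (fun c u => FF_nat _ (fun j v => pr_PL _ c v) (fun j v => pr_PL _ c v) u)
  have k2 := ind_copies10 par (fun c : κ' => prG (Equiv.refl (κ × κ')) c) (fun c => incG (Equiv.refl _) c)
    (fun c d x => pr_inc _ c d x) (inc_pr _) hF.fr10 hF'.fr10
    (fun c u => FF_nat _ (fun j v => pr_PL _ c v) (fun j v => pr_PL _ c v) u)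
  have k3 := ind_copies01 par (fun c : κ => prG (Equiv.prodComm κ κ') c)
    (fun c => incG (Equiv.prodComm κ κ') c)
    (fun c d x => pr_inc _ c d x) (inc_pr _) (CC_OFr hC).fr01 (CC_OFr hC').fr01
    (fun c u => CC_nat _ (fun j v => pr_PR _ c v)
      (fun j v => by rw [PR_star, hs]; exact pr_PR _ c v) u)
  have k4 := ind_copies10 par (fun c : κ => prG (Equiv.prodComm κ κ') c)
    (fun c => incG (Equiv.prodComm κ κ') c)
    (fun c d x => pr_inc _ c d x) (inc_pr _) (CC_OFr hC).fr10 (CC_OFr hC').fr10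
    (fun c u => CC_nat _ (fun j v => pr_PR _ c v)
      (fun j v => by rw [PR_star, hs]; exact pr_PR _ c v) u)
  have k5 := Gr.OFr.ind_eq hF' (CC_OFr hC') (CC_OFr hC') hF'
    (FC_comm (fun j k => PLR _ _) (fun j k => PLR _ _) (fun j k => by rw [PR_star]; exact PLR _ _)
      (fun j k => by rw [PR_star]; exact PLR _ _))
  rw [k1, k2, k3, k4, hCi.1, hCi.2, hc] at k5
  obtain ⟨q, hq⟩ := h4
  rw [hq] at k5 hF0
  have hi1 : ind ((grP par (EE κ)).c10 (FF (EE κ) (fun j => tE (γ j)) (fun j => tE (A j)))) = -(4 * q) := by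
    linarith
  rw [hi1] at k5
  have : ((4 * 2 ^ n : ℕ) : ℤ) ∣ (Fintype.card κ : ℤ) := ⟨q, by push_cast at k5 ⊢; linarith⟩
  exact_mod_cast this
end HR

set_option linter.unusedSectionVars false
set_option linter.unusedSimpArgs false
namespace HR
open Module
open LinearMap (range ker)
open Matrix Kronecker

section Nine
def nA : Fin 9 → Fin 16 := ![0, 1, 3, 5, 7, 9, 11, 13, 15]
def nB : Fin 9 → Fin 16 := ![1, 0, 3, 7, 13, 15, 9, 11, 5]
def nS (k : Fin 9) (i : Fin 16) : ℤ :=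
  let x := (nB k).val &&& i.val
  if (x + x / 2 + x / 4 + x / 8) % 2 = 0 then 1 else -1

lemma nine_sym : ∀ k : Fin 9, ∀ i : Fin 16, nS k (i ^^^ nA k) = nS k i ∧ i ^^^ nA k ^^^ nA k = i := by
  decide +kernel
lemma nine_sq : ∀ k : Fin 9, ∀ i : Fin 16, nS k i * nS k i = 1 := by
  decide +kernel
lemma nine_ac : ∀ j k : Fin 9, ∀ i : Fin 16, i ^^^ nA j ^^^ nA k = i ^^^ nA k ^^^ nA j ∧ (j ≠ k →
    nS j i * nS k (i ^^^ nA j) = - (nS k i * nS j (i ^^^ nA k))) := by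
  decide +kernel

def nM (k : Fin 9) : Matrix (Fin 16) (Fin 16) ℝ :=
  Matrix.of fun i l => if l = i ^^^ nA k then (nS k i : ℝ) else 0

lemma nM_apply (k : Fin 9) (i l : Fin 16) : nM k i l = if l = i ^^^ nA k then (nS k i : ℝ) else 0 := rfl

lemma nM_mul (j k : Fin 9) (i l : Fin 16) : (nM j * nM k) i l =
    if l = i ^^^ nA j ^^^ nA k then ((nS j i * nS k (i ^^^ nA j) : ℤ) : ℝ) else 0 := by
  rw [Matrix.mul_apply, Finset.sum_eq_single (i ^^^ nA j)]
  · rw [nM_apply, nM_apply, if_pos rfl]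
    split_ifs <;> simp
  · intro b _ hb
    rw [nM_apply, if_neg hb, zero_mul]
  · simp

lemma nM_sym (k : Fin 9) : (nM k)ᵀ = nM k := by
  ext i l
  rw [transpose_apply, nM_apply, nM_apply]
  by_cases h : l = i ^^^ nA k
  · subst h
    simp [(nine_sym k i).1, (nine_sym k i).2]
  · rw [if_neg h, if_neg]
    rintro rfl
    exact h (nine_sym k l).2.symm

lemma nM_ac (j k : Fin 9) : nM j * nM k + nM k * nM j = if j = k then 2 else 0 := by
  split_ifs with h
  · subst h
    have : nM j * nM j = 1 := by
      ext i l
      rw [nM_mul, (nine_sym j i).1, (nine_sym j i).2, nine_sq, Matrix.one_apply]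
      simp [eq_comm]
    rw [this, one_add_one_eq_two]
  · ext i l
    rw [Matrix.add_apply, nM_mul, nM_mul, (nine_ac j k i).1, (nine_ac j k i).2 h]
    split_ifs <;> simp
end Nine

section Two
def tX : Matrix (Fin 2) (Fin 2) ℝ := !![0,1;1,0]
def tZ : Matrix (Fin 2) (Fin 2) ℝ := !![1,0;0,-1]
def tM : Fin 2 → Matrix (Fin 2) (Fin 2) ℝ := ![tX, tZ]
lemma tM_sym (k : Fin 2) : (tM k)ᵀ = tM k := by
  ext i l
  fin_cases k <;> fin_cases i <;> fin_cases l <;> simp [tM, tX, tZ]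
lemma tM_ac (j k : Fin 2) : tM j * tM k + tM k * tM j = if j = k then 2 else 0 := by
  ext i l
  fin_cases j <;> fin_cases k <;> fin_cases i <;> fin_cases l <;>
    simp [tM, tX, tZ, Matrix.ofNat_apply, one_add_one_eq_two]
end Two

section Tens
variable {R : Type*} [Ring R] [Algebra ℝ R]
variable {κ μ : Type*} [Fintype κ] [DecidableEq κ] [Fintype μ] [DecidableEq μ]

def tens (A : Matrix κ κ R) (G : Matrix μ μ ℝ) : Matrix (κ × μ) (κ × μ) R :=
  Matrix.of fun x y => G x.2 y.2 • A x.1 y.1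

lemma tens_mul (A B : Matrix κ κ R) (G H : Matrix μ μ ℝ) :
    tens A G * tens B H = tens (A * B) (G * H) := by
  ext x y
  simp only [tens, Matrix.mul_apply, Matrix.of_apply, Fintype.sum_prod_type, smul_mul_smul_comm]
  rw [Finset.sum_smul_sum, Finset.sum_comm]

lemma tens_one : tens (1 : Matrix κ κ R) (1 : Matrix μ μ ℝ) = 1 := by
  ext ⟨i, a⟩ ⟨j, b⟩
  simp only [tens, Matrix.of_apply, Matrix.one_apply, Prod.mk.injEq]
  split_ifs <;> simp_all

lemma tens_addL (A B : Matrix κ κ R) (G : Matrix μ μ ℝ) : tens (A + B) G = tens A G + tens B G := by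
  ext x y; simp [tens]
lemma tens_addR (A : Matrix κ κ R) (G H : Matrix μ μ ℝ) : tens A (G + H) = tens A G + tens A H := by
  ext x y; simp [tens, add_smul]
lemma tens_zeroL (G : Matrix μ μ ℝ) : tens (0 : Matrix κ κ R) G = 0 := by
  ext x y; simp [tens]
lemma tens_zeroR (A : Matrix κ κ R) : tens A (0 : Matrix μ μ ℝ) = 0 := by
  ext x y; simp [tens]
lemma tens_negL (A : Matrix κ κ R) (G : Matrix μ μ ℝ) : tens (-A) G = - tens A G := by
  ext x y; simp [tens]
lemma tens_negR (A : Matrix κ κ R) (G : Matrix μ μ ℝ) : tens A (-G) = - tens A G := by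
  ext x y; simp [tens]

lemma tens_star [StarRing R] [StarModule ℝ R] (A : Matrix κ κ R) (G : Matrix μ μ ℝ) :
    (tens A G)ᴴ = tens Aᴴ Gᵀ := by
  ext x y; simp [tens, conjTranspose_apply]

/-- step family -/
def stepF {n p : ℕ} (A : Fin n → Matrix κ κ R) (G : Fin (p + 1) → Matrix μ μ ℝ) :
    Fin (n + p) → Matrix (κ × μ) (κ × μ) R :=
  Fin.addCases (fun i => tens (A i) (G (Fin.last p))) (fun k => tens 1 (G k.castSucc))

lemma two_half {M : Type*} [AddCommGroup M] [Module ℝ M] {a b : M} (h : a + a = b + b) : a = b := by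
  have : (2 : ℝ) • a = (2 : ℝ) • b := by rw [two_smul, two_smul, h]
  exact smul_right_injective M (two_ne_zero (α := ℝ)) this

lemma sq_one_of {S : Type*} [Ring S] [Algebra ℝ S] {a : S} (h : a * a + a * a = 2) : a * a = 1 :=
  two_half (by rw [h, one_add_one_eq_two])

lemma stepF_ac {n p : ℕ} {A : Fin n → Matrix κ κ R} {G : Fin (p + 1) → Matrix μ μ ℝ}
    (hA : ∀ j k, A j * A k + A k * A j = if j = k then 2 else 0)
    (hG : ∀ j k, G j * G k + G k * G j = if j = k then 2 else 0) (j k : Fin (n + p)) :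
    stepF A G j * stepF A G k + stepF A G k * stepF A G j = if j = k then 2 else 0 := by
  have t2 : (2 : Matrix (κ × μ) (κ × μ) R) = tens 1 1 + tens 1 1 := by
    rw [tens_one, one_add_one_eq_two]
  refine Fin.addCases (fun j => ?_) (fun j => ?_) j <;>
    refine Fin.addCases (fun k => ?_) (fun k => ?_) k <;>
    simp only [stepF, Fin.addCases_left, Fin.addCases_right, tens_mul, one_mul, mul_one]
  · rw [sq_one_of (by simpa using hG (Fin.last p) (Fin.last p)), ← tens_addL, hA]
    by_cases h : j = k
    · simp only [h, if_true]
      rw [t2, ← tens_addL, one_add_one_eq_two]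
    · rw [if_neg h, if_neg (fun h' => h (by simpa using h')), tens_zeroL]
  · rw [← tens_addR, hG, if_neg (Fin.castSucc_lt_last k).ne', tens_zeroR, if_neg]
    intro h
    have := congrArg Fin.val h
    simp at this; omega
  · rw [← tens_addR, hG, if_neg (Fin.castSucc_lt_last j).ne, tens_zeroR, if_neg]
    intro h
    have := congrArg Fin.val h
    simp at this; omega
  · rw [← tens_addR, hG]
    by_cases h : j = k
    · simp only [h, if_true]
      rw [t2, ← tens_addR, one_add_one_eq_two]
    · rw [if_neg (fun h' => h (by simpa using h')), if_neg (fun h' => h (by simpa using h')),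
        tens_zeroR]

end Tens

/-- Clifford families -/
def Cl (R : Type) [Ring R] [StarRing R] (n m : ℕ) : Prop :=
  ∃ (κ : Type) (_ : Fintype κ) (_ : DecidableEq κ) (A : Fin n → Matrix κ κ R),
    Fintype.card κ = m ∧ (∀ j, (A j)ᴴ = A j) ∧
    ∀ j k, A j * A k + A k * A j = if j = k then 2 else 0

section
variable {R : Type} [Ring R] [StarRing R] [Algebra ℝ R] [StarModule ℝ R] {n m : ℕ}

lemma Cl.step {p q : ℕ} (h : Cl R n m) (G : Fin (p + 1) → Matrix (Fin q) (Fin q) ℝ)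
    (hG : ∀ j k, G j * G k + G k * G j = if j = k then 2 else 0) (hG' : ∀ k, (G k)ᵀ = G k) :
    Cl R (n + p) (m * q) := by
  obtain ⟨κ, _, _, A, hc, hs, ha⟩ := h
  refine ⟨κ × Fin q, inferInstance, inferInstance, stepF A G, by simp [hc], ?_, stepF_ac ha hG⟩
  intro j
  refine Fin.addCases (fun j => ?_) (fun j => ?_) j <;>
    simp only [stepF, Fin.addCases_left, Fin.addCases_right, tens_star, hG', hs, conjTranspose_one]

lemma Cl.step2 (h : Cl R n m) : Cl R (n + 1) (m * 2) := h.step tM tM_ac tM_sym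
lemma Cl.step8 (h : Cl R n m) : Cl R (n + 8) (m * 16) := h.step nM nM_ac nM_sym

lemma Cl.copies (h : Cl R n m) (c : ℕ) : Cl R n (m * c) := by
  obtain ⟨κ, _, _, A, hc, hs, ha⟩ := h
  refine ⟨κ × Fin c, inferInstance, inferInstance, fun j => tens (A j) 1, by simp [hc], ?_, ?_⟩
  · intro j; rw [tens_star, hs, transpose_one]
  · intro j k
    rw [tens_mul, tens_mul, one_mul, ← tens_addL, ha]
    split_ifs
    · rw [← one_add_one_eq_two, tens_addL, tens_one, one_add_one_eq_two]
    · rw [tens_zeroL]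

lemma Cl.drop {n' : ℕ} (h : Cl R n m) (hn : n' ≤ n) : Cl R n' m := by
  obtain ⟨κ, _, _, A, hc, hs, ha⟩ := h
  refine ⟨κ, inferInstance, inferInstance, fun j => A (Fin.castLE hn j), hc, fun j => hs _, ?_⟩
  intro j k
  rw [ha]
  simp [Fin.ext_iff]
end

/-- Clifford data with chirality -/
def CG (n m : ℕ) : Prop :=
  ∃ (κ : Type) (_ : Fintype κ) (_ : DecidableEq κ) (γ : Fin n → Matrix κ κ ℝ)
    (Γ Γ' : Matrix κ κ ℝ), Fintype.card κ = m ∧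
    (∀ j k, γ j * γ k + γ k * γ j = if j = k then 2 else 0) ∧ Γ * Γ' = 1 ∧ Γ' * Γ = 1 ∧
    ∀ j, Γ * γ j = - (γ j * Γ)

lemma CG.step8 {n m : ℕ} (h : CG n m) : CG (n + 8) (m * 16) := by
  obtain ⟨κ, _, _, γ, Γ, Γ', hc, h1, h2, h3, h4⟩ := h
  have hsq : nM 8 * nM 8 = 1 := sq_one_of (by simpa using nM_ac 8 8)
  refine ⟨κ × Fin 16, inferInstance, inferInstance, stepF γ nM, tens Γ (nM 8), tens Γ' (nM 8),
    by simp [hc], stepF_ac h1 nM_ac, ?_, ?_, ?_⟩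
  · rw [tens_mul, h2, hsq, tens_one]
  · rw [tens_mul, h3, hsq, tens_one]
  · intro j
    refine Fin.addCases (fun j => ?_) (fun j => ?_) j <;>
    simp only [stepF, Fin.addCases_left, Fin.addCases_right, tens_mul, one_mul, mul_one]
    · rw [h4, tens_negL]; rfl
    · rw [← tens_negR]
      congr 1
      have := nM_ac 8 j.castSucc
      rw [if_neg (by have := Fin.castSucc_lt_last j; exact this.ne')] at this
      exact eq_neg_of_add_eq_zero_left this

lemma CG.drop {n m : ℕ} (h : CG (n + 1) m) : CG n m := by
  obtain ⟨κ, _, _, γ, Γ, Γ', hc, h1, h2, h3, h4⟩ := h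
  refine ⟨κ, inferInstance, inferInstance, fun j => γ j.castSucc, Γ, Γ', hc, ?_, h2, h3,
    fun j => h4 _⟩
  intro j k
  rw [h1]
  simp

lemma CG00 : CG 0 1 :=
  ⟨Unit, inferInstance, inferInstance, fun j => j.elim0, 1, 1, by simp, fun j => j.elim0,
    by simp, by simp, fun j => j.elim0⟩

lemma CG22 : CG 2 2 := by
  refine ⟨Fin 2, inferInstance, inferInstance, tM, !![0,1;-1,0], !![0,-1;1,0], by simp, tM_ac,
    ?_, ?_, ?_⟩
  · ext i l; fin_cases i <;> fin_cases l <;> simp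
  · ext i l; fin_cases i <;> fin_cases l <;> simp
  · intro j; ext i l; fin_cases j <;> fin_cases i <;> fin_cases l <;> simp [tM, tX, tZ]

lemma CG0 (k : ℕ) : CG (8 * k) (16 ^ k) := by
  induction k with
  | zero => exact CG00
  | succ k ih => exact ih.step8
lemma CG2 (k : ℕ) : CG (8 * k + 2) (16 ^ k * 2) := by
  induction k with
  | zero => exact CG22
  | succ k ih =>
    have := ih.step8
    rw [show 16 ^ (k + 1) * 2 = 16 ^ k * 2 * 16 by ring]
    exact this

lemma ClH1 : Cl (Quaternion ℝ) 1 1 := by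
  refine ⟨Unit, inferInstance, inferInstance, fun _ => 1, by simp, by simp, ?_⟩
  intro j k
  rw [Subsingleton.elim j k]; simp [one_add_one_eq_two]

noncomputable def qU (j : Fin 4) : Quaternion ℝ :=
  ⟨if j = 0 then 1 else 0, if j = 1 then 1 else 0, if j = 2 then 1 else 0, if j = 3 then 1 else 0⟩
lemma qU_re (j : Fin 4) : (qU j).re = if j = 0 then 1 else 0 := rfl
lemma qU_i (j : Fin 4) : (qU j).imI = if j = 1 then 1 else 0 := rfl
lemma qU_j (j : Fin 4) : (qU j).imJ = if j = 2 then 1 else 0 := rfl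
lemma qU_k (j : Fin 4) : (qU j).imK = if j = 3 then 1 else 0 := rfl

lemma qU1' (j k : Fin 4) : qU j * star (qU k) + qU k * star (qU j) =
    ((if j = k then 2 else 0 : ℝ) : Quaternion ℝ) := by
  apply Quaternion.ext <;>
    simp only [Quaternion.re_add, Quaternion.imI_add, Quaternion.imJ_add, Quaternion.imK_add,
      Quaternion.re_mul, Quaternion.imI_mul, Quaternion.imJ_mul, Quaternion.imK_mul,
      Quaternion.re_star, Quaternion.imI_star, Quaternion.imJ_star, Quaternion.imK_star,
      Quaternion.re_coe, Quaternion.imI_coe, Quaternion.imJ_coe, Quaternion.imK_coe,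
      qU_re, qU_i, qU_j, qU_k] <;>
    fin_cases j <;> fin_cases k <;> simp [one_add_one_eq_two]
lemma qU2' (j k : Fin 4) : star (qU j) * qU k + star (qU k) * qU j =
    ((if j = k then 2 else 0 : ℝ) : Quaternion ℝ) := by
  apply Quaternion.ext <;>
    simp only [Quaternion.re_add, Quaternion.imI_add, Quaternion.imJ_add, Quaternion.imK_add,
      Quaternion.re_mul, Quaternion.imI_mul, Quaternion.imJ_mul, Quaternion.imK_mul,
      Quaternion.re_star, Quaternion.imI_star, Quaternion.imJ_star, Quaternion.imK_star,
      Quaternion.re_coe, Quaternion.imI_coe, Quaternion.imJ_coe, Quaternion.imK_coe,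
      qU_re, qU_i, qU_j, qU_k] <;>
    fin_cases j <;> fin_cases k <;> simp [one_add_one_eq_two]
lemma qU1 (j k : Fin 4) : qU j * star (qU k) + qU k * star (qU j) = if j = k then 2 else 0 := by
  rw [qU1']
  by_cases h : j = k
  · rw [if_pos h, if_pos h]; exact map_ofNat (algebraMap ℝ (Quaternion ℝ)) 2
  · rw [if_neg h, if_neg h]; exact map_zero (algebraMap ℝ (Quaternion ℝ))
lemma qU2 (j k : Fin 4) : star (qU j) * qU k + star (qU k) * qU j = if j = k then 2 else 0 := by
  rw [qU2']
  by_cases h : j = k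
  · rw [if_pos h, if_pos h]; exact map_ofNat (algebraMap ℝ (Quaternion ℝ)) 2
  · rw [if_neg h, if_neg h]; exact map_zero (algebraMap ℝ (Quaternion ℝ))

noncomputable def qO (q : Quaternion ℝ) : Matrix (Fin 2) (Fin 2) (Quaternion ℝ) := !![0, q; star q, 0]
noncomputable def qZ : Matrix (Fin 2) (Fin 2) (Quaternion ℝ) := !![1, 0; 0, -1]

lemma ClH5 : Cl (Quaternion ℝ) 5 2 := by
  refine ⟨Fin 2, inferInstance, inferInstance, Fin.cases qZ (fun j => qO (qU j)), by simp, ?_, ?_⟩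
  · intro j
    refine Fin.cases ?_ (fun j => ?_) j
    · ext1 i l
      fin_cases i <;> fin_cases l <;> simp [qZ, conjTranspose_apply]
    · ext1 i l
      fin_cases i <;> fin_cases l <;> simp [qO, conjTranspose_apply]
  · intro j k
    refine Fin.cases ?_ (fun j => ?_) j <;> refine Fin.cases ?_ (fun k => ?_) k
    · ext1 i l
      fin_cases i <;> fin_cases l <;> simp [qZ, Matrix.ofNat_apply, one_add_one_eq_two]
    · rw [if_neg (Fin.succ_ne_zero k).symm]
      ext1 i l
      fin_cases i <;> fin_cases l <;> simp [qZ, qO, Matrix.ofNat_apply]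
    · rw [if_neg (Fin.succ_ne_zero j)]
      ext1 i l
      fin_cases i <;> fin_cases l <;> simp [qZ, qO, Matrix.ofNat_apply]
    · have h1 := qU1 j k
      have h2 := qU2 j k
      simp only [Fin.cases_succ, Fin.succ_inj]
      by_cases h : j = k
      · rw [if_pos h] at h1 h2 ⊢
        ext1 i l
        fin_cases i <;> fin_cases l <;> simp [qO, Matrix.ofNat_apply, h1, h2]
      · rw [if_neg h] at h1 h2 ⊢
        ext1 i l
        fin_cases i <;> fin_cases l <;> simp [qO, Matrix.ofNat_apply, h1, h2]
end HR

set_option linter.unusedSectionVars false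
set_option linter.unusedSimpArgs false
namespace HR
open Module
open LinearMap (range ker)
open Matrix Kronecker

lemma low_of {n : ℕ} {E : Type*} [NormedAddCommGroup E] [InnerProductSpace ℝ E]
    [FiniteDimensional ℝ E] (A : Fin n → E →L[ℝ] E)
    (h : ∀ l : Fin n → ℝ, l ≠ 0 → IsUnit (∑ j, l j • A j)) :
    ∃ δ : ℝ, 0 < δ ∧ ∀ (l : Fin n → ℝ) (v : E),
      δ * (∑ j, l j ^ 2) * ‖v‖ ^ 2 ≤ ‖∑ j, l j • A j v‖ ^ 2 := by
  have hcomp : IsCompact (Metric.sphere (0 : EuclideanSpace ℝ (Fin n)) 1 ×ˢ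
      Metric.sphere (0 : E) 1) := (isCompact_sphere _ _).prod
        (by have := FiniteDimensional.proper ℝ E; exact isCompact_sphere _ _)
  have hcont : ContinuousOn (fun p : EuclideanSpace ℝ (Fin n) × E => ‖∑ j, p.1 j • A j p.2‖)
      (Metric.sphere (0 : EuclideanSpace ℝ (Fin n)) 1 ×ˢ Metric.sphere (0 : E) 1) := by
    apply Continuous.continuousOn
    fun_prop
  obtain ⟨c, hc0, hc⟩ := hcomp.exists_forall_le' hcont (a := 0) (by
    rintro ⟨l, v⟩ ⟨hl, hv⟩
    simp only [mem_sphere_zero_iff_norm] at hl hv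
    have hl0 : (l : Fin n → ℝ) ≠ 0 := by
      intro h0
      have : l = 0 := by ext i; exact congrFun h0 i
      rw [this, norm_zero] at hl
      exact zero_ne_one hl
    obtain ⟨u, hu⟩ := h l hl0
    rw [norm_pos_iff]
    intro h0
    have h1 : u.1 v = 0 := by rw [hu, _root_.sum_apply]; exact h0
    have h2 : (u⁻¹.1 * u.1) v = 0 := by
      show u⁻¹.1 (u.1 v) = 0
      rw [h1, map_zero]
    rw [Units.inv_mul] at h2
    have h3 : v = 0 := h2
    rw [h3, norm_zero] at hv
    exact zero_ne_one hv)
  refine ⟨c ^ 2, by positivity, fun l v => ?_⟩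
  set L : EuclideanSpace ℝ (Fin n) := WithLp.toLp 2 l with hL
  have hn : ∑ j, l j ^ 2 = ‖L‖ ^ 2 := by rw [EuclideanSpace.real_norm_sq_eq]
  rw [hn]
  by_cases hL0 : L = 0
  · rw [hL0, norm_zero]; simp only [ne_eq, OfNat.ofNat_ne_zero, not_false_eq_true, zero_pow,
      mul_zero, zero_mul]; positivity
  by_cases hv0 : v = 0
  · rw [hv0, norm_zero]; simp only [ne_eq, OfNat.ofNat_ne_zero, not_false_eq_true, zero_pow,
      mul_zero, zero_mul]; positivity
  have hLp := norm_pos_iff.mpr hL0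
  have hvp := norm_pos_iff.mpr hv0
  have key := hc (‖L‖⁻¹ • L, ‖v‖⁻¹ • v) ⟨by
    rw [mem_sphere_zero_iff_norm, norm_smul, norm_inv, norm_norm, inv_mul_cancel₀ hLp.ne'], by
    rw [mem_sphere_zero_iff_norm, norm_smul, norm_inv, norm_norm, inv_mul_cancel₀ hvp.ne']⟩
  have e : ∑ j, (‖L‖⁻¹ • L) j • A j (‖v‖⁻¹ • v) = (‖L‖⁻¹ * ‖v‖⁻¹) • ∑ j, l j • A j v := by
    rw [Finset.smul_sum]
    refine Finset.sum_congr rfl (fun j _ => ?_)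
    rw [map_smul, smul_smul, smul_smul]
    congr 1
    show ‖L‖⁻¹ * l j * ‖v‖⁻¹ = _
    ring
  simp only [e] at key
  rw [norm_smul, norm_mul, norm_inv, norm_inv, norm_norm, norm_norm] at key
  have : c * (‖L‖ * ‖v‖) ≤ ‖∑ j, l j • A j v‖ := by
    calc c * (‖L‖ * ‖v‖) ≤ ‖L‖⁻¹ * ‖v‖⁻¹ * ‖∑ j, l j • A j v‖ * (‖L‖ * ‖v‖) := by gcongr
      _ = _ := by field_simp
  calc c ^ 2 * ‖L‖ ^ 2 * ‖v‖ ^ 2 = (c * (‖L‖ * ‖v‖)) ^ 2 := by ring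
    _ ≤ _ := by gcongr

def lamF (q : Quaternion ℝ) : Matrix (Fin 4) (Fin 4) ℝ :=
  !![q.re, -q.imI, -q.imJ, -q.imK; q.imI, q.re, -q.imK, q.imJ; q.imJ, q.imK, q.re, -q.imI;
    q.imK, -q.imJ, q.imI, q.re]

def lam : Quaternion ℝ →+* Matrix (Fin 4) (Fin 4) ℝ where
  toFun := lamF
  map_one' := by
    have a1 : (1 : Quaternion ℝ).re = 1 := rfl
    have a2 : (1 : Quaternion ℝ).imI = 0 := rfl
    have a3 : (1 : Quaternion ℝ).imJ = 0 := rfl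
    have a4 : (1 : Quaternion ℝ).imK = 0 := rfl
    unfold lamF
    rw [a1, a2, a3, a4]
    ext i j; fin_cases i <;> fin_cases j <;> simp
  map_zero' := by
    have a1 : (0 : Quaternion ℝ).re = 0 := rfl
    have a2 : (0 : Quaternion ℝ).imI = 0 := rfl
    have a3 : (0 : Quaternion ℝ).imJ = 0 := rfl
    have a4 : (0 : Quaternion ℝ).imK = 0 := rfl
    unfold lamF
    rw [a1, a2, a3, a4]
    ext i j; fin_cases i <;> fin_cases j <;> simp
  map_mul' p q := by
    ext i j; fin_cases i <;> fin_cases j <;>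
      simp [lamF, Matrix.mul_apply, Fin.sum_univ_four] <;> ring
  map_add' p q := by
    ext i j; fin_cases i <;> fin_cases j <;> simp [lamF] <;> ring

lemma lam_star (q : Quaternion ℝ) : lam (star q) = (lam q)ᵀ := by
  ext i j; show lamF _ i j = lamF _ j i; fin_cases i <;> fin_cases j <;> simp [lamF]
lemma lam_smul (r : ℝ) (q : Quaternion ℝ) : lam (r • q) = r • lam q := by
  ext i j; show lamF _ i j = r * lamF _ i j; fin_cases i <;> fin_cases j <;> simp [lamF]

def Ri : Matrix (Fin 4) (Fin 4) ℝ := !![0,-1,0,0;1,0,0,0;0,0,0,1;0,0,-1,0]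
def Rj : Matrix (Fin 4) (Fin 4) ℝ := !![0,0,-1,0;0,0,0,-1;1,0,0,0;0,1,0,0]
lemma Ri_sq : Ri * Ri = -1 := by
  ext i j; fin_cases i <;> fin_cases j <;> simp [Ri, Matrix.mul_apply, Fin.sum_univ_four]
lemma Rj_sq : Rj * Rj = -1 := by
  ext i j; fin_cases i <;> fin_cases j <;> simp [Rj, Matrix.mul_apply, Fin.sum_univ_four]
lemma Rij : Ri * Rj = -(Rj * Ri) := by
  ext i j; fin_cases i <;> fin_cases j <;> simp [Ri, Rj, Matrix.mul_apply, Fin.sum_univ_four]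
lemma Ri_lam (q : Quaternion ℝ) : Ri * lam q = lam q * Ri := by
  show Ri * lamF q = lamF q * Ri
  ext i j; fin_cases i <;> fin_cases j <;> simp [Ri, lamF, Matrix.mul_apply, Fin.sum_univ_four]
lemma Rj_lam (q : Quaternion ℝ) : Rj * lam q = lam q * Rj := by
  show Rj * lamF q = lamF q * Rj
  ext i j; fin_cases i <;> fin_cases j <;> simp [Rj, lamF, Matrix.mul_apply, Fin.sum_univ_four]

section
variable {N : ℕ}
/-- realification of quaternionic matrices -/
noncomputable def Phi : Matrix (Fin N) (Fin N) (Quaternion ℝ) →+* Matrix (Fin N × Fin 4) (Fin N × Fin 4) ℝ :=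
  ((Matrix.compRingEquiv (Fin N) (Fin 4) ℝ) : _ →+* _).comp (lam.mapMatrix)

lemma Phi_apply (M : Matrix (Fin N) (Fin N) (Quaternion ℝ)) (x y : Fin N × Fin 4) :
    Phi M x y = lam (M x.1 y.1) x.2 y.2 := rfl

lemma Phi_star (M : Matrix (Fin N) (Fin N) (Quaternion ℝ)) : (Phi M)ᴴ = Phi Mᴴ := by
  ext x y
  rw [conjTranspose_apply, Phi_apply, Phi_apply, conjTranspose_apply, lam_star]
  rfl

lemma Phi_smul (r : ℝ) (M : Matrix (Fin N) (Fin N) (Quaternion ℝ)) : Phi (r • M) = r • Phi M := by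
  ext x y
  rw [Matrix.smul_apply, Phi_apply, Phi_apply, Matrix.smul_apply, lam_smul]
  rfl

lemma Phi_comm (Q : Matrix (Fin 4) (Fin 4) ℝ) (hQ : ∀ q, Q * lam q = lam q * Q)
    (M : Matrix (Fin N) (Fin N) (Quaternion ℝ)) :
    ((1 : Matrix (Fin N) (Fin N) ℝ) ⊗ₖ Q) * Phi M = Phi M * ((1 : Matrix (Fin N) (Fin N) ℝ) ⊗ₖ Q) := by
  ext ⟨i, a⟩ ⟨j, b⟩
  have := congrFun (congrFun (hQ (M i j)) a) b
  simp only [Matrix.mul_apply] at this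
  simp only [Matrix.mul_apply, Fintype.sum_prod_type, kroneckerMap_apply, Phi_apply,
    Matrix.one_apply, ite_mul, mul_ite, one_mul, zero_mul, mul_zero]
  rw [Finset.sum_eq_single i, Finset.sum_eq_single j]
  · simpa using this
  · intro c _ hc; simp [hc]
  · simp
  · intro c _ hc; simp [Ne.symm hc]
  · simp

/-- quaternionic families -/
def HF (n N : ℕ) : Prop := ∃ B : Fin n → Matrix (Fin N) (Fin N) (Quaternion ℝ),
  (∀ j, (B j)ᴴ = B j) ∧ ∀ l : Fin n → ℝ, l ≠ 0 → IsUnit (∑ j, l j • B j)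

lemma HF.drop {n : ℕ} (h : HF (n + 1) N) : HF n N := by
  obtain ⟨B, h1, h2⟩ := h
  refine ⟨fun j => B j.castSucc, fun j => h1 _, fun l hl => ?_⟩
  have := h2 (Fin.snoc (α := fun _ => ℝ) l 0) (fun h0 => hl (by
    ext j
    have := congrFun h0 j.castSucc
    simpa using this))
  rw [Fin.sum_univ_castSucc] at this
  simpa using this

lemma HF.drops {n n' : ℕ} (h : HF n N) (hn : n' ≤ n) : HF n' N := by
  induction n, hn using Nat.le_induction with
  | base => exact h
  | succ m _ ih => exact ih h.drop

lemma HF.dvd {n e : ℕ} (h : HF n N) (hc : CG n e) : 2 ^ n ∣ e * N := by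
  obtain ⟨B, hB1, hB2⟩ := h
  obtain ⟨κ, _, _, γ, Γ, Γ', hcard, h1, h2, h3, h4⟩ := hc
  let A' : Fin n → Matrix (κ × (Fin N × Fin 4)) (κ × (Fin N × Fin 4)) ℝ :=
    fun j => (1 : Matrix κ κ ℝ) ⊗ₖ Phi (B j)
  let g : Matrix κ κ ℝ → Matrix (κ × (Fin N × Fin 4)) (κ × (Fin N × Fin 4)) ℝ :=
    fun M => M ⊗ₖ (1 : Matrix (Fin N × Fin 4) (Fin N × Fin 4) ℝ)
  let r : Matrix (Fin 4) (Fin 4) ℝ → Matrix (κ × (Fin N × Fin 4)) (κ × (Fin N × Fin 4)) ℝ :=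
    fun Q => (1 : Matrix κ κ ℝ) ⊗ₖ ((1 : Matrix (Fin N) (Fin N) ℝ) ⊗ₖ Q)
  have gA : ∀ M j, g M * A' j = A' j * g M := by
    intro M j; simp only [g, A', ← mul_kronecker_mul, one_mul, mul_one]
  have gr : ∀ M Q, r Q * g M = g M * r Q := by
    intro M Q; simp only [g, r, ← mul_kronecker_mul, one_mul, mul_one]
  have gg : ∀ M M', g M * g M' = g (M * M') := by
    intro M M'; simp only [g, ← mul_kronecker_mul, one_mul]
  have rr : ∀ Q Q', r Q * r Q' = r (Q * Q') := by
    intro Q Q'; simp only [r, ← mul_kronecker_mul, one_mul]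
  have rn : ∀ Q, r (-Q) = - r Q := by
    intro Q; ext x y; simp [r, kroneckerMap_apply]
  have r1 : r 1 = 1 := by simp only [r, one_kronecker_one]
  have g1 : g 1 = 1 := by simp only [g, one_kronecker_one]
  have gn : ∀ M, g (-M) = - g M := by
    intro M; ext x y; simp [g, kroneckerMap_apply]
  have rA : ∀ Q, (∀ q, Q * lam q = lam q * Q) → ∀ j, r Q * A' j = A' j * r Q := by
    intro Q hQ j
    simp only [r, A', ← mul_kronecker_mul, one_mul]
    rw [Phi_comm Q hQ]
  have hM : MDat (fun j => g (γ j)) A' := by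
    refine ⟨fun j => ?_, fun j k => ?_, fun j k => (gA _ _).symm, ?_⟩
    · simp only [A', conjTranspose_kronecker, conjTranspose_one, Phi_star, hB1]
    · rw [gg, gg]
      have : g (γ j * γ k) + g (γ k * γ j) = g (γ j * γ k + γ k * γ j) := by
        simp only [g, add_kronecker]
      rw [this, h1]
      split_ifs
      · simp only [g]
        rw [← one_add_one_eq_two, add_kronecker, one_kronecker_one, one_add_one_eq_two]
      · simp only [g, zero_kronecker]
    · refine low_of (fun j => tE (A' j)) (fun l hl => ?_)
      have hu := ((hB2 l hl).map Phi)
      have e : ∑ j, l j • tE (A' j) = tE ((1 : Matrix κ κ ℝ) ⊗ₖ (Phi (∑ j, l j • B j))) := by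
        rw [map_sum]
        simp only [Phi_smul]
        have : (1 : Matrix κ κ ℝ) ⊗ₖ (∑ j, l j • Phi (B j)) = ∑ j, l j • A' j := by
          ext x y
          simp only [A', kroneckerMap_apply, Matrix.sum_apply, Matrix.smul_apply, smul_eq_mul,
            Finset.mul_sum]
          exact Finset.sum_congr rfl (fun j _ => by ring)
        rw [this, map_sum]
        simp only [map_smul]
      rw [e]
      obtain ⟨u, hu⟩ := hu
      rw [← hu]
      refine IsUnit.map tE ⟨⟨(1 : Matrix κ κ ℝ) ⊗ₖ u.1, (1 : Matrix κ κ ℝ) ⊗ₖ u⁻¹.1, ?_, ?_⟩, rfl⟩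
      · rw [← mul_kronecker_mul, one_mul, Units.mul_inv, one_kronecker_one]
      · rw [← mul_kronecker_mul, one_mul, Units.inv_mul, one_kronecker_one]
  have key := core hM (g Γ) (g Γ') (r Ri) (r Rj) (by rw [gg, h2, g1]) (by rw [gg, h3, g1])
    (fun j => by rw [gg, gg, h4, gn]) (fun j => gA _ _)
    (by rw [rr, Ri_sq, rn, r1]) (by rw [rr, Rj_sq, rn, r1]) (by rw [rr, rr, Rij, rn])
    (fun j => gr _ _) (rA Ri Ri_lam) (fun j => gr _ _) (rA Rj Rj_lam)
  rw [Fintype.card_prod, Fintype.card_prod, hcard, Fintype.card_fin, Fintype.card_fin,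
    show e * (N * 4) = 4 * (e * N) by ring] at key
  exact Nat.dvd_of_mul_dvd_mul_left (by norm_num) key

end
end HR

set_option linter.unusedSectionVars false
set_option linter.unusedSimpArgs false
namespace HR
open Module
open LinearMap (range ker)
open Matrix Kronecker

lemma hr_val (ν m : ℕ) (hm : Odd m) :
    hrRho (((2 ^ ν * m : ℕ) : ℚ) / 4) = 8 * (((ν : ℤ) - 2) / 4) + 2 ^ (((ν : ℤ) - 2) % 4).toNat := by
  have hv : padicValRat 2 (((2 ^ ν * m : ℕ) : ℚ) / 4) = (ν : ℤ) - 2 := by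
    have hm0 : (m : ℚ) ≠ 0 := by
      obtain ⟨c, rfl⟩ := hm
      positivity
    have h2 : (2 : ℚ) ≠ 0 := two_ne_zero
    rw [show ((4 : ℚ)) = 2 ^ 2 by norm_num, Nat.cast_mul, Nat.cast_pow]
    rw [padicValRat.div (mul_ne_zero (pow_ne_zero _ (by exact_mod_cast h2)) hm0) (pow_ne_zero _ h2),
      padicValRat.mul (pow_ne_zero _ (by exact_mod_cast h2)) hm0]
    have e1 : padicValRat 2 (((2 : ℕ) : ℚ) ^ ν) = ν := by
      rw [padicValRat.pow, padicValRat.self (by norm_num), mul_one]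
    have e2 : padicValRat 2 ((2 : ℚ) ^ 2) = 2 := by
      have h : padicValRat 2 (((2 : ℕ) : ℚ)) = 1 := padicValRat.self (by norm_num)
      rw [padicValRat.pow, ← Nat.cast_ofNat (R := ℚ) (n := 2), h]
      norm_num
    have e3 : padicValRat 2 (m : ℚ) = 0 := by
      rw [padicValRat.of_nat, padicValNat.eq_zero_of_not_dvd]
      · rfl
      · intro h
        exact (Nat.not_even_iff_odd.mpr hm) (even_iff_two_dvd.mpr h)
    rw [e1, e2, e3, add_zero]
  unfold hrRho
  rw [hv]

lemma not_dvd_aux {m s : ℕ} (hm : Odd m) : ¬ (2 ^ (s + 1) ∣ 2 ^ s * m) := by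
  intro h
  rw [pow_succ] at h
  have := Nat.dvd_of_mul_dvd_mul_left (by positivity) h
  exact (Nat.not_even_iff_odd.mpr hm) (even_iff_two_dvd.mpr this)

instance qStarMod : StarModule ℝ (Quaternion ℝ) :=
  ⟨fun r q => by rw [Quaternion.star_smul, star_trivial r]⟩

lemma Cl.iter {n m : ℕ} (h : Cl (Quaternion ℝ) n m) (k : ℕ) :
    Cl (Quaternion ℝ) (8 * k + n) (m * 2 ^ (4 * k)) := by
  induction k with
  | zero => simpa using h
  | succ k ih =>
    have := ih.step8
    rw [show 8 * (k + 1) + n = 8 * k + n + 8 by ring,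
      show m * 2 ^ (4 * (k + 1)) = m * 2 ^ (4 * k) * 16 by ring]
    exact this

/-- the arithmetic core -/
lemma arith (N : ℕ) (hN : 1 ≤ N) : ∃ b : ℕ, hrRho ((N : ℚ) / 4) + 5 = b ∧
    Cl (Quaternion ℝ) b N ∧ ¬ HF (b + 1) N := by
  obtain ⟨ν, m, hm, rfl⟩ := Nat.exists_eq_two_pow_mul_odd (n := N) (by omega)
  rw [hr_val ν m hm]
  obtain ⟨k, r, hr, rfl⟩ : ∃ k r, r < 4 ∧ ν = 4 * k + r :=
    ⟨ν / 4, ν % 4, Nat.mod_lt _ (by norm_num), by omega⟩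
  interval_cases r
  · refine ⟨8 * k + 1, ?_, ?_, ?_⟩
    · have a : (((4 * k + 0 : ℕ) : ℤ) - 2) / 4 = k - 1 := by omega
      have b : (((4 * k + 0 : ℕ) : ℤ) - 2) % 4 = 2 := by omega
      rw [a, b]; push_cast; norm_num; ring
    · have := (ClH1.iter k).copies m
      rwa [one_mul] at this
    · intro h
      have h1 := h.dvd (CG2 k)
      rw [show 16 ^ k * 2 * (2 ^ (4 * k + 0) * m) = 2 ^ (8 * k + 1) * m by
        rw [show 16 = 2 ^ 4 by norm_num, ← pow_mul]; ring] at h1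
      exact not_dvd_aux hm h1
  · refine ⟨8 * k + 5, ?_, ?_, ?_⟩
    · have a : (((4 * k + 1 : ℕ) : ℤ) - 2) / 4 = k - 1 := by omega
      have b : (((4 * k + 1 : ℕ) : ℤ) - 2) % 4 = 3 := by omega
      rw [a, b]; push_cast; norm_num; ring
    · have := (ClH5.iter k).copies m
      rwa [show 2 * 2 ^ (4 * k) = 2 ^ (4 * k + 1) by ring] at this
    · intro h
      have h1 := h.dvd (CG.drop (CG.drop (CG0 (k + 1))))
      rw [show 16 ^ (k + 1) * (2 ^ (4 * k + 1) * m) = 2 ^ (8 * k + 5) * m by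
        rw [show 16 = 2 ^ 4 by norm_num, ← pow_mul]; ring] at h1
      exact not_dvd_aux hm h1
  · refine ⟨8 * k + 6, ?_, ?_, ?_⟩
    · have a : (((4 * k + 2 : ℕ) : ℤ) - 2) / 4 = k := by omega
      have b : (((4 * k + 2 : ℕ) : ℤ) - 2) % 4 = 0 := by omega
      rw [a, b]; push_cast; norm_num; ring
    · have := (ClH5.step2.iter k).copies m
      rwa [show 2 * 2 * 2 ^ (4 * k) = 2 ^ (4 * k + 2) by ring] at this
    · intro h
      have h1 := h.dvd (CG.drop (CG0 (k + 1)))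
      rw [show 16 ^ (k + 1) * (2 ^ (4 * k + 2) * m) = 2 ^ (8 * k + 6) * m by
        rw [show 16 = 2 ^ 4 by norm_num, ← pow_mul]; ring] at h1
      exact not_dvd_aux hm h1
  · refine ⟨8 * k + 7, ?_, ?_, ?_⟩
    · have a : (((4 * k + 3 : ℕ) : ℤ) - 2) / 4 = k := by omega
      have b : (((4 * k + 3 : ℕ) : ℤ) - 2) % 4 = 1 := by omega
      rw [a, b]; push_cast; norm_num; ring
    · have := (ClH5.step2.step2.iter k).copies m
      rwa [show 2 * 2 * 2 * 2 ^ (4 * k) = 2 ^ (4 * k + 3) by ring] at this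
    · intro h
      have h1 := h.dvd (CG0 (k + 1))
      rw [show 16 ^ (k + 1) * (2 ^ (4 * k + 3) * m) = 2 ^ (8 * k + 7) * m by
        rw [show 16 = 2 ^ 4 by norm_num, ← pow_mul]; ring] at h1
      exact not_dvd_aux hm h1

lemma one_of_Cl {n N : ℕ} (h : Cl (Quaternion ℝ) n N) :
    ∃ f : EuclideanSpace ℝ (Fin n) →ₗ[ℝ] Matrix (Fin N) (Fin N) (Quaternion ℝ),
        ∀ v, (f v)ᴴ = f v ∧
          (f v) ^ 2 = (‖v‖ ^ 2 : ℝ) • (1 : Matrix (Fin N) (Fin N) (Quaternion ℝ)) := by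
  obtain ⟨κ, _, _, A, hc, hs, ha⟩ := h
  let σ : κ ≃ Fin N := Fintype.equivFinOfCardEq hc
  let B : Fin n → Matrix (Fin N) (Fin N) (Quaternion ℝ) := fun j => (A j).submatrix σ.symm σ.symm
  have hBs : ∀ j, (B j)ᴴ = B j := by
    intro j
    simp only [B, conjTranspose_submatrix, hs]
  have hBa : ∀ j k, B j * B k + B k * B j = if j = k then 2 else 0 := by
    intro j k
    simp only [B, Matrix.submatrix_mul_equiv]
    show (A j * A k + A k * A j).submatrix σ.symm σ.symm = _
    rw [ha]
    split_ifs
    · rw [← one_add_one_eq_two, ← one_add_one_eq_two]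
      show (1 : Matrix κ κ (Quaternion ℝ)).submatrix σ.symm σ.symm
        + (1 : Matrix κ κ (Quaternion ℝ)).submatrix σ.symm σ.symm = _
      rw [Matrix.submatrix_one_equiv]
    · rfl
  refine ⟨{ toFun := fun v => ∑ j, v j • B j
            map_add' := fun v w => by simp [add_smul, Finset.sum_add_distrib]
            map_smul' := fun c v => by simp [Finset.smul_sum, smul_smul] }, fun v => ⟨?_, ?_⟩⟩
  · show (∑ j, v j • B j)ᴴ = ∑ j, v j • B j
    rw [conjTranspose_sum]
    refine Finset.sum_congr rfl (fun j _ => ?_)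
    have hh : ∀ (r : ℝ) (M : Matrix (Fin N) (Fin N) (Quaternion ℝ)), (r • M)ᴴ = r • Mᴴ := by
      intro r M
      rw [conjTranspose_smul, star_trivial]
    exact (hh (v j) (B j)).trans (by rw [hBs])
  · show (∑ j, v j • B j) ^ 2 = _
    apply two_half
    rw [sq]
    have e1 : (∑ j, v j • B j) * (∑ j, v j • B j) = ∑ j, ∑ k, (v j * v k) • (B j * B k) := by
      rw [Finset.sum_mul_sum]
      simp only [smul_mul_smul_comm]
    have e2 : (∑ j, v j • B j) * (∑ j, v j • B j) = ∑ j, ∑ k, (v j * v k) • (B k * B j) := by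
      rw [e1, Finset.sum_comm]
      simp only [mul_comm]
    nth_rewrite 1 [e1]
    rw [e2, ← Finset.sum_add_distrib]
    simp only [← Finset.sum_add_distrib, ← smul_add, hBa]
    rw [EuclideanSpace.real_norm_sq_eq, Finset.sum_smul]
    refine Finset.sum_congr rfl (fun j _ => ?_)
    simp only [smul_ite, smul_zero, Finset.sum_ite_eq, Finset.mem_univ, if_true]
    rw [one_add_one_eq_two, sq]

lemma two_of_one {n N : ℕ} (h : ∃ f : EuclideanSpace ℝ (Fin n) →ₗ[ℝ] Matrix (Fin N) (Fin N) (Quaternion ℝ),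
        ∀ v, (f v)ᴴ = f v ∧
          (f v) ^ 2 = (‖v‖ ^ 2 : ℝ) • (1 : Matrix (Fin N) (Fin N) (Quaternion ℝ))) :
    ∃ f : EuclideanSpace ℝ (Fin n) →ₗ[ℝ] Matrix (Fin N) (Fin N) (Quaternion ℝ),
        (∀ v, (f v)ᴴ = f v) ∧ ∀ v, v ≠ 0 → IsUnit (f v) := by
  obtain ⟨f, hf⟩ := h
  refine ⟨f, fun v => (hf v).1, fun v hv => ?_⟩
  have h2 := (hf v).2
  rw [sq] at h2
  have hv' : (‖v‖ ^ 2 : ℝ) ≠ 0 := pow_ne_zero _ (norm_ne_zero_iff.mpr hv)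
  refine ⟨⟨f v, (‖v‖ ^ 2 : ℝ)⁻¹ • f v, ?_, ?_⟩, rfl⟩
  · rw [mul_smul_comm, h2, smul_smul, inv_mul_cancel₀ hv', one_smul]
  · rw [smul_mul_assoc, h2, smul_smul, inv_mul_cancel₀ hv', one_smul]

lemma HF_of_two {n N : ℕ} (h : ∃ f : EuclideanSpace ℝ (Fin n) →ₗ[ℝ] Matrix (Fin N) (Fin N) (Quaternion ℝ),
        (∀ v, (f v)ᴴ = f v) ∧ ∀ v, v ≠ 0 → IsUnit (f v)) : HF n N := by
  obtain ⟨f, h1, h2⟩ := h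
  refine ⟨fun j => f (EuclideanSpace.single j 1), fun j => h1 _, fun l hl => ?_⟩
  have : ∑ j, l j • f (EuclideanSpace.single j 1) = f (WithLp.toLp 2 l) := by
    simp only [← map_smul, ← map_sum]
    congr 1
    ext i
    rw [WithLp.ofLp_sum, Finset.sum_apply]
    simp [Pi.single_apply]
  rw [this]
  refine h2 _ (fun h0 => hl ?_)
  ext i
  exact congrArg (fun w : EuclideanSpace ℝ (Fin n) => w i) h0

end HR

/-- Entry `𝔤 = 𝔤𝔩(N,ℍ)` of the Hurwitz–Radon value theorem:
`ρ⁽¹⁾ = ρ⁽²⁾ = ρ(N/4) + 5`, the Adams–Lax–Phillips number `ℍ_h(N)`. -/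
theorem hurwitzRadon_gl_N_H (N : ℕ) (hN : 1 ≤ N) (n : ℕ) :
    ((∃ f : EuclideanSpace ℝ (Fin n) →ₗ[ℝ] Matrix (Fin N) (Fin N) (Quaternion ℝ),
        ∀ v, (f v)ᴴ = f v ∧
          (f v) ^ 2 = (‖v‖ ^ 2 : ℝ) • (1 : Matrix (Fin N) (Fin N) (Quaternion ℝ))) ↔
      (∃ f : EuclideanSpace ℝ (Fin n) →ₗ[ℝ] Matrix (Fin N) (Fin N) (Quaternion ℝ),
        (∀ v, (f v)ᴴ = f v) ∧ ∀ v, v ≠ 0 → IsUnit (f v))) ∧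
    ((∃ f : EuclideanSpace ℝ (Fin n) →ₗ[ℝ] Matrix (Fin N) (Fin N) (Quaternion ℝ),
        (∀ v, (f v)ᴴ = f v) ∧ ∀ v, v ≠ 0 → IsUnit (f v)) ↔
      (n : ℤ) ≤ hrRho ((N : ℚ) / 4) + 5) := by
  obtain ⟨b, hb, hC, hH⟩ := HR.arith N hN
  rw [hb]
  have h23 : (∃ f : EuclideanSpace ℝ (Fin n) →ₗ[ℝ] Matrix (Fin N) (Fin N) (Quaternion ℝ),
        (∀ v, (f v)ᴴ = f v) ∧ ∀ v, v ≠ 0 → IsUnit (f v)) → (n : ℤ) ≤ (b : ℤ) := by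
    intro h
    by_contra hlt
    exact hH ((HR.HF_of_two h).drops (by omega))
  have h31 : (n : ℤ) ≤ (b : ℤ) → ∃ f : EuclideanSpace ℝ (Fin n) →ₗ[ℝ] Matrix (Fin N) (Fin N) (Quaternion ℝ),
        ∀ v, (f v)ᴴ = f v ∧
          (f v) ^ 2 = (‖v‖ ^ 2 : ℝ) • (1 : Matrix (Fin N) (Fin N) (Quaternion ℝ)) :=
    fun h => HR.one_of_Cl (hC.drop (by omega))
  exact ⟨⟨HR.two_of_one, fun h => h31 (h23 h)⟩, ⟨h23, fun h => HR.two_of_one (h31 h)⟩⟩
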